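/- Let d ≥ 3 be an integer and let 𝒞 ∈ (0,1] be a constant such that for all nonnegative u in D^{1,2}(ℝ^d), with q = (d+2)/(d−2), S_d ‖u^q‖_{2d/(d+2)}² − ∫ u^q (−Δ)^{−1}(u^q) dx ≤ 𝒞 S_d ‖u‖_{2^*}^{8/(d−2)} [ S_d ‖∇u‖_2² − ‖u‖_{2^*}² ]. Define φ(x) = √(𝒞² + 2𝒞x) − 𝒞 for x ≥ 0, and for v ≥ 0 set J_d[v] = ∫ v^{2d/(d+2)} dx and H_d[v] = ∫ v (−Δ)^{−1} v dx − S_d ‖v‖_{2d/(d+2)}². Then for every nonnegative u in D^{1,2}(ℝ^d), with v = u^{(d+2)/(d−2)}, one has 0 ≤ H_d[v] + S_d J_d[v]^{1+2/d} φ( J_d[v]^{2/d − 1} [ S_d ‖∇u‖_2² − ‖u‖_{2^*}² ] ). -/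

import Mathlib

open MeasureTheory Real

noncomputable section

/-- Surface area of the unit sphere `𝕊^{d-1} ⊆ ℝ^d`. -/
def sphereArea (d : ℕ) : ℝ := 2 * Real.pi ^ ((d : ℝ) / 2) / Real.Gamma ((d : ℝ) / 2)

/-- Green function of `-Δ` on `ℝ^d`, `d ≥ 3`: `G_d(x) = |x|^{2-d} / ((d-2)|𝕊^{d-1}|)`. -/
def greenKernel (d : ℕ) (x : EuclideanSpace ℝ (Fin d)) : ℝ :=
  ‖x‖ ^ ((2 : ℝ) - d) / (((d : ℝ) - 2) * sphereArea d)

/-- `(−Δ)⁻¹ v`, the convolution of `v` with the Green function of `-Δ` on `ℝ^d`. -/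
def invLap (d : ℕ) (v : EuclideanSpace ℝ (Fin d) → ℝ) (x : EuclideanSpace ℝ (Fin d)) : ℝ :=
  ∫ y, greenKernel d (x - y) * v y

/-- The Aubin–Talenti (optimal Sobolev) constant
`S_d = (1/(π d (d−2))) (Γ(d)/Γ(d/2))^{2/d}`. -/
def sobolevConst (d : ℕ) : ℝ :=
  1 / (Real.pi * d * ((d : ℝ) - 2)) *
    (Real.Gamma (d : ℝ) / Real.Gamma ((d : ℝ) / 2)) ^ ((2 : ℝ) / (d : ℝ))

/-- Membership in `D^{1,2}(ℝ^d)`: a (weakly) differentiable function with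
`∇u ∈ L²` and `u ∈ L^{2*}`, `2* = 2d/(d-2)`. -/
def MemD12 (d : ℕ) (u : EuclideanSpace ℝ (Fin d) → ℝ) : Prop :=
  Differentiable ℝ u ∧
  Integrable (fun x => ‖gradient u x‖ ^ 2) ∧
  Integrable (fun x => |u x| ^ (2 * (d : ℝ) / ((d : ℝ) - 2)))

/-- The `L^p` norm of `u`, written with real exponents: `(∫ |u|^p)^{1/p}`. -/
def lpNorm' {d : ℕ} (p : ℝ) (u : EuclideanSpace ℝ (Fin d) → ℝ) : ℝ :=
  (∫ x, |u x| ^ p) ^ (1 / p)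

/-- The Laplacian `Δu = ∑ ∂²u/∂x_i²`. -/
def lap (d : ℕ) (u : EuclideanSpace ℝ (Fin d) → ℝ) (x : EuclideanSpace ℝ (Fin d)) : ℝ :=
  ∑ i : Fin d, iteratedFDeriv ℝ 2 u x ![EuclideanSpace.single i 1, EuclideanSpace.single i 1]

/-- `J_d[v] = ∫ v^{2d/(d+2)}`. -/
def Jfun (d : ℕ) (v : EuclideanSpace ℝ (Fin d) → ℝ) : ℝ :=
  ∫ x, v x ^ (2 * (d : ℝ) / ((d : ℝ) + 2))

/-- `H_d[v] = ∫ v (−Δ)⁻¹ v − S_d ‖v‖_{2d/(d+2)}²`. -/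
def Hfun (d : ℕ) (v : EuclideanSpace ℝ (Fin d) → ℝ) : ℝ :=
  (∫ x, v x * invLap d v x) -
    sobolevConst d * lpNorm' (2 * (d : ℝ) / ((d : ℝ) + 2)) v ^ (2 : ℝ)

/-!
Write `v = u ^ q`, `N = ∫ u v`, `T = ∫ |∇u|²`, `I = ∫ v (-Δ)⁻¹ v`, and let `h` be the relative
deficit `1 - I / (S_d N ^ (1 + 2 / d))` and `x` the argument of `φ`. The hypothesis reads
`h ≤ 𝒞 x`. Duality between `-Δ` and its inverse gives `N² ≤ T I`, that is `h (1 + x) ≤ x`, and the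
Sobolev inequality gives `x ≥ 0`. For `h ≥ 0` the first bound multiplied by `h` and the second
multiplied by `𝒞` yield `h² ≤ 𝒞 h x ≤ 𝒞 (x - h)`, hence `(h + 𝒞)² ≤ 𝒞² + 2 𝒞 x`, i.e. `h ≤ φ(x)`.

The sharp Sobolev inequality is obtained, following Bobkov and Ledoux, by differentiating at
`s = 0` a Borell–Brascamp–Lieb inequality for the inf-convolution of a function with the
paraboloid `l s (1 + |y / s|²)`. Duality for test functions is the Cauchy–Schwarz inequality in
Fourier space, with the Green function written as a superposition of Gaussians. Both inequalities
pass to differentiable functions by mollification and truncation.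
-/

namespace ImprovedSobolev

open Filter Topology Module
open scoped ENNReal ContDiff

/-! ### The Brunn–Minkowski inequality on the line -/

section BrunnMinkowski

open scoped Pointwise

-- The translates `K + min L` and `max K + L` lie in `K + L` and meet in at most one point.
lemma volume_add_volume_le_of_isCompact {K L : Set ℝ} (hK : IsCompact K) (hL : IsCompact L)
    (hK₀ : K.Nonempty) (hL₀ : L.Nonempty) : volume K + volume L ≤ volume (K + L) := by
  obtain ⟨a, ha, ha_max⟩ := hK.exists_isGreatest hK₀
  obtain ⟨b, hb, hb_min⟩ := hL.exists_isLeast hL₀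
  have hmeas : MeasurableSet ((a + ·) '' L) := (hL.image (by fun_prop)).isClosed.measurableSet
  have hinter : volume ((· + b) '' K ∩ (a + ·) '' L) = 0 := by
    refine measure_mono_null (t := {a + b}) ?_ (by simp)
    rintro _ ⟨⟨x, hx, rfl⟩, ⟨y, hy, hxy⟩⟩
    have hxa := ha_max hx
    have hby := hb_min hy
    simp only [Set.mem_singleton_iff] at *
    linarith
  calc volume K + volume L = volume ((· + b) '' K) + volume ((a + ·) '' L) := by
        simp [Set.image_add_right, Set.image_add_left]
    _ = volume ((· + b) '' K ∪ (a + ·) '' L) := by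
        rw [← measure_union_add_inter _ hmeas, hinter, add_zero]
    _ ≤ volume (K + L) := by
        refine measure_mono ?_
        rintro _ (⟨x, hx, rfl⟩ | ⟨y, hy, rfl⟩)
        exacts [Set.add_mem_add hx hb, Set.add_mem_add ha hy]

theorem volume_add_volume_le {A B : Set ℝ} (hA : MeasurableSet A) (hB : MeasurableSet B)
    (hA₀ : A.Nonempty) (hB₀ : B.Nonempty) : volume A + volume B ≤ volume (A + B) := by
  obtain ⟨a, ha⟩ := hA₀
  obtain ⟨b, hb⟩ := hB₀
  have iSup_compact {s : Set ℝ} (hs : MeasurableSet s) :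
      volume s = ⨆ K : {K : Set ℝ // K ⊆ s ∧ IsCompact K}, volume (K : Set ℝ) := by
    rw [hs.measure_eq_iSup_isCompact, iSup_subtype]
    simp only [iSup_and]
  have (s : Set ℝ) : Nonempty {K : Set ℝ // K ⊆ s ∧ IsCompact K} :=
    ⟨∅, Set.empty_subset s, isCompact_empty⟩
  rw [iSup_compact hA, iSup_compact hB]
  refine ENNReal.iSup_add_iSup_le fun ⟨K, hKA, hK⟩ ⟨L, hLB, hL⟩ ↦ ?_
  calc volume K + volume L ≤ volume (insert a K) + volume (insert b L) := by
        gcongr <;> exact Set.subset_insert _ _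
    _ ≤ volume (insert a K + insert b L) :=
        volume_add_volume_le_of_isCompact (hK.insert a) (hL.insert b) (Set.insert_nonempty _ _)
          (Set.insert_nonempty _ _)
    _ ≤ volume (A + B) :=
        measure_mono (Set.add_subset_add (Set.insert_subset ha hKA) (Set.insert_subset hb hLB))

lemma lintegral_eq_lintegral_measure_lt {α : Type*} [MeasurableSpace α] (μ : Measure α)
    {f : α → ℝ≥0∞} (hf : AEMeasurable f μ) (hf_top : ∀ x, f x ≠ ⊤) :
    ∫⁻ x, f x ∂μ = ∫⁻ t in Set.Ioi (0 : ℝ), μ {x | ENNReal.ofReal t < f x} := by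
  have hlayer := lintegral_eq_lintegral_meas_lt μ (f := fun x ↦ (f x).toReal)
    (.of_forall fun _ ↦ ENNReal.toReal_nonneg) hf.ennreal_toReal
  simp only [ENNReal.ofReal_toReal (hf_top _)] at hlayer
  rw [hlayer]
  refine setLIntegral_congr_fun measurableSet_Ioi fun t ht ↦ ?_
  simp only [ENNReal.ofReal_lt_iff_lt_toReal ht.le (hf_top _)]

lemma measurable_measure_ofReal_lt {α : Type*} [MeasurableSpace α] (μ : Measure α)
    (f : α → ℝ≥0∞) : Measurable fun t : ℝ ↦ μ {x | ENNReal.ofReal t < f x} :=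
  Antitone.measurable fun _ _ hst ↦
    measure_mono fun _ hx ↦ (ENNReal.ofReal_le_ofReal hst).trans_lt hx

-- Equality of the suprema makes nonempty superlevel sets of `u` and `v` occur at the same levels.
theorem lintegral_add_lintegral_le_of_min_le {u v w : ℝ → ℝ≥0∞} (hu : Measurable u)
    (hv : Measurable v) (hw : Measurable w) (hsup : ⨆ x, u x = ⨆ x, v x)
    (hfin : ⨆ x, u x ≠ ⊤) (h : ∀ x y, min (u x) (v y) ≤ w (x + y)) :
    (∫⁻ x, u x) + (∫⁻ x, v x) ≤ ∫⁻ x, w x := by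
  set A := ⨆ x, u x
  have huA (x : ℝ) : u x ≤ A := le_iSup u x
  have hvA (x : ℝ) : v x ≤ A := hsup ▸ le_iSup v x
  have layer {f : ℝ → ℝ≥0∞} (hf : Measurable f) (hfA : ∀ x, f x ≤ A) :=
    lintegral_eq_lintegral_measure_lt volume hf.aemeasurable
      fun x ↦ ne_top_of_le_ne_top hfin (hfA x)
  refine le_trans ?_ (lintegral_mono fun x ↦ min_le_left (w x) A)
  rw [layer hu huA, layer hv hvA, layer (hw.min measurable_const) fun x ↦ min_le_right _ _,
    ← lintegral_add_left (measurable_measure_ofReal_lt volume u)]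
  refine lintegral_mono fun t ↦ ?_
  rcases lt_or_ge (ENNReal.ofReal t) A with ht | ht
  · have hu₀ : {x | ENNReal.ofReal t < u x}.Nonempty := lt_iSup_iff.mp ht
    have hv₀ : {x | ENNReal.ofReal t < v x}.Nonempty := lt_iSup_iff.mp (ht.trans_eq hsup)
    refine (volume_add_volume_le (measurableSet_lt measurable_const hu)
      (measurableSet_lt measurable_const hv) hu₀ hv₀).trans (measure_mono ?_)
    rintro _ ⟨x, hx, y, hy, rfl⟩
    exact lt_min ((lt_min hx hy).trans_le (h x y)) ht
  · simp [((huA _).trans ht).not_gt, ((hvA _).trans ht).not_gt]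

end BrunnMinkowski

/-! ### The Borell–Brascamp–Lieb inequality -/

/-- The mean `(a^{-1/k} + b^{-1/k})^{-k}` of the Borell–Brascamp–Lieb inequality, extended to
`k = 0` by its limit `min a b`. -/
def borellMean (k : ℕ) (a b : ℝ≥0∞) : ℝ≥0∞ :=
  if k = 0 then min a b else (a ^ (-(1 / (k : ℝ))) + b ^ (-(1 / (k : ℝ)))) ^ (-(k : ℝ))

namespace borellMean

@[simp]
lemma zero_index (a b : ℝ≥0∞) : borellMean 0 a b = min a b := if_pos rfl

lemma comm (k : ℕ) (a b : ℝ≥0∞) : borellMean k a b = borellMean k b a := by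
  simp only [borellMean, min_comm, add_comm]

lemma mono (k : ℕ) {a b a' b' : ℝ≥0∞} (ha : a ≤ a') (hb : b ≤ b') :
    borellMean k a b ≤ borellMean k a' b' := by
  have rpow_neg_anti {x y : ℝ≥0∞} (hxy : x ≤ y) {r : ℝ} (hr : 0 ≤ r) : y ^ (-r) ≤ x ^ (-r) := by
    rw [ENNReal.rpow_neg, ENNReal.rpow_neg, ENNReal.inv_le_inv]
    exact ENNReal.rpow_le_rpow hxy hr
  unfold borellMean
  split_ifs
  · exact min_le_min ha hb
  · exact rpow_neg_anti (add_le_add (rpow_neg_anti ha (by positivity))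
      (rpow_neg_anti hb (by positivity))) k.cast_nonneg

@[simp]
lemma zero_left (k : ℕ) (b : ℝ≥0∞) : borellMean k 0 b = 0 := by
  rcases Nat.eq_zero_or_pos k with rfl | hk
  · simp
  · have hk' : (0 : ℝ) < k := by exact_mod_cast hk
    rw [borellMean, if_neg hk.ne', ENNReal.zero_rpow_of_neg (by simpa using hk'), top_add,
      ENNReal.top_rpow_of_neg (by linarith)]

@[simp]
lemma zero_right (k : ℕ) (a : ℝ≥0∞) : borellMean k a 0 = 0 := by rw [comm, zero_left]

lemma continuous_uncurry (k : ℕ) : Continuous fun p : ℝ≥0∞ × ℝ≥0∞ ↦ borellMean k p.1 p.2 := by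
  unfold borellMean
  split_ifs
  · exact continuous_fst.min continuous_snd
  · exact ENNReal.continuous_rpow_const.comp
      ((ENNReal.continuous_rpow_const.comp continuous_fst).add
        (ENNReal.continuous_rpow_const.comp continuous_snd))

lemma ofReal_inv_pow {p r : ℝ} (hp : 0 < p) (hr : 0 < r) {k : ℕ} (hk : k ≠ 0) :
    borellMean k (ENNReal.ofReal (p ^ k)⁻¹) (ENNReal.ofReal (r ^ k)⁻¹) =
      ENNReal.ofReal ((p + r) ^ k)⁻¹ := by
  have root {x : ℝ} (hx : 0 < x) :
      ENNReal.ofReal (x ^ k)⁻¹ ^ (-(1 / (k : ℝ))) = ENNReal.ofReal x := by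
    rw [ENNReal.ofReal_rpow_of_pos (by positivity), ← rpow_natCast, ← rpow_neg hx.le,
      ← rpow_mul hx.le, neg_mul_neg, mul_one_div_cancel (by positivity), rpow_one]
  rw [borellMean, if_neg hk, root hp, root hr, ← ENNReal.ofReal_add hp.le hr.le,
    ENNReal.ofReal_rpow_of_pos (by positivity), rpow_neg (by positivity), rpow_natCast]

end borellMean

lemma exists_eq_ofReal_inv_pow {a : ℝ≥0∞} (h₀ : a ≠ 0) (h_top : a ≠ ⊤) {k : ℕ} (hk : k ≠ 0) :
    ∃ p : ℝ, 0 < p ∧ a = ENNReal.ofReal (p ^ k)⁻¹ := by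
  have ha : 0 < a.toReal := ENNReal.toReal_pos h₀ h_top
  refine ⟨a.toReal ^ (-(1 / (k : ℝ))), by positivity, ?_⟩
  rw [← rpow_natCast, ← rpow_neg (by positivity), ← rpow_mul ha.le, neg_mul_neg,
    one_div_mul_cancel (by positivity), rpow_one, ENNReal.ofReal_toReal h_top]

lemma inv_pow_add_le_of_pos {p r ξ η : ℝ} (hp : 0 < p) (hr : 0 < r) (hξ : 0 < ξ) (hη : 0 < η)
    (k : ℕ) :
    ((ξ + η) ^ k)⁻¹ ≤ ((p + r) ^ (k + 1))⁻¹ *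
      ((ξ ^ k)⁻¹ / (p ^ (k + 1))⁻¹ + (η ^ k)⁻¹ / (r ^ (k + 1))⁻¹) := by
  -- Jensen for `t ↦ t ^ (k + 1)` at `p / ξ`, `r / η` with weights `ξ / (ξ + η)`, `η / (ξ + η)`.
  have jensen := (convexOn_pow (𝕜 := ℝ) (k + 1)).2 (Set.mem_Ici.2 (div_pos hp hξ).le)
    (Set.mem_Ici.2 (div_pos hr hη).le) (show 0 ≤ ξ / (ξ + η) by positivity)
    (show 0 ≤ η / (ξ + η) by positivity) (by field_simp)
  have mean_eq : ξ / (ξ + η) * (p / ξ) + η / (ξ + η) * (r / η) = (p + r) / (ξ + η) := by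
    field_simp
  simp only [smul_eq_mul, mean_eq, div_pow] at jensen
  calc ((ξ + η) ^ k)⁻¹
      = (ξ + η) / (p + r) ^ (k + 1) * ((p + r) ^ (k + 1) / (ξ + η) ^ (k + 1)) := by
        rw [pow_succ (ξ + η)]; field_simp
    _ ≤ (ξ + η) / (p + r) ^ (k + 1) * (ξ / (ξ + η) * (p ^ (k + 1) / ξ ^ (k + 1)) +
        η / (ξ + η) * (r ^ (k + 1) / η ^ (k + 1))) := by gcongr
    _ = _ := by rw [pow_succ ξ, pow_succ η]; field_simp

namespace borellMean

lemma smul {k : ℕ} (hk : k ≠ 0) {s a b : ℝ≥0∞} (hs₀ : s ≠ 0) (hs : s ≠ ⊤) (ha₀ : a ≠ 0)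
    (ha : a ≠ ⊤) (hb₀ : b ≠ 0) (hb : b ≠ ⊤) :
    borellMean k (s * a) (s * b) = s * borellMean k a b := by
  obtain ⟨p, hp, rfl⟩ := exists_eq_ofReal_inv_pow ha₀ ha hk
  obtain ⟨r, hr, rfl⟩ := exists_eq_ofReal_inv_pow hb₀ hb hk
  obtain ⟨t, ht, rfl⟩ := exists_eq_ofReal_inv_pow hs₀ hs hk
  rw [← ENNReal.ofReal_mul (by positivity), ← ENNReal.ofReal_mul (by positivity), ← mul_inv,
    ← mul_inv, ← mul_pow, ← mul_pow, ofReal_inv_pow (by positivity) (by positivity) hk,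
    ofReal_inv_pow hp hr hk, ← ENNReal.ofReal_mul (by positivity), ← mul_inv, ← mul_pow, mul_add]

lemma ne_zero_and_ne_top {k : ℕ} (hk : k ≠ 0) {a b : ℝ≥0∞} (ha₀ : a ≠ 0) (ha : a ≠ ⊤)
    (hb₀ : b ≠ 0) (hb : b ≠ ⊤) : borellMean k a b ≠ 0 ∧ borellMean k a b ≠ ⊤ := by
  obtain ⟨p, hp, rfl⟩ := exists_eq_ofReal_inv_pow ha₀ ha hk
  obtain ⟨r, hr, rfl⟩ := exists_eq_ofReal_inv_pow hb₀ hb hk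
  rw [ofReal_inv_pow hp hr hk]
  exact ⟨(ENNReal.ofReal_pos.2 (by positivity)).ne', ENNReal.ofReal_ne_top⟩

lemma min_le_mul_div_add_div {a b : ℝ≥0∞} (ha₀ : a ≠ 0) (ha : a ≠ ⊤) (hb₀ : b ≠ 0)
    (x y : ℝ≥0∞) : min x y ≤ borellMean 1 a b * (x / a + y / b) := by
  have sum_ne_zero : a⁻¹ + b⁻¹ ≠ 0 := by simp [ha]
  have sum_ne_top : a⁻¹ + b⁻¹ ≠ ⊤ := by simp [ha₀, hb₀]
  have mean_eq : borellMean 1 a b = (a⁻¹ + b⁻¹)⁻¹ := by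
    simp [borellMean, ENNReal.rpow_neg]
  calc min x y = (a⁻¹ + b⁻¹)⁻¹ * (min x y * (a⁻¹ + b⁻¹)) := by
        rw [mul_comm (min x y), ← mul_assoc, ENNReal.inv_mul_cancel sum_ne_zero sum_ne_top, one_mul]
    _ ≤ borellMean 1 a b * (x / a + y / b) := by
        rw [mean_eq, div_eq_mul_inv, div_eq_mul_inv, mul_add]
        gcongr
        exacts [min_le_left _ _, min_le_right _ _]

lemma le_mul_div_add_div {a b : ℝ≥0∞} (ha₀ : a ≠ 0) (ha : a ≠ ⊤) (hb₀ : b ≠ 0) (hb : b ≠ ⊤)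
    (k : ℕ) (x y : ℝ≥0∞) : borellMean k x y ≤ borellMean (k + 1) a b * (x / a + y / b) := by
  rcases eq_or_ne k 0 with rfl | hk
  · simpa using min_le_mul_div_add_div ha₀ ha hb₀ x y
  have mean_ne_zero := (ne_zero_and_ne_top k.succ_ne_zero ha₀ ha hb₀ hb).1
  rcases eq_or_ne x 0 with rfl | hx₀
  · simp
  rcases eq_or_ne y 0 with rfl | hy₀
  · simp
  rcases eq_or_ne x ⊤ with rfl | hx
  · simp [ENNReal.top_div_of_ne_top ha, ENNReal.mul_top mean_ne_zero]
  rcases eq_or_ne y ⊤ with rfl | hy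
  · simp [ENNReal.top_div_of_ne_top hb, ENNReal.mul_top mean_ne_zero]
  obtain ⟨p, hp, rfl⟩ := exists_eq_ofReal_inv_pow ha₀ ha k.succ_ne_zero
  obtain ⟨r, hr, rfl⟩ := exists_eq_ofReal_inv_pow hb₀ hb k.succ_ne_zero
  obtain ⟨ξ, hξ, rfl⟩ := exists_eq_ofReal_inv_pow hx₀ hx hk
  obtain ⟨η, hη, rfl⟩ := exists_eq_ofReal_inv_pow hy₀ hy hk
  rw [ofReal_inv_pow hξ hη hk, ofReal_inv_pow hp hr k.succ_ne_zero,
    ← ENNReal.ofReal_div_of_pos (by positivity), ← ENNReal.ofReal_div_of_pos (by positivity),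
    ← ENNReal.ofReal_add (by positivity) (by positivity), ← ENNReal.ofReal_mul (by positivity)]
  exact ENNReal.ofReal_le_ofReal (inv_pow_add_le_of_pos hp hr hξ hη k)

end borellMean

-- Normalizing `u` and `v` by their suprema reduces to `lintegral_add_lintegral_le_of_min_le`.
lemma borellMean_lintegral_le_of_bounded (k : ℕ) {u v w : ℝ → ℝ≥0∞} (hu : Measurable u)
    (hv : Measurable v) (hw : Measurable w) (hu_fin : ⨆ x, u x ≠ ⊤) (hv_fin : ⨆ x, v x ≠ ⊤)
    (h : ∀ x y, borellMean (k + 1) (u x) (v y) ≤ w (x + y)) :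
    borellMean k (∫⁻ x, u x) (∫⁻ x, v x) ≤ ∫⁻ x, w x := by
  set A := ⨆ x, u x
  set B := ⨆ x, v x
  rcases eq_or_ne A 0 with hA₀ | hA₀
  · simp [ENNReal.iSup_eq_zero.1 hA₀]
  rcases eq_or_ne B 0 with hB₀ | hB₀
  · simp [ENNReal.iSup_eq_zero.1 hB₀]
  set M := borellMean (k + 1) A B
  obtain ⟨hM₀, hM⟩ : M ≠ 0 ∧ M ≠ ⊤ :=
    borellMean.ne_zero_and_ne_top k.succ_ne_zero hA₀ hu_fin hB₀ hv_fin
  have hsupA : ⨆ x, u x / A = 1 := by rw [← ENNReal.iSup_div, ENNReal.div_self hA₀ hu_fin]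
  have hsupB : ⨆ x, v x / B = 1 := by rw [← ENNReal.iSup_div, ENNReal.div_self hB₀ hv_fin]
  have hmin (x y : ℝ) : min (u x / A) (v y / B) ≤ w (x + y) / M := by
    set s := min (u x / A) (v y / B)
    rcases eq_or_ne s 0 with hs₀ | hs₀
    · simp [hs₀]
    have hs : s ≠ ⊤ := ne_top_of_le_ne_top
      (ENNReal.div_ne_top (ne_top_of_le_ne_top hu_fin (le_iSup u x)) hA₀) (min_le_left _ _)
    rw [ENNReal.le_div_iff_mul_le (.inl hM₀) (.inl hM),
      ← borellMean.smul k.succ_ne_zero hs₀ hs hA₀ hu_fin hB₀ hv_fin]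
    refine (borellMean.mono _ ?_ ?_).trans (h x y)
    · exact (ENNReal.le_div_iff_mul_le (.inl hA₀) (.inl hu_fin)).1 (min_le_left _ _)
    · exact (ENNReal.le_div_iff_mul_le (.inl hB₀) (.inl hv_fin)).1 (min_le_right _ _)
  have normalized := lintegral_add_lintegral_le_of_min_le (hu.div_const A) (hv.div_const B)
    (hw.div_const M) (hsupA.trans hsupB.symm) (by simp [hsupA]) hmin
  simp only [div_eq_mul_inv] at normalized
  rw [lintegral_mul_const _ hu, lintegral_mul_const _ hv, lintegral_mul_const _ hw] at normalized
  calc borellMean k (∫⁻ x, u x) (∫⁻ x, v x)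
      ≤ M * ((∫⁻ x, u x) / A + (∫⁻ x, v x) / B) :=
        borellMean.le_mul_div_add_div hA₀ hu_fin hB₀ hv_fin k _ _
    _ ≤ M * ((∫⁻ x, w x) * M⁻¹) := by gcongr; exact normalized
    _ = ∫⁻ x, w x := by rw [mul_comm, mul_assoc, ENNReal.inv_mul_cancel hM₀ hM, mul_one]

lemma tendsto_lintegral_min_natCast {α : Type*} [MeasurableSpace α] {μ : Measure α}
    {u : α → ℝ≥0∞} (hu : AEMeasurable u μ) :
    Tendsto (fun N : ℕ ↦ ∫⁻ x, min (u x) N ∂μ) atTop (𝓝 (∫⁻ x, u x ∂μ)) := by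
  refine lintegral_tendsto_of_tendsto_of_monotone (fun N ↦ hu.min aemeasurable_const)
    (.of_forall fun x a b hab ↦ min_le_min le_rfl (by exact_mod_cast hab)) (.of_forall fun x ↦ ?_)
  simpa using (tendsto_const_nhds (x := u x)).min ENNReal.tendsto_nat_nhds_top

lemma borellMean_lintegral_le_real (k : ℕ) {u v w : ℝ → ℝ≥0∞} (hu : Measurable u)
    (hv : Measurable v) (hw : Measurable w)
    (h : ∀ x y, borellMean (k + 1) (u x) (v y) ≤ w (x + y)) :
    borellMean k (∫⁻ x, u x) (∫⁻ x, v x) ≤ ∫⁻ x, w x := by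
  have iSup_min_ne_top (f : ℝ → ℝ≥0∞) (N : ℕ) : ⨆ x, min (f x) N ≠ ⊤ :=
    ne_top_of_le_ne_top (ENNReal.natCast_ne_top N) (iSup_le fun _ ↦ min_le_right _ _)
  have truncated (N : ℕ) :
      borellMean k (∫⁻ x, min (u x) N) (∫⁻ x, min (v x) N) ≤ ∫⁻ x, w x :=
    borellMean_lintegral_le_of_bounded k (hu.min measurable_const) (hv.min measurable_const) hw
      (iSup_min_ne_top u N) (iSup_min_ne_top v N)
      fun x y ↦ (borellMean.mono _ (min_le_left _ _) (min_le_left _ _)).trans (h x y)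
  exact le_of_tendsto' (((borellMean.continuous_uncurry k).tendsto _).comp
    ((tendsto_lintegral_min_natCast hu.aemeasurable).prodMk_nhds
      (tendsto_lintegral_min_natCast hv.aemeasurable))) truncated

section FinSlices

variable {m : ℕ} {u v w : (Fin (m + 1) → ℝ) → ℝ≥0∞}

lemma piFinSuccAbove_zero_symm_apply (p : ℝ × (Fin m → ℝ)) :
    (MeasurableEquiv.piFinSuccAbove (fun _ : Fin (m + 1) ↦ ℝ) 0).symm p = Fin.cons p.1 p.2 := by
  ext i
  refine Fin.cases ?_ (fun j ↦ ?_) i <;> simp [MeasurableEquiv.piFinSuccAbove]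

lemma measurable_comp_cons (hu : Measurable u) :
    Measurable fun p : ℝ × (Fin m → ℝ) ↦ u (Fin.cons p.1 p.2) := by
  simpa only [Function.comp_def, piFinSuccAbove_zero_symm_apply] using
    hu.comp (MeasurableEquiv.piFinSuccAbove (fun _ : Fin (m + 1) ↦ ℝ) 0).symm.measurable

lemma lintegral_fin_succ (hu : Measurable u) :
    ∫⁻ x, u x = ∫⁻ t : ℝ, ∫⁻ y : Fin m → ℝ, u (Fin.cons t y) := by
  rw [← (volume_preserving_piFinSuccAbove (fun _ : Fin (m + 1) ↦ ℝ) 0).symm.lintegral_comp hu,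
    Measure.volume_eq_prod]
  simp only [piFinSuccAbove_zero_symm_apply]
  rw [lintegral_prod _ (measurable_comp_cons hu).aemeasurable]

lemma cons_add_cons (s t : ℝ) (x y : Fin m → ℝ) :
    (Fin.cons s x + Fin.cons t y : Fin (m + 1) → ℝ) = Fin.cons (s + t) (x + y) := by
  ext i
  refine Fin.cases ?_ (fun j ↦ ?_) i <;> simp

end FinSlices

theorem borellMean_lintegral_le (m : ℕ) : ∀ (k : ℕ) {u v w : (Fin m → ℝ) → ℝ≥0∞},
    Measurable u → Measurable v → Measurable w →
    (∀ x y, borellMean (k + m) (u x) (v y) ≤ w (x + y)) →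
    borellMean k (∫⁻ x, u x) (∫⁻ x, v x) ≤ ∫⁻ x, w x := by
  induction m with
  | zero =>
    intro k u v w _ _ _ h
    have eval (f : (Fin 0 → ℝ) → ℝ≥0∞) : ∫⁻ x, f x = f 0 := by
      rw [lintegral_unique, volume_pi, Measure.pi_univ, Finset.univ_eq_empty, Finset.prod_empty,
        mul_one]
      exact congrArg f (Subsingleton.elim _ _)
    simpa only [eval, add_zero] using h 0 0
  | succ m ih =>
    intro k u v w hu hv hw h
    rw [lintegral_fin_succ hu, lintegral_fin_succ hv, lintegral_fin_succ hw]
    refine borellMean_lintegral_le_real k (measurable_comp_cons hu).lintegral_prod_right'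
      (measurable_comp_cons hv).lintegral_prod_right'
      (measurable_comp_cons hw).lintegral_prod_right' fun s t ↦ ?_
    refine ih (k + 1) ((measurable_comp_cons hu).comp measurable_prodMk_left)
      ((measurable_comp_cons hv).comp measurable_prodMk_left)
      ((measurable_comp_cons hw).comp measurable_prodMk_left) fun x y ↦ ?_
    rw [show k + 1 + m = k + (m + 1) by ring]
    simpa only [Function.comp_apply, cons_add_cons] using h (Fin.cons s x) (Fin.cons t y)

-- The Bobkov–Ledoux refinement: equal slice suprema allow the extremal `min` inequality in the
-- first coordinate, so the exponent improves from that of dimension `m + 1` to `m`.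
theorem lintegral_add_lintegral_le_of_borellMean_le (m : ℕ) {u v w : (Fin (m + 1) → ℝ) → ℝ≥0∞}
    (hu : Measurable u) (hv : Measurable v) (hw : Measurable w)
    (h : ∀ x y, borellMean m (u x) (v y) ≤ w (x + y))
    (hsup : ⨆ t : ℝ, ∫⁻ y : Fin m → ℝ, u (Fin.cons t y) =
      ⨆ t : ℝ, ∫⁻ y : Fin m → ℝ, v (Fin.cons t y))
    (hfin : ⨆ t : ℝ, ∫⁻ y : Fin m → ℝ, u (Fin.cons t y) ≠ ⊤) :
    (∫⁻ x, u x) + (∫⁻ x, v x) ≤ ∫⁻ x, w x := by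
  rw [lintegral_fin_succ hu, lintegral_fin_succ hv, lintegral_fin_succ hw]
  refine lintegral_add_lintegral_le_of_min_le (measurable_comp_cons hu).lintegral_prod_right'
    (measurable_comp_cons hv).lintegral_prod_right'
    (measurable_comp_cons hw).lintegral_prod_right' hsup hfin fun s t ↦ ?_
  rw [← borellMean.zero_index]
  refine borellMean_lintegral_le m 0 ((measurable_comp_cons hu).comp measurable_prodMk_left)
    ((measurable_comp_cons hv).comp measurable_prodMk_left)
    ((measurable_comp_cons hw).comp measurable_prodMk_left) fun x y ↦ ?_
  simpa only [Function.comp_apply, cons_add_cons, zero_add] using h (Fin.cons s x) (Fin.cons t y)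

/-! ### Integrals of inverse powers of paraboloids -/

section Paraboloid

variable {E : Type*} [NormedAddCommGroup E] [NormedSpace ℝ E]

/-- The paraboloid `l s (1 + |y / s|²)`. Its inverse powers are extremal for the sharp Sobolev
inequality; as `s → 0` it is the kernel of an infinitesimal inf-convolution. -/
def paraboloid (l s : ℝ) (y : E) : ℝ := l * (s * (1 + ‖s⁻¹ • y‖ ^ 2))

lemma paraboloid_pos {l s : ℝ} (hl : 0 < l) (hs : 0 < s) (y : E) : 0 < paraboloid l s y := by
  unfold paraboloid
  positivity

lemma continuous_paraboloid (l s : ℝ) : Continuous (paraboloid (E := E) l s) := by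
  unfold paraboloid
  fun_prop

lemma paraboloid_eq (l : ℝ) {s : ℝ} (hs : 0 < s) (y : E) :
    paraboloid l s y = s * l + l * ‖y‖ ^ 2 / s := by
  rw [paraboloid, norm_smul, norm_inv, norm_of_nonneg hs.le]
  field_simp

variable [FiniteDimensional ℝ E] [MeasurableSpace E] [BorelSpace E] (μ : Measure E)
  [μ.IsAddHaarMeasure]

lemma integrable_inv_pow_one_add_norm_sq {p : ℕ} (hp : finrank ℝ E < 2 * p) :
    Integrable (fun y : E ↦ ((1 + ‖y‖ ^ 2) ^ p)⁻¹) μ := by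
  refine (integrable_rpow_neg_one_add_norm_sq (μ := μ) (r := 2 * p)
    (by exact_mod_cast hp)).congr (.of_forall fun x ↦ ?_)
  beta_reduce
  rw [show -(2 * (p : ℝ)) / 2 = -(p : ℝ) by ring, rpow_neg (by positivity), rpow_natCast]

lemma integrable_inv_pow_paraboloid {p : ℕ} (hp : finrank ℝ E < 2 * p) (l : ℝ) {s : ℝ}
    (hs : 0 < s) : Integrable (fun y : E ↦ (paraboloid l s y ^ p)⁻¹) μ := by
  refine (((integrable_inv_pow_one_add_norm_sq μ hp).comp_smul
    (inv_ne_zero hs.ne')).const_mul ((l * s) ^ p)⁻¹).congr (.of_forall fun x ↦ ?_)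
  beta_reduce
  rw [← mul_inv, ← mul_pow, mul_assoc, paraboloid]

lemma integral_inv_pow_paraboloid (p : ℕ) (l : ℝ) {s : ℝ} (hs : 0 < s) :
    ∫ y : E, (paraboloid l s y ^ p)⁻¹ ∂μ =
      (l ^ p)⁻¹ * (s ^ finrank ℝ E * (s ^ p)⁻¹ * ∫ y : E, ((1 + ‖y‖ ^ 2) ^ p)⁻¹ ∂μ) := by
  simp only [paraboloid]
  rw [Measure.integral_comp_inv_smul_of_nonneg μ (fun y ↦ ((l * (s * (1 + ‖y‖ ^ 2))) ^ p)⁻¹) hs.le]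
  simp only [smul_eq_mul, mul_pow, mul_inv, integral_const_mul]
  ring

lemma lintegral_inv_pow_paraboloid {p : ℕ} (hp : finrank ℝ E < 2 * p) {l s : ℝ} (hl : 0 < l)
    (hs : 0 < s) : ∫⁻ y : E, ENNReal.ofReal (paraboloid l s y ^ p)⁻¹ ∂μ = ENNReal.ofReal
      ((l ^ p)⁻¹ * (s ^ finrank ℝ E * (s ^ p)⁻¹ * ∫ y : E, ((1 + ‖y‖ ^ 2) ^ p)⁻¹ ∂μ)) := by
  rw [← ofReal_integral_eq_lintegral_ofReal (integrable_inv_pow_paraboloid μ hp l hs)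
    (.of_forall fun y ↦ (inv_pos.2 (pow_pos (paraboloid_pos hl hs y) p)).le),
    integral_inv_pow_paraboloid μ p l hs]

end Paraboloid

/-- The integral `∫ (1 + |y|²)⁻ᵖ dy` over `ℝⁿ`. -/
def bubbleIntegral (n p : ℕ) : ℝ := ∫ y : EuclideanSpace ℝ (Fin n), ((1 + ‖y‖ ^ 2) ^ p)⁻¹

lemma bubbleIntegral_nonneg (n p : ℕ) : 0 ≤ bubbleIntegral n p :=
  integral_nonneg fun _ ↦ by positivity

lemma bubbleIntegral_pos {n p : ℕ} (hp : n < 2 * p) : 0 < bubbleIntegral n p := by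
  refine integral_pos_of_integrable_nonneg_nonzero (x := 0) ?_
    (integrable_inv_pow_one_add_norm_sq volume (by simpa using hp)) (fun _ ↦ by positivity)
    (by simp)
  exact Continuous.inv₀ (by fun_prop) fun y ↦ by positivity

/-! ### Slices of Euclidean space -/

section Slices

variable {m : ℕ}

lemma measurable_ofReal_inv_pow {α : Type*} [MeasurableSpace α] {f : α → ℝ} (hf : Measurable f)
    (k : ℕ) : Measurable fun x ↦ ENNReal.ofReal (f x ^ k)⁻¹ :=
  (hf.pow_const k).inv.ennreal_ofReal

/-- The point `(t, y)` of `ℝ × ℝᵐ`, seen in `ℝᵐ⁺¹` with its Euclidean norm. -/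
def euclideanCons (t : ℝ) (y : EuclideanSpace ℝ (Fin m)) : EuclideanSpace ℝ (Fin (m + 1)) :=
  WithLp.toLp 2 (Fin.cons t (WithLp.ofLp y))

lemma norm_sq_euclideanCons (t : ℝ) (y : EuclideanSpace ℝ (Fin m)) :
    ‖euclideanCons t y‖ ^ 2 = t ^ 2 + ‖y‖ ^ 2 := by
  rw [EuclideanSpace.norm_sq_eq, EuclideanSpace.norm_sq_eq, Fin.sum_univ_succ]
  simp [euclideanCons]

lemma continuous_euclideanCons (t : ℝ) : Continuous (euclideanCons (m := m) t) := by
  refine (PiLp.continuous_toLp 2 _).comp (continuous_pi fun i ↦ ?_)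
  refine Fin.cases ?_ (fun j ↦ ?_) i
  · simpa only [Fin.cons_zero] using continuous_const
  · simp only [Fin.cons_succ]
    fun_prop

lemma lintegral_toLp (F : EuclideanSpace ℝ (Fin m) → ℝ≥0∞) :
    ∫⁻ y : Fin m → ℝ, F (WithLp.toLp 2 y) = ∫⁻ y, F y :=
  (PiLp.volume_preserving_toLp (Fin m)).lintegral_comp_emb
    (MeasurableEquiv.toLp 2 (Fin m → ℝ)).measurableEmbedding F

/-- The largest mass of `f⁻ᵐ` on a hyperplane `{t} × ℝᵐ`: the quantity to be matched before
applying the Bobkov–Ledoux inequality. -/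
def sliceSup (f : EuclideanSpace ℝ (Fin (m + 1)) → ℝ) : ℝ≥0∞ :=
  ⨆ t : ℝ, ∫⁻ y : EuclideanSpace ℝ (Fin m), ENNReal.ofReal (f (euclideanCons t y) ^ m)⁻¹

lemma lintegral_slice_le_sliceSup (f : EuclideanSpace ℝ (Fin (m + 1)) → ℝ) (t : ℝ) :
    ∫⁻ y : EuclideanSpace ℝ (Fin m), ENNReal.ofReal (f (euclideanCons t y) ^ m)⁻¹ ≤ sliceSup f :=
  le_iSup (fun t : ℝ ↦ ∫⁻ y : EuclideanSpace ℝ (Fin m),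
    ENNReal.ofReal (f (euclideanCons t y) ^ m)⁻¹) t

lemma sliceSup_eq_iSup_lintegral_cons (f : EuclideanSpace ℝ (Fin (m + 1)) → ℝ) :
    sliceSup f = ⨆ t : ℝ, ∫⁻ y : Fin m → ℝ,
      ENNReal.ofReal (f (WithLp.toLp 2 (Fin.cons t y)) ^ m)⁻¹ :=
  iSup_congr fun _ ↦ (lintegral_toLp _).symm

theorem lintegral_inv_pow_add_le (hm : m ≠ 0) {f g h : EuclideanSpace ℝ (Fin (m + 1)) → ℝ}
    (hf : Continuous f) (hg : Continuous g) (hh : Continuous h) (hf₀ : ∀ x, 0 < f x)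
    (hg₀ : ∀ x, 0 < g x) (hh₀ : ∀ x, 0 < h x) (hfgh : ∀ x y, h (x + y) ≤ f x + g y)
    (hsup : sliceSup f = sliceSup g) (hfin : sliceSup f ≠ ⊤) :
    (∫⁻ x, ENNReal.ofReal (f x ^ m)⁻¹) + (∫⁻ x, ENNReal.ofReal (g x ^ m)⁻¹) ≤
      ∫⁻ x, ENNReal.ofReal (h x ^ m)⁻¹ := by
  rw [sliceSup_eq_iSup_lintegral_cons, sliceSup_eq_iSup_lintegral_cons] at hsup
  rw [sliceSup_eq_iSup_lintegral_cons] at hfin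
  simp only [← lintegral_toLp fun y ↦ ENNReal.ofReal (f y ^ m)⁻¹,
    ← lintegral_toLp fun y ↦ ENNReal.ofReal (g y ^ m)⁻¹,
    ← lintegral_toLp fun y ↦ ENNReal.ofReal (h y ^ m)⁻¹]
  have hc := PiLp.continuous_toLp 2 fun _ : Fin (m + 1) ↦ ℝ
  refine lintegral_add_lintegral_le_of_borellMean_le m
    (measurable_ofReal_inv_pow (hf.comp hc).measurable m)
    (measurable_ofReal_inv_pow (hg.comp hc).measurable m)
    (measurable_ofReal_inv_pow (hh.comp hc).measurable m) (fun x y ↦ ?_) hsup hfin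
  rw [borellMean.ofReal_inv_pow (hf₀ _) (hg₀ _) hm]
  have := hh₀ (WithLp.toLp 2 (x + y))
  have := hfgh (WithLp.toLp 2 x) (WithLp.toLp 2 y)
  rw [← WithLp.toLp_add] at this
  gcongr

lemma sliceSup_anti {f g : EuclideanSpace ℝ (Fin (m + 1)) → ℝ} (hf : ∀ x, 0 < f x)
    (hfg : ∀ x, f x ≤ g x) : sliceSup g ≤ sliceSup f := by
  refine iSup_mono fun t ↦ lintegral_mono fun y ↦ ENNReal.ofReal_le_ofReal ?_
  have := hf (euclideanCons t y)
  have := hfg (euclideanCons t y)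
  gcongr

lemma sliceSup_paraboloid (hm : m ≠ 0) {l s : ℝ} (hl : 0 < l) (hs : 0 < s) :
    sliceSup (m := m) (paraboloid l s) = ENNReal.ofReal ((l ^ m)⁻¹ * bubbleIntegral m m) := by
  have zero_slice (y : EuclideanSpace ℝ (Fin m)) :
      paraboloid l s (euclideanCons 0 y) = paraboloid l s y := by
    simp only [paraboloid, norm_smul, mul_pow, norm_sq_euclideanCons]
    ring
  have lintegral_zero_slice : ∫⁻ y : EuclideanSpace ℝ (Fin m),
      ENNReal.ofReal (paraboloid l s (euclideanCons 0 y) ^ m)⁻¹ =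
      ENNReal.ofReal ((l ^ m)⁻¹ * bubbleIntegral m m) := by
    simp only [zero_slice]
    rw [lintegral_inv_pow_paraboloid volume (by rw [finrank_euclideanSpace_fin]; lia) hl hs,
      finrank_euclideanSpace_fin, mul_inv_cancel₀ (by positivity), one_mul, bubbleIntegral]
  refine le_antisymm (iSup_le fun t ↦ ?_)
    (lintegral_zero_slice ▸ lintegral_slice_le_sliceSup (paraboloid l s) 0)
  rw [← lintegral_zero_slice]
  refine lintegral_mono fun y ↦ ENNReal.ofReal_le_ofReal ?_
  have := paraboloid_pos hl hs (euclideanCons 0 y)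
  have : paraboloid l s (euclideanCons 0 y) ≤ paraboloid l s (euclideanCons t y) := by
    simp only [paraboloid, norm_smul, mul_pow, norm_sq_euclideanCons]
    have : (0 : ℝ) ^ 2 ≤ t ^ 2 := by simpa using sq_nonneg t
    gcongr
  gcongr

lemma sliceSup_ne_zero {f : EuclideanSpace ℝ (Fin (m + 1)) → ℝ} (hf : Continuous f)
    (hf₀ : ∀ x, 0 < f x) : sliceSup f ≠ 0 := by
  have hslice : Continuous fun y : EuclideanSpace ℝ (Fin m) ↦ f (euclideanCons 0 y) :=
    hf.comp (continuous_euclideanCons 0)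
  refine (lt_of_lt_of_le ?_ (lintegral_slice_le_sliceSup f 0)).ne'
  rw [lintegral_pos_iff_support (measurable_ofReal_inv_pow hslice.measurable m)]
  have : (Function.support fun y : EuclideanSpace ℝ (Fin m) ↦
      ENNReal.ofReal (f (euclideanCons 0 y) ^ m)⁻¹) = Set.univ :=
    Set.eq_univ_of_forall fun y ↦
      (ENNReal.ofReal_pos.2 (inv_pos.2 (pow_pos (hf₀ _) m))).ne'
  rw [this]
  exact Measure.measure_univ_pos.2 (NeZero.ne _)

lemma sliceSup_ne_top (hm : m ≠ 0) {f : EuclideanSpace ℝ (Fin (m + 1)) → ℝ} {c : ℝ} (hc : 0 < c)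
    (hfc : ∀ x, c * (1 + ‖x‖ ^ 2) ≤ f x) : sliceSup f ≠ ⊤ := by
  have : sliceSup f ≤ sliceSup (m := m) (paraboloid c 1) :=
    sliceSup_anti (paraboloid_pos hc one_pos) fun x ↦ by simpa [paraboloid] using hfc x
  rw [sliceSup_paraboloid hm hc one_pos] at this
  exact ne_top_of_le_ne_top ENNReal.ofReal_ne_top this

end Slices

/-! ### The infinitesimal inf-convolution with a paraboloid -/

section QuadraticProfile

variable {E : Type*} [NormedAddCommGroup E] [NormedSpace ℝ E] {f : E → ℝ} {D : E → E →L[ℝ] ℝ}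
  {c L M : ℝ}

/-- A function `f` of at least quadratic growth, with a continuous field `D` of slopes such that
`f` lies above its tangent planes up to `L |y|²`, and `|D|²` is controlled by `f`. In the
application `f = u ^ (-2 / (d - 2))` and `D` is its derivative. -/
structure IsQuadraticProfile (f : E → ℝ) (D : E → E →L[ℝ] ℝ) (c L M : ℝ) : Prop where
  continuous : Continuous f
  continuous_slope : Continuous D
  growth_pos : 0 < c
  slope_bound_nonneg : 0 ≤ M
  growth_le : ∀ x, c * (1 + ‖x‖ ^ 2) ≤ f x
  norm_slope_sq_le : ∀ x, ‖D x‖ ^ 2 ≤ M * f x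
  sub_slope_sub_le : ∀ z y, f z - D z y - L * ‖y‖ ^ 2 ≤ f (z - y)

namespace IsQuadraticProfile

lemma growth_const_le (h : IsQuadraticProfile f D c L M) (x : E) : c ≤ f x :=
  (le_mul_of_one_le_right h.growth_pos.le (by nlinarith [sq_nonneg ‖x‖])).trans (h.growth_le x)

lemma pos (h : IsQuadraticProfile f D c L M) (x : E) : 0 < f x :=
  h.growth_pos.trans_le (h.growth_const_le x)

lemma inv_pow_nonneg (h : IsQuadraticProfile f D c L M) (p : ℕ) (x : E) : 0 ≤ (f x ^ p)⁻¹ :=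
  (inv_pos.2 (pow_pos (h.pos x) p)).le

section Integrability

variable [FiniteDimensional ℝ E] [MeasurableSpace E] [BorelSpace E] {μ : Measure E}
  [μ.IsAddHaarMeasure]

lemma integrable_inv_pow (h : IsQuadraticProfile f D c L M) {p : ℕ} (hp : finrank ℝ E < 2 * p) :
    Integrable (fun x ↦ (f x ^ p)⁻¹) μ := by
  refine ((integrable_inv_pow_one_add_norm_sq μ hp).const_mul (c ^ p)⁻¹).mono'
    (h.continuous.measurable.pow_const p).inv.aestronglyMeasurable (.of_forall fun x ↦ ?_)
  have hc := h.growth_pos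
  have := h.growth_le x
  rw [norm_of_nonneg (h.inv_pow_nonneg p x), ← mul_inv, ← mul_pow]
  gcongr

lemma integrable_norm_sq_mul_inv_pow (h : IsQuadraticProfile f D c L M) {p : ℕ}
    (hp : finrank ℝ E < 2 * p) :
    Integrable (fun x ↦ ‖D x‖ ^ 2 * (f x ^ (p + 1))⁻¹) μ := by
  have hD := h.continuous_slope
  refine ((h.integrable_inv_pow hp).const_mul M).mono' ((hD.norm.pow 2).measurable.mul
    (h.continuous.measurable.pow_const _).inv).aestronglyMeasurable (.of_forall fun x ↦ ?_)
  have hf₀ := h.pos x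
  rw [norm_of_nonneg (mul_nonneg (sq_nonneg _) (h.inv_pow_nonneg _ x))]
  calc ‖D x‖ ^ 2 * (f x ^ (p + 1))⁻¹ ≤ M * f x * (f x ^ (p + 1))⁻¹ := by
        gcongr
        exact h.norm_slope_sq_le x
    _ = M * (f x ^ p)⁻¹ := by
        rw [pow_succ]
        field_simp

end Integrability

end IsQuadraticProfile

/-- The minorant `f + s (l - |D|² / (4 (l - L s)))` of the inf-convolution of `f` with
`paraboloid l s`, obtained by bounding `f` below by its tangent paraboloids. -/
def infConvMinorant (f : E → ℝ) (D : E → E →L[ℝ] ℝ) (L l s : ℝ) (x : E) : ℝ :=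
  f x + s * (l - ‖D x‖ ^ 2 / (4 * (l - L * s)))

namespace IsQuadraticProfile

variable {l s : ℝ}

lemma continuous_infConvMinorant (h : IsQuadraticProfile f D c L M) :
    Continuous (infConvMinorant f D L l s) := by
  have hf := h.continuous
  have hD := h.continuous_slope
  unfold infConvMinorant
  fun_prop

lemma infConvMinorant_add_le (h : IsQuadraticProfile f D c L M) (hs : 0 < s) (hLs : L * s < l)
    (x y : E) : infConvMinorant f D L l s (x + y) ≤ f x + paraboloid l s y := by
  set q := l - L * s with hq
  have hq₀ : 0 < q := sub_pos.2 hLs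
  have tangent := h.sub_slope_sub_le (x + y) y
  rw [add_sub_cancel_right] at tangent
  have slope : D (x + y) y ≤ ‖D (x + y)‖ * ‖y‖ :=
    (le_abs_self _).trans ((D (x + y)).le_opNorm y)
  have square : ‖D (x + y)‖ * ‖y‖ ≤ q / s * ‖y‖ ^ 2 + s * (‖D (x + y)‖ ^ 2 / (4 * q)) := by
    have : q / s * ‖y‖ ^ 2 + s * (‖D (x + y)‖ ^ 2 / (4 * q)) - ‖D (x + y)‖ * ‖y‖ =
        (2 * q * ‖y‖ - s * ‖D (x + y)‖) ^ 2 / (4 * q * s) := by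
      field_simp
      ring
    rw [← sub_nonneg, this]
    positivity
  have split : l * ‖y‖ ^ 2 / s = L * ‖y‖ ^ 2 + q / s * ‖y‖ ^ 2 := by
    rw [hq]
    field_simp
    ring
  rw [infConvMinorant, paraboloid_eq l hs, split]
  linarith

lemma abs_infConvMinorant_sub_le (h : IsQuadraticProfile f D c L M) (hl : 0 < l) (hs : 0 ≤ s)
    (hLs : 2 * L * s ≤ l) (x : E) :
    |infConvMinorant f D L l s x - f x| ≤ s * (l / c + M / (2 * l)) * f x := by
  have hq : 2 * l ≤ 4 * (l - L * s) := by linarith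
  have hM := h.slope_bound_nonneg
  have hf₀ := h.pos x
  have const_term : l ≤ l / c * f x := by
    rw [div_mul_eq_mul_div, le_div_iff₀ h.growth_pos]
    exact mul_le_mul_of_nonneg_left (h.growth_const_le x) hl.le
  have slope_term : ‖D x‖ ^ 2 / (4 * (l - L * s)) ≤ M / (2 * l) * f x :=
    calc ‖D x‖ ^ 2 / (4 * (l - L * s)) ≤ M * f x / (2 * l) := by
          gcongr
          exact h.norm_slope_sq_le x
      _ = M / (2 * l) * f x := by ring
  have slope_nonneg : 0 ≤ ‖D x‖ ^ 2 / (4 * (l - L * s)) :=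
    div_nonneg (sq_nonneg _) (by linarith)
  rw [infConvMinorant, add_sub_cancel_left, abs_mul, abs_of_nonneg hs, mul_assoc]
  refine mul_le_mul_of_nonneg_left (abs_le.2 ⟨?_, ?_⟩) hs <;> linarith

end IsQuadraticProfile

end QuadraticProfile

lemma inv_pow_le_of_abs_sub_le {m : ℕ} {a b K : ℝ} (ha : 0 < a) (hab : |b - a| ≤ K * a)
    (hK : m * K ≤ 1 / 2) :
    (b ^ m)⁻¹ ≤ (a ^ m)⁻¹ - m * ((b - a) * (a ^ (m + 1))⁻¹) + 2 * m ^ 2 * K ^ 2 * (a ^ m)⁻¹ := by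
  rcases Nat.eq_zero_or_pos m with rfl | hm
  · simp
  have hm₁ : (1 : ℝ) ≤ m := by exact_mod_cast hm
  obtain ⟨τ, hτ⟩ : ∃ τ, b = a * (1 + τ) := ⟨b / a - 1, by field_simp; ring⟩
  have hτK : |τ| ≤ K := by
    rw [hτ, show a * (1 + τ) - a = τ * a by ring, abs_mul, abs_of_pos ha] at hab
    exact le_of_mul_le_mul_right hab ha
  obtain ⟨hτ_lower, -⟩ := abs_le.mp hτK
  have bernoulli : 1 + m * τ ≤ (1 + τ) ^ m := one_add_mul_le_pow (by nlinarith) m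
  have half_le : (1 : ℝ) / 2 ≤ 1 + m * τ := by nlinarith
  have key : ((1 + τ) ^ m)⁻¹ ≤ 1 - m * τ + 2 * m ^ 2 * K ^ 2 :=
    calc ((1 + τ) ^ m)⁻¹ ≤ (1 + m * τ)⁻¹ := by gcongr
      _ ≤ 1 - m * τ + 2 * m ^ 2 * |τ| ^ 2 := by
        rw [inv_le_iff_one_le_mul₀ (by linarith), sq_abs]
        nlinarith [sq_nonneg (m * τ)]
      _ ≤ 1 - m * τ + 2 * m ^ 2 * K ^ 2 := by gcongr
  calc (b ^ m)⁻¹ = (a ^ m)⁻¹ * ((1 + τ) ^ m)⁻¹ := by rw [hτ, mul_pow, mul_inv]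
    _ ≤ (a ^ m)⁻¹ * (1 - m * τ + 2 * m ^ 2 * K ^ 2) := by gcongr
    _ = _ := by
      rw [hτ, pow_succ]
      field_simp
      ring

lemma integral_inv_pow_le {α : Type*} [MeasurableSpace α] {μ : Measure α} {f F : α → ℝ}
    (hf : Measurable f) (hF : Measurable F) (hf₀ : ∀ x, 0 < f x) (hF₀ : ∀ x, 0 < F x) {K : ℝ}
    (hFf : ∀ x, |F x - f x| ≤ K * f x) {m : ℕ} (hK : m * K ≤ 1 / 2)
    (hint : Integrable (fun x ↦ (f x ^ m)⁻¹) μ) :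
    Integrable (fun x ↦ (F x ^ m)⁻¹) μ ∧ ∫ x, (F x ^ m)⁻¹ ∂μ ≤ ∫ x, (f x ^ m)⁻¹ ∂μ -
      m * ∫ x, (F x - f x) * (f x ^ (m + 1))⁻¹ ∂μ + 2 * m ^ 2 * K ^ 2 * ∫ x, (f x ^ m)⁻¹ ∂μ := by
  have bound (x : α) := inv_pow_le_of_abs_sub_le (hf₀ x) (hFf x) hK
  have hint_diff : Integrable (fun x ↦ (F x - f x) * (f x ^ (m + 1))⁻¹) μ := by
    refine (hint.const_mul K).mono' ((hF.sub hf).mul (hf.pow_const _).inv).aestronglyMeasurable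
      (.of_forall fun x ↦ ?_)
    have := hf₀ x
    rw [norm_mul, norm_of_nonneg (by positivity : 0 ≤ (f x ^ (m + 1))⁻¹)]
    calc ‖F x - f x‖ * (f x ^ (m + 1))⁻¹ ≤ K * f x * (f x ^ (m + 1))⁻¹ := by
          gcongr
          exact hFf x
      _ = K * (f x ^ m)⁻¹ := by
          rw [pow_succ]
          field_simp
  have hint_sub := hint.sub (hint_diff.const_mul m)
  have hint_bound := hint_sub.add (hint.const_mul (2 * m ^ 2 * K ^ 2))
  have hintF : Integrable (fun x ↦ (F x ^ m)⁻¹) μ :=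
    hint_bound.mono' (hF.pow_const m).inv.aestronglyMeasurable (.of_forall fun x ↦ by
      rw [norm_of_nonneg (inv_pos.2 (pow_pos (hF₀ x) m)).le]
      exact bound x)
  refine ⟨hintF, (integral_mono hintF hint_bound bound).trans_eq ?_⟩
  rw [integral_add' hint_sub (hint.const_mul _), integral_sub' hint (hint_diff.const_mul _),
    integral_const_mul, integral_const_mul]

namespace IsQuadraticProfile

variable {m : ℕ} {f : EuclideanSpace ℝ (Fin (m + 1)) → ℝ}
  {D : EuclideanSpace ℝ (Fin (m + 1)) → EuclideanSpace ℝ (Fin (m + 1)) →L[ℝ] ℝ} {c L M l s : ℝ}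

lemma integral_infConvMinorant_sub_mul_inv_pow (h : IsQuadraticProfile f D c L M) (hm : 2 ≤ m) :
    ∫ x, (infConvMinorant f D L l s x - f x) * (f x ^ (m + 1))⁻¹ =
      s * (l * (∫ x, (f x ^ (m + 1))⁻¹) -
        (∫ x, ‖D x‖ ^ 2 * (f x ^ (m + 1))⁻¹) / (4 * (l - L * s))) := by
  have hint_inv : Integrable fun x ↦ (f x ^ (m + 1))⁻¹ :=
    h.integrable_inv_pow (by rw [finrank_euclideanSpace_fin]; lia)
  have hint_slope : Integrable fun x ↦ ‖D x‖ ^ 2 * (f x ^ (m + 1))⁻¹ :=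
    h.integrable_norm_sq_mul_inv_pow (by rw [finrank_euclideanSpace_fin]; lia)
  rw [← integral_const_mul, ← integral_div, ← integral_sub (hint_inv.const_mul _)
    (hint_slope.div_const _), ← integral_const_mul]
  refine integral_congr_ae (.of_forall fun x ↦ ?_)
  simp only [infConvMinorant]
  ring

lemma integral_inv_pow_add_paraboloid_le (h : IsQuadraticProfile f D c L M) (hm : 2 ≤ m)
    (hl : 0 < l) (hs : 0 < s) (hLs : L * s < l)
    (hsup : sliceSup f = ENNReal.ofReal ((l ^ m)⁻¹ * bubbleIntegral m m))
    (hF₀ : ∀ x, 0 < infConvMinorant f D L l s x)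
    (hF : Integrable fun x ↦ (infConvMinorant f D L l s x ^ m)⁻¹) :
    (∫ x, (f x ^ m)⁻¹) + s * ((l ^ m)⁻¹ * bubbleIntegral (m + 1) m) ≤
      ∫ x, (infConvMinorant f D L l s x ^ m)⁻¹ := by
  have hm₀ : m ≠ 0 := by lia
  have hdim : finrank ℝ (EuclideanSpace ℝ (Fin (m + 1))) < 2 * m := by
    rw [finrank_euclideanSpace_fin]
    lia
  have bobkov_ledoux := lintegral_inv_pow_add_le hm₀ h.continuous (continuous_paraboloid l s)
    h.continuous_infConvMinorant h.pos (paraboloid_pos hl hs) hF₀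
    (h.infConvMinorant_add_le hs hLs) (hsup.trans (sliceSup_paraboloid hm₀ hl hs).symm)
    (hsup ▸ ENNReal.ofReal_ne_top)
  have hscale : s ^ (m + 1) * (s ^ m)⁻¹ = s := by
    rw [pow_succ]
    field_simp
  have hnonneg : 0 ≤ s * ((l ^ m)⁻¹ * bubbleIntegral (m + 1) m) :=
    mul_nonneg hs.le (mul_nonneg (by positivity) (bubbleIntegral_nonneg _ _))
  rw [lintegral_inv_pow_paraboloid volume hdim hl hs, finrank_euclideanSpace_fin, hscale,
    mul_left_comm, ← bubbleIntegral,
    ← ofReal_integral_eq_lintegral_ofReal (h.integrable_inv_pow hdim)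
      (.of_forall (h.inv_pow_nonneg m)),
    ← ofReal_integral_eq_lintegral_ofReal hF
      (.of_forall fun x ↦ (inv_pos.2 (pow_pos (hF₀ x) m)).le),
    ← ENNReal.ofReal_add (integral_nonneg (h.inv_pow_nonneg m)) hnonneg] at bobkov_ledoux
  exact (ENNReal.ofReal_le_ofReal_iff
    (integral_nonneg fun x ↦ (inv_pos.2 (pow_pos (hF₀ x) m)).le)).1 bobkov_ledoux

lemma bubbleIntegral_le_add_error (h : IsQuadraticProfile f D c L M) (hm : 2 ≤ m) (hl : 0 < l)
    (hs : 0 < s) (hLs : 2 * L * s ≤ l) (hK : m * (s * (l / c + M / (2 * l))) ≤ 1 / 2)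
    (hsup : sliceSup f = ENNReal.ofReal ((l ^ m)⁻¹ * bubbleIntegral m m)) :
    (l ^ m)⁻¹ * bubbleIntegral (m + 1) m ≤
      m * ((∫ x, ‖D x‖ ^ 2 * (f x ^ (m + 1))⁻¹) / (4 * (l - L * s)) - l * ∫ x, (f x ^ (m + 1))⁻¹)
        + s * (2 * m ^ 2 * (l / c + M / (2 * l)) ^ 2 * ∫ x, (f x ^ m)⁻¹) := by
  set K := l / c + M / (2 * l)
  have hK₀ : 0 ≤ K :=
    add_nonneg (div_nonneg hl.le h.growth_pos.le) (div_nonneg h.slope_bound_nonneg (by positivity))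
  have hm₂ : (2 : ℝ) ≤ m := by exact_mod_cast hm
  have hsK : s * K ≤ 1 / 4 := by nlinarith [mul_nonneg hs.le hK₀]
  have hclose (x) := h.abs_infConvMinorant_sub_le hl hs.le hLs x
  have hF₀ (x) : 0 < infConvMinorant f D L l s x := by
    have := (abs_le.1 (hclose x)).1
    nlinarith [h.pos x, hsK]
  obtain ⟨hF, hF_le⟩ := integral_inv_pow_le h.continuous.measurable
    h.continuous_infConvMinorant.measurable h.pos hF₀ hclose hK
    (h.integrable_inv_pow (μ := volume) (by rw [finrank_euclideanSpace_fin]; lia))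
  have hconv := h.integral_inv_pow_add_paraboloid_le hm hl hs (by linarith) hsup hF₀ hF
  rw [h.integral_infConvMinorant_sub_mul_inv_pow hm] at hF_le
  refine le_of_mul_le_mul_left ?_ hs
  linarith

lemma exists_sliceSup_eq (h : IsQuadraticProfile f D c L M) (hm : m ≠ 0) :
    ∃ l > 0, sliceSup f = ENNReal.ofReal ((l ^ m)⁻¹ * bubbleIntegral m m) := by
  have hκ : 0 < bubbleIntegral m m := bubbleIntegral_pos (by lia)
  have hκ' : ENNReal.ofReal (bubbleIntegral m m) ≠ 0 := (ENNReal.ofReal_pos.2 hκ).ne'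
  obtain ⟨l, hl, hl_eq⟩ := exists_eq_ofReal_inv_pow
    (a := sliceSup f / ENNReal.ofReal (bubbleIntegral m m)) (k := m)
    (ENNReal.div_ne_zero.2 ⟨sliceSup_ne_zero h.continuous h.pos, ENNReal.ofReal_ne_top⟩)
    (ENNReal.div_ne_top (sliceSup_ne_top hm h.growth_pos h.growth_le) hκ') hm
  refine ⟨l, hl, ?_⟩
  rw [ENNReal.ofReal_mul (by positivity), ← hl_eq,
    ENNReal.div_mul_cancel hκ' ENNReal.ofReal_ne_top]

theorem exists_bubbleIntegral_le (h : IsQuadraticProfile f D c L M) (hm : 2 ≤ m) :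
    ∃ l > 0, (l ^ m)⁻¹ * bubbleIntegral (m + 1) m ≤
      m * ((∫ x, ‖D x‖ ^ 2 * (f x ^ (m + 1))⁻¹) / (4 * l) - l * ∫ x, (f x ^ (m + 1))⁻¹) := by
  obtain ⟨l, hl, hsup⟩ := h.exists_sliceSup_eq (by lia)
  refine ⟨l, hl, ?_⟩
  set I₁ := ∫ x, ‖D x‖ ^ 2 * (f x ^ (m + 1))⁻¹
  set I₀ := ∫ x, (f x ^ (m + 1))⁻¹
  set K := l / c + M / (2 * l) with hK
  have htendsto : Tendsto (fun s ↦ m * (I₁ / (4 * (l - L * s)) - l * I₀) +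
      s * (2 * m ^ 2 * K ^ 2 * ∫ x, (f x ^ m)⁻¹)) (𝓝[>] 0) (𝓝 (m * (I₁ / (4 * l) - l * I₀))) := by
    have : ContinuousAt (fun s ↦ m * (I₁ / (4 * (l - L * s)) - l * I₀) +
        s * (2 * m ^ 2 * K ^ 2 * ∫ x, (f x ^ m)⁻¹)) 0 := by
      have : 4 * (l - L * 0) ≠ 0 := by simpa using hl.ne'
      fun_prop (disch := assumption)
    simpa using this.tendsto.mono_left (nhdsWithin_le_nhds (s := Set.Ioi 0))
  have hsmall (a b : ℝ) (hb : 0 < b) : ∀ᶠ s in 𝓝[>] (0 : ℝ), a * s ≤ b := by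
    have : Tendsto (fun s ↦ a * s) (𝓝[>] 0) (𝓝 (a * 0)) :=
      ((continuous_const_mul a).tendsto 0).mono_left nhdsWithin_le_nhds
    exact this.eventually_le_const (by simpa using hb)
  refine ge_of_tendsto htendsto ?_
  filter_upwards [hsmall (2 * L) l hl, hsmall (m * K) (1 / 2) one_half_pos, self_mem_nhdsWithin]
    with s hLs hKs hs
  exact h.bubbleIntegral_le_add_error hm hl hs hLs (by rw [← hK]; linarith) hsup

end IsQuadraticProfile

/-! ### The sharp Sobolev inequality for compactly supported functions -/

lemma rpow_mul_rpow_le_of_pos {k : ℕ} {l a b : ℝ} (hl : 0 < l) (ha : 0 ≤ a) (hb : 0 ≤ b) :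
    a ^ ((k : ℝ) / (k + 2)) * b ^ ((2 : ℝ) / (k + 2)) ≤
      k / (k + 2) * (l ^ 2 * a) + 2 / (k + 2) * (b * (l ^ k)⁻¹) := by
  have hscale : (l ^ 2) ^ ((k : ℝ) / (k + 2)) = (l ^ k) ^ ((2 : ℝ) / (k + 2)) := by
    rw [← rpow_natCast, ← rpow_natCast, ← rpow_mul hl.le, ← rpow_mul hl.le]
    congr 1
    push_cast
    ring
  have hne : (l ^ k) ^ ((2 : ℝ) / (k + 2)) ≠ 0 := by positivity
  calc a ^ ((k : ℝ) / (k + 2)) * b ^ ((2 : ℝ) / (k + 2))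
      = (l ^ 2 * a) ^ ((k : ℝ) / (k + 2)) * (b * (l ^ k)⁻¹) ^ ((2 : ℝ) / (k + 2)) := by
        rw [mul_rpow (by positivity) ha, mul_rpow hb (by positivity), inv_rpow (by positivity),
          hscale]
        field_simp
    _ ≤ _ := geom_mean_le_arith_mean2_weighted (by positivity) (by positivity) (by positivity)
        (by positivity) (by field_simp)

lemma mul_rpow_le_of_inv_pow_le {k : ℕ} (hk : k ≠ 0) {l N κ G : ℝ} (hl : 0 < l) (hN : 0 ≤ N)
    (hκ : 0 ≤ κ) (h : (l ^ (k + 1))⁻¹ * κ ≤ (k + 1) * (G / (k ^ 2 * l) - l * N)) :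
    (k + 2) * k * (κ * k / (2 * (k + 1))) ^ ((2 : ℝ) / (k + 2)) * N ^ ((k : ℝ) / (k + 2)) ≤ G := by
  have amgm := rpow_mul_rpow_le_of_pos (k := k) hl hN
    (by positivity : 0 ≤ κ * k / (2 * ((k : ℝ) + 1)))
  have hG : (k : ℝ) ^ 2 * (l ^ 2 * N + κ * (l ^ k)⁻¹ / (k + 1)) ≤ G := by
    have hl' : 0 < (k : ℝ) ^ 2 * (l / (k + 1)) := by positivity
    have := mul_le_mul_of_nonneg_left h hl'.le
    have e₁ : (k : ℝ) ^ 2 * (l / (k + 1)) * ((l ^ (k + 1))⁻¹ * κ) =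
        k ^ 2 * (κ * (l ^ k)⁻¹ / (k + 1)) := by
      rw [pow_succ]
      field_simp
      ring
    have e₂ : (k : ℝ) ^ 2 * (l / (k + 1)) * ((k + 1) * (G / (k ^ 2 * l) - l * N)) =
        G - k ^ 2 * (l ^ 2 * N) := by field_simp
    linarith
  calc _ = ((k : ℝ) + 2) * k *
        (N ^ ((k : ℝ) / (k + 2)) * (κ * k / (2 * (k + 1))) ^ ((2 : ℝ) / (k + 2))) := by ring
    _ ≤ (k + 2) * k * (k / (k + 2) * (l ^ 2 * N) +
        2 / (k + 2) * (κ * k / (2 * (k + 1)) * (l ^ k)⁻¹)) := by gcongr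
    _ = (k : ℝ) ^ 2 * (l ^ 2 * N + κ * (l ^ k)⁻¹ / (k + 1)) := by field_simp
    _ ≤ G := hG

lemma exists_sub_fderiv_sub_le {E : Type*} [NormedAddCommGroup E] [NormedSpace ℝ E] {ψ : E → ℝ}
    (hψ : ContDiff ℝ 2 ψ) (hcs : HasCompactSupport ψ) :
    ∃ L : ℝ, ∀ z y, ψ z - fderiv ℝ ψ z y - L * ‖y‖ ^ 2 ≤ ψ (z - y) := by
  obtain ⟨C, hC⟩ := (hψ.fderiv_right (m := 1) le_rfl).lipschitzWith_of_hasCompactSupport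
    (hcs.fderiv ℝ) one_ne_zero
  refine ⟨C, fun z y ↦ ?_⟩
  have hback : z - y - z = -y := by abel
  have hderiv (x) (hx : x ∈ segment ℝ z (z - y)) :
      ‖fderiv ℝ ψ x - fderiv ℝ ψ z‖ ≤ C * ‖y‖ := by
    have hxz : ‖x - z‖ ≤ ‖y‖ := by
      obtain ⟨t, ht, rfl⟩ := segment_eq_image' ℝ z (z - y) ▸ hx
      rw [add_sub_cancel_left, hback, norm_smul, norm_neg, norm_of_nonneg ht.1]
      exact mul_le_of_le_one_left (norm_nonneg y) ht.2
    calc ‖fderiv ℝ ψ x - fderiv ℝ ψ z‖ ≤ C * ‖x - z‖ := hC.norm_sub_le x z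
      _ ≤ C * ‖y‖ := by gcongr
  have taylor := (convex_segment z (z - y)).norm_image_sub_le_of_norm_fderiv_le' (𝕜 := ℝ)
    (fun x _ ↦ hψ.differentiable two_ne_zero x) hderiv (left_mem_segment ℝ _ _)
    (right_mem_segment ℝ _ _)
  rw [hback, norm_neg, map_neg] at taylor
  linarith [(abs_le.mp taylor).1]

section Bubble

variable {E : Type*} [NormedAddCommGroup E]

/-- The Aubin–Talenti bubble `(1 + |x|²) ^ (-k / 2)`, extremal in dimension `k + 2`. -/
def bubble (k : ℕ) (x : E) : ℝ := (1 + ‖x‖ ^ 2) ^ (-(k : ℝ) / 2)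

lemma bubble_pos (k : ℕ) (x : E) : 0 < bubble k x := by
  unfold bubble
  positivity

lemma bubble_rpow {k : ℕ} (hk : k ≠ 0) (x : E) : bubble k x ^ (-(2 : ℝ) / k) = 1 + ‖x‖ ^ 2 := by
  rw [bubble, ← rpow_mul (by positivity), show -(k : ℝ) / 2 * (-2 / k) = 1 by field_simp, rpow_one]

variable [InnerProductSpace ℝ E]

lemma hasFDerivAt_norm_sq (x : E) :
    HasFDerivAt (fun x : E ↦ ‖x‖ ^ 2) ((2 : ℝ) • innerSL ℝ x) x := by
  simpa only [two_smul] using (hasStrictFDerivAt_norm_sq x).hasFDerivAt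

lemma exists_isQuadraticProfile {f : E → ℝ} (hf : ContDiff ℝ 2 f) {a : ℝ} (ha : 0 ≤ a)
    (hcs : HasCompactSupport fun x ↦ f x - a * (1 + ‖x‖ ^ 2)) {c : ℝ} (hc : 0 < c)
    (hfc : ∀ x, c * (1 + ‖x‖ ^ 2) ≤ f x) :
    ∃ L M, IsQuadraticProfile f (fderiv ℝ f) c L M := by
  set ψ : E → ℝ := fun x ↦ f x - a * (1 + ‖x‖ ^ 2) with hψ_def
  have hψ : ContDiff ℝ 2 ψ := hf.sub (contDiff_const.mul (contDiff_const.add (contDiff_norm_sq ℝ)))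
  have hfψ (x) : f x = ψ x + a * (1 + ‖x‖ ^ 2) := by simp [hψ_def]
  have hDf (x) : fderiv ℝ f x = fderiv ℝ ψ x + a • (2 : ℝ) • innerSL ℝ x := by
    rw [funext hfψ]
    exact ((hψ.differentiable two_ne_zero x).hasFDerivAt.add
      (((hasFDerivAt_norm_sq x).const_add 1).const_mul a)).fderiv
  obtain ⟨L, hquad⟩ := exists_sub_fderiv_sub_le hψ hcs
  obtain ⟨B, hB⟩ := (hψ.continuous_fderiv two_ne_zero).bounded_above_of_compact_support
    (hcs.fderiv ℝ)
  refine ⟨L, (8 * a ^ 2 + 2 * B ^ 2) / c, hf.continuous, hf.continuous_fderiv two_ne_zero, hc,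
    by positivity, hfc, fun x ↦ ?_, fun z y ↦ ?_⟩
  · have hnorm : ‖fderiv ℝ f x‖ ≤ B + a * (2 * ‖x‖) := by
      rw [hDf]
      refine (norm_add_le _ _).trans (add_le_add (hB x) ?_)
      rw [norm_smul, norm_smul, innerSL_apply_norm, norm_of_nonneg ha,
        norm_of_nonneg zero_le_two]
    calc ‖fderiv ℝ f x‖ ^ 2 ≤ (B + a * (2 * ‖x‖)) ^ 2 := by gcongr
      _ ≤ (8 * a ^ 2 + 2 * B ^ 2) * (1 + ‖x‖ ^ 2) := by
        nlinarith [sq_nonneg (a * (2 * ‖x‖) - B), sq_nonneg (B * ‖x‖), sq_nonneg a]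
      _ = (8 * a ^ 2 + 2 * B ^ 2) / c * (c * (1 + ‖x‖ ^ 2)) := by field_simp
      _ ≤ (8 * a ^ 2 + 2 * B ^ 2) / c * f x := by
        gcongr
        exact hfc x
  · rw [hfψ z, hfψ (z - y), hDf, norm_sub_sq_real z y]
    simp only [add_apply, smul_apply, innerSL_apply_apply, smul_eq_mul]
    nlinarith [hquad z y, mul_nonneg ha (sq_nonneg ‖y‖)]

lemma contDiff_bubble (k : ℕ) {n : WithTop ℕ∞} : ContDiff ℝ n (bubble k : E → ℝ) :=
  (contDiff_const.add (contDiff_norm_sq ℝ)).rpow_const_of_ne fun x ↦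
    (by positivity : (0 : ℝ) < 1 + ‖x‖ ^ 2).ne'

lemma norm_fderiv_bubble_sq_le (k : ℕ) (x : E) :
    ‖fderiv ℝ (bubble k) x‖ ^ 2 ≤ k ^ 2 * ((1 + ‖x‖ ^ 2) ^ (k + 1))⁻¹ := by
  have hpos : 0 < 1 + ‖x‖ ^ 2 := by positivity
  have hderiv : fderiv ℝ (bubble k) x =
      (-(k : ℝ) / 2 * (1 + ‖x‖ ^ 2) ^ (-(k : ℝ) / 2 - 1)) • (2 : ℝ) • innerSL ℝ x :=
    (((hasFDerivAt_norm_sq x).const_add 1).rpow_const (Or.inl hpos.ne')).fderiv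
  have hpow : ((1 + ‖x‖ ^ 2) ^ (-(k : ℝ) / 2 - 1)) ^ 2 = ((1 + ‖x‖ ^ 2) ^ (k + 2))⁻¹ := by
    rw [← rpow_natCast _ 2, ← rpow_natCast _ (k + 2), ← rpow_neg hpos.le, ← rpow_mul hpos.le]
    congr 1
    push_cast
    ring
  calc ‖fderiv ℝ (bubble k) x‖ ^ 2 = k ^ 2 * (‖x‖ ^ 2 * ((1 + ‖x‖ ^ 2) ^ (k + 2))⁻¹) := by
        rw [hderiv, norm_smul, norm_smul, innerSL_apply_norm, ← hpow]
        simp only [mul_pow, norm_eq_abs, sq_abs]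
        ring
    _ ≤ k ^ 2 * ((1 + ‖x‖ ^ 2) * ((1 + ‖x‖ ^ 2) ^ (k + 2))⁻¹) := by
        gcongr
        linarith
    _ = k ^ 2 * ((1 + ‖x‖ ^ 2) ^ (k + 1))⁻¹ := by
        rw [pow_succ _ (k + 1)]
        field_simp

lemma rpow_neg_two_div_pow_inv {k : ℕ} (hk : k ≠ 0) {a : ℝ} (ha : 0 < a) :
    ((a ^ (-(2 : ℝ) / k)) ^ (k + 2))⁻¹ = a ^ (2 * ((k : ℝ) + 2) / k) := by
  rw [← rpow_natCast, ← rpow_neg (by positivity), ← rpow_mul ha.le]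
  congr 1
  push_cast
  field_simp

lemma norm_fderiv_rpow_sq_mul_inv_pow {k : ℕ} (hk : k ≠ 0) {u : E → ℝ} {x : E}
    (hu : DifferentiableAt ℝ u x) (hu₀ : 0 < u x) :
    ‖fderiv ℝ (fun x ↦ u x ^ (-(2 : ℝ) / k)) x‖ ^ 2 * ((u x ^ (-(2 : ℝ) / k)) ^ (k + 2))⁻¹ =
      4 / k ^ 2 * ‖fderiv ℝ u x‖ ^ 2 := by
  have hderiv := (hu.hasFDerivAt.rpow_const (p := -(2 : ℝ) / k) (Or.inl hu₀.ne')).fderiv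
  have hcancel : (u x ^ (-(2 : ℝ) / k - 1)) ^ 2 * u x ^ (2 * ((k : ℝ) + 2) / k) = 1 := by
    rw [← rpow_natCast, ← rpow_mul hu₀.le, ← rpow_add hu₀]
    convert rpow_zero (u x)
    push_cast
    field_simp
    ring
  rw [hderiv, rpow_neg_two_div_pow_inv hk hu₀, norm_smul, mul_pow, norm_eq_abs, sq_abs, mul_pow]
  linear_combination (4 / (k : ℝ) ^ 2 * ‖fderiv ℝ u x‖ ^ 2) * hcancel

lemma exists_isQuadraticProfile_add_bubble {k : ℕ} (hk : k ≠ 0) {φ : E → ℝ} (hφ : ContDiff ℝ 2 φ)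
    (hcs : HasCompactSupport φ) (hφ₀ : ∀ x, 0 ≤ φ x) {ε : ℝ} (hε : 0 < ε) :
    ∃ c L M, IsQuadraticProfile (fun x ↦ (φ x + ε * bubble k x) ^ (-(2 : ℝ) / k))
      (fderiv ℝ fun x ↦ (φ x + ε * bubble k x) ^ (-(2 : ℝ) / k)) c L M := by
  have hu₀ (x) : 0 < φ x + ε * bubble k x :=
    add_pos_of_nonneg_of_pos (hφ₀ x) (mul_pos hε (bubble_pos k x))
  obtain ⟨A, hA⟩ : ∃ A, ∀ x, ‖φ x / bubble k x‖ ≤ A :=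
    (hφ.continuous.div (contDiff_bubble k (n := 0)).continuous
      fun x ↦ (bubble_pos k x).ne').bounded_above_of_compact_support
      (hcs.mono fun x hx hφx ↦ hx (by rw [Pi.div_apply, hφx, zero_div]))
  have hA₀ : 0 ≤ A := (norm_nonneg _).trans (hA 0)
  refine ⟨(A + ε) ^ (-(2 : ℝ) / k), exists_isQuadraticProfile (a := ε ^ (-(2 : ℝ) / k))
    ((hφ.add (contDiff_const.mul (contDiff_bubble k))).rpow_const_of_ne fun x ↦ (hu₀ x).ne')
    (by positivity) (hcs.mono fun x hx hφx ↦ hx ?_) (by positivity) fun x ↦ ?_⟩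
  · beta_reduce
    rw [hφx, zero_add, mul_rpow hε.le (bubble_pos k x).le, bubble_rpow hk, sub_self]
  · rw [← bubble_rpow hk x, ← mul_rpow (by positivity) (bubble_pos k x).le]
    refine rpow_le_rpow_of_nonpos (hu₀ x) ?_
      (div_nonpos_of_nonpos_of_nonneg (by norm_num) (Nat.cast_nonneg k))
    have := (div_le_iff₀ (bubble_pos k x)).1 ((le_abs_self _).trans (hA x))
    linarith

end Bubble

section Smooth

variable {k : ℕ} {φ : EuclideanSpace ℝ (Fin (k + 2)) → ℝ}

lemma sobolev_add_bubble (hk : k ≠ 0) (hφ : ContDiff ℝ 2 φ) (hcs : HasCompactSupport φ)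
    (hφ₀ : ∀ x, 0 ≤ φ x) {ε : ℝ} (hε : 0 < ε) :
    Integrable (fun x ↦ (φ x + ε * bubble k x) ^ (2 * ((k : ℝ) + 2) / k)) ∧
    (k + 2) * k * (bubbleIntegral (k + 2) (k + 1) * k / (2 * (k + 1))) ^ ((2 : ℝ) / (k + 2)) *
        (∫ x, (φ x + ε * bubble k x) ^ (2 * ((k : ℝ) + 2) / k)) ^ ((k : ℝ) / (k + 2)) ≤
      ∫ x, ‖fderiv ℝ (fun x ↦ φ x + ε * bubble k x) x‖ ^ 2 := by
  set u := fun x ↦ φ x + ε * bubble k x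
  have hu (x) : DifferentiableAt ℝ u x :=
    (hφ.add (contDiff_const.mul (contDiff_bubble k))).differentiable two_ne_zero x
  have hu₀ (x) : 0 < u x := add_pos_of_nonneg_of_pos (hφ₀ x) (mul_pos hε (bubble_pos k x))
  obtain ⟨c, L, M, h : IsQuadraticProfile (fun x ↦ u x ^ (-(2 : ℝ) / k))
    (fderiv ℝ fun x ↦ u x ^ (-(2 : ℝ) / k)) c L M⟩ :=
    exists_isQuadraticProfile_add_bubble hk hφ hcs hφ₀ hε
  have hpow (x) := rpow_neg_two_div_pow_inv hk (hu₀ x)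
  have hnorm (x) := norm_fderiv_rpow_sq_mul_inv_pow hk (hu x) (hu₀ x)
  have hint := h.integrable_inv_pow (μ := volume) (p := k + 2)
    (by rw [finrank_euclideanSpace_fin]; lia)
  simp only [hpow] at hint
  obtain ⟨l, hl, hle⟩ := h.exists_bubbleIntegral_le (m := k + 1) (by lia)
  rw [integral_congr_ae (.of_forall hpow), integral_congr_ae (.of_forall hnorm),
    integral_const_mul] at hle
  refine ⟨hint, mul_rpow_le_of_inv_pow_le hk hl
    (integral_nonneg fun x ↦ (rpow_pos_of_pos (hu₀ x) _).le)
    (bubbleIntegral_nonneg _ _) (hle.trans_eq ?_)⟩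
  push_cast
  field_simp
  rfl

lemma integrable_norm_fderiv_sq_of_hasCompactSupport {E : Type*} [NormedAddCommGroup E]
    [NormedSpace ℝ E] [MeasurableSpace E] [BorelSpace E] {μ : Measure E}
    [IsFiniteMeasureOnCompacts μ] {φ : E → ℝ} (hφ : ContDiff ℝ 1 φ) (hcs : HasCompactSupport φ) :
    Integrable (fun x ↦ ‖fderiv ℝ φ x‖ ^ 2) μ :=
  ((hφ.continuous_fderiv one_ne_zero).norm.pow 2).integrable_of_hasCompactSupport
    ((hcs.fderiv ℝ).mono fun x hx hzero ↦ hx (by simp [hzero]))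

lemma integrable_norm_fderiv_bubble_sq (hk : k ≠ 0) :
    Integrable fun x : EuclideanSpace ℝ (Fin (k + 2)) ↦ ‖fderiv ℝ (bubble k) x‖ ^ 2 := by
  refine ((integrable_inv_pow_one_add_norm_sq volume (p := k + 1) ?_).const_mul
    ((k : ℝ) ^ 2)).mono' (((contDiff_bubble k (n := 1)).continuous_fderiv
      one_ne_zero).norm.pow 2).aestronglyMeasurable (.of_forall fun x ↦ ?_)
  · rw [finrank_euclideanSpace_fin]
    lia
  · rw [norm_of_nonneg (by positivity)]
    exact norm_fderiv_bubble_sq_le k x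

lemma integral_norm_fderiv_add_bubble_sq_le (hk : k ≠ 0) (hφ : ContDiff ℝ 1 φ)
    (hcs : HasCompactSupport φ) {ε : ℝ} (hε : 0 ≤ ε) :
    ∫ x, ‖fderiv ℝ (fun x ↦ φ x + ε * bubble k x) x‖ ^ 2 ≤
      (1 + ε) * (∫ x, ‖fderiv ℝ φ x‖ ^ 2) +
        (ε ^ 2 + ε) * ∫ x : EuclideanSpace ℝ (Fin (k + 2)), ‖fderiv ℝ (bubble k) x‖ ^ 2 := by
  have hint_φ := (integrable_norm_fderiv_sq_of_hasCompactSupport (μ := volume) hφ hcs).const_mul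
    (1 + ε)
  have hint_b := (integrable_norm_fderiv_bubble_sq hk).const_mul (ε ^ 2 + ε)
  rw [← integral_const_mul, ← integral_const_mul, ← integral_add hint_φ hint_b]
  refine integral_mono_of_nonneg (.of_forall fun x ↦ sq_nonneg _) (hint_φ.add hint_b)
    (.of_forall fun x ↦ ?_)
  have hderiv : fderiv ℝ (fun x ↦ φ x + ε * bubble k x) x =
      fderiv ℝ φ x + ε • fderiv ℝ (bubble k) x :=
    ((hφ.differentiable one_ne_zero x).hasFDerivAt.add
      (((contDiff_bubble k (n := 1)).differentiable one_ne_zero x).hasFDerivAt.const_mul ε)).fderiv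
  have hnorm : ‖fderiv ℝ φ x + ε • fderiv ℝ (bubble k) x‖ ≤
      ‖fderiv ℝ φ x‖ + ε * ‖fderiv ℝ (bubble k) x‖ := by
    simpa only [norm_smul, norm_of_nonneg hε] using
      norm_add_le (fderiv ℝ φ x) (ε • fderiv ℝ (bubble k) x)
  simp only [hderiv]
  refine (pow_le_pow_left₀ (norm_nonneg _) hnorm 2).trans ?_
  nlinarith [mul_nonneg hε (sq_nonneg (‖fderiv ℝ φ x‖ - ‖fderiv ℝ (bubble k) x‖))]

lemma bubbleIntegral_mul_rpow_integral_le (hk : k ≠ 0) (hφ : ContDiff ℝ 2 φ)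
    (hcs : HasCompactSupport φ) (hφ₀ : ∀ x, 0 ≤ φ x) :
    (k + 2) * k * (bubbleIntegral (k + 2) (k + 1) * k / (2 * (k + 1))) ^ ((2 : ℝ) / (k + 2)) *
        (∫ x, φ x ^ (2 * ((k : ℝ) + 2) / k)) ^ ((k : ℝ) / (k + 2)) ≤
      ∫ x, ‖fderiv ℝ φ x‖ ^ 2 := by
  set I := ∫ x, ‖fderiv ℝ φ x‖ ^ 2
  set J := ∫ x : EuclideanSpace ℝ (Fin (k + 2)), ‖fderiv ℝ (bubble k) x‖ ^ 2
  have htendsto : Tendsto (fun ε : ℝ ↦ (1 + ε) * I + (ε ^ 2 + ε) * J) (𝓝[>] 0) (𝓝 I) := by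
    have : Continuous fun ε : ℝ ↦ (1 + ε) * I + (ε ^ 2 + ε) * J := by fun_prop
    simpa using (this.tendsto 0).mono_left (nhdsWithin_le_nhds (s := Set.Ioi 0))
  refine ge_of_tendsto htendsto ?_
  filter_upwards [self_mem_nhdsWithin] with ε hε
  obtain ⟨hint, hle⟩ := sobolev_add_bubble hk hφ hcs hφ₀ hε
  refine le_trans ?_ (hle.trans
    (integral_norm_fderiv_add_bubble_sq_le hk (hφ.of_le one_le_two) hcs (le_of_lt hε)))
  have hκ := bubbleIntegral_nonneg (k + 2) (k + 1)
  have hnonneg : 0 ≤ ∫ x, φ x ^ (2 * ((k : ℝ) + 2) / k) :=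
    integral_nonneg fun x ↦ rpow_nonneg (hφ₀ x) _
  have hmono : ∫ x, φ x ^ (2 * ((k : ℝ) + 2) / k) ≤
      ∫ x, (φ x + ε * bubble k x) ^ (2 * ((k : ℝ) + 2) / k) :=
    integral_mono_of_nonneg (.of_forall fun x ↦ rpow_nonneg (hφ₀ x) _) hint (.of_forall fun x ↦
      rpow_le_rpow (hφ₀ x) (le_add_of_nonneg_right (mul_nonneg (le_of_lt hε) (bubble_pos k x).le))
        (by positivity))
  gcongr

end Smooth

/-! ### The value of the Sobolev constant -/

lemma lintegral_rpow_mul_exp_neg_mul_Ioi {a r : ℝ} (ha : 0 < a) (hr : 0 < r) :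
    ∫⁻ t in Set.Ioi (0 : ℝ), ENNReal.ofReal (t ^ (a - 1) * exp (-(r * t))) =
      ENNReal.ofReal ((1 / r) ^ a * Gamma a) := by
  have h := integral_rpow_mul_exp_neg_mul_Ioi ha hr
  have hpos : 0 < (1 / r) ^ a * Gamma a := mul_pos (by positivity) (Gamma_pos_of_pos ha)
  rw [← h, ofReal_integral_eq_lintegral_ofReal (Integrable.of_integral_ne_zero (h ▸ hpos.ne'))]
  filter_upwards [ae_restrict_mem measurableSet_Ioi] with t ht
  exact mul_nonneg (rpow_nonneg (le_of_lt ht) _) (exp_pos _).le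

lemma lintegral_exp_neg_mul_norm_sq {V : Type*} [NormedAddCommGroup V] [InnerProductSpace ℝ V]
    [FiniteDimensional ℝ V] [MeasurableSpace V] [BorelSpace V] {b : ℝ} (hb : 0 < b) :
    ∫⁻ y : V, ENNReal.ofReal (exp (-b * ‖y‖ ^ 2)) =
      ENNReal.ofReal ((π / b) ^ ((finrank ℝ V : ℝ) / 2)) := by
  have h := GaussianFourier.integral_rexp_neg_mul_sq_norm (V := V) hb
  have hpos : 0 < (π / b) ^ ((finrank ℝ V : ℝ) / 2) := by positivity
  rw [← h, ofReal_integral_eq_lintegral_ofReal (Integrable.of_integral_ne_zero (h ▸ hpos.ne'))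
    (.of_forall fun y ↦ (exp_pos _).le)]

lemma lintegral_rpow_mul_exp_neg_mul_one_add_norm_sq (n : ℕ) (a : ℝ) {t : ℝ} (ht : 0 < t) :
    ∫⁻ y : EuclideanSpace ℝ (Fin n), ENNReal.ofReal (t ^ (a - 1) * exp (-((1 + ‖y‖ ^ 2) * t))) =
      ENNReal.ofReal (π ^ ((n : ℝ) / 2)) *
        ENNReal.ofReal (t ^ (a - (n : ℝ) / 2 - 1) * exp (-(1 * t))) := by
  have hsplit (y : EuclideanSpace ℝ (Fin n)) :
      ENNReal.ofReal (t ^ (a - 1) * exp (-((1 + ‖y‖ ^ 2) * t))) =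
        ENNReal.ofReal (t ^ (a - 1) * exp (-t)) * ENNReal.ofReal (exp (-t * ‖y‖ ^ 2)) := by
    rw [← ENNReal.ofReal_mul (by positivity), mul_assoc, ← exp_add]
    congr 3
    ring
  simp only [hsplit]
  rw [lintegral_const_mul _ (by fun_prop), lintegral_exp_neg_mul_norm_sq ht,
    finrank_euclideanSpace_fin, ← ENNReal.ofReal_mul (by positivity),
    ← ENNReal.ofReal_mul (by positivity), div_rpow pi_pos.le ht.le,
    show a - (n : ℝ) / 2 - 1 = a - 1 - n / 2 by ring, rpow_sub ht _ ((n : ℝ) / 2), one_mul]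
  congr 1
  ring

lemma bubbleIntegral_eq {n p : ℕ} (hnp : n < 2 * p) :
    bubbleIntegral n p = π ^ ((n : ℝ) / 2) * Gamma (p - (n : ℝ) / 2) / Gamma p := by
  have hp : (0 : ℝ) < p := by exact_mod_cast (by lia : 0 < p)
  have hpn : (0 : ℝ) < p - (n : ℝ) / 2 := by
    have : (n : ℝ) < 2 * p := by exact_mod_cast hnp
    linarith
  have hΓp := Gamma_pos_of_pos hp
  have := Gamma_pos_of_pos hpn
  have key : ∫⁻ y : EuclideanSpace ℝ (Fin n), ENNReal.ofReal (((1 + ‖y‖ ^ 2) ^ p)⁻¹ * Gamma p) =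
      ENNReal.ofReal (π ^ ((n : ℝ) / 2) * Gamma (p - (n : ℝ) / 2)) :=
    calc _ = ∫⁻ y : EuclideanSpace ℝ (Fin n), ∫⁻ t in Set.Ioi (0 : ℝ),
          ENNReal.ofReal (t ^ ((p : ℝ) - 1) * exp (-((1 + ‖y‖ ^ 2) * t))) := by
          refine lintegral_congr fun y ↦ ?_
          rw [lintegral_rpow_mul_exp_neg_mul_Ioi hp (by positivity), one_div,
            inv_rpow (by positivity), rpow_natCast]
      _ = ∫⁻ t in Set.Ioi (0 : ℝ), ∫⁻ y : EuclideanSpace ℝ (Fin n),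
          ENNReal.ofReal (t ^ ((p : ℝ) - 1) * exp (-((1 + ‖y‖ ^ 2) * t))) :=
          lintegral_lintegral_swap (Measurable.aemeasurable (by unfold Function.uncurry; fun_prop))
      _ = ∫⁻ t in Set.Ioi (0 : ℝ), ENNReal.ofReal (π ^ ((n : ℝ) / 2)) *
          ENNReal.ofReal (t ^ (p - (n : ℝ) / 2 - 1) * exp (-(1 * t))) :=
          setLIntegral_congr_fun measurableSet_Ioi fun t ht ↦
            lintegral_rpow_mul_exp_neg_mul_one_add_norm_sq n p ht
      _ = _ := by
          rw [lintegral_const_mul _ (by fun_prop), lintegral_rpow_mul_exp_neg_mul_Ioi hpn one_pos,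
            ← ENNReal.ofReal_mul (by positivity), div_one, one_rpow, one_mul]
  rw [← ofReal_integral_eq_lintegral_ofReal ((integrable_inv_pow_one_add_norm_sq volume
      (by simpa using hnp)).mul_const _) (.of_forall fun y ↦ by positivity), integral_mul_const,
    ← bubbleIntegral, ENNReal.ofReal_eq_ofReal_iff
      (mul_nonneg (bubbleIntegral_nonneg n p) hΓp.le) (by positivity)] at key
  rw [eq_div_iff hΓp.ne', key]

lemma bubbleIntegral_mul_div_eq {k : ℕ} (hk : k ≠ 0) :
    bubbleIntegral (k + 2) (k + 1) * k / (2 * (k + 1)) =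
      π ^ (((k : ℝ) + 2) / 2) * (Gamma (((k : ℝ) + 2) / 2) / Gamma ((k : ℝ) + 2)) := by
  have : 0 < Gamma ((k : ℝ) + 1) := Gamma_pos_of_pos (by positivity)
  have hΓ_succ : Gamma ((k : ℝ) + 2) = (k + 1) * Gamma (k + 1) := by
    rw [← Gamma_add_one (by positivity)]
    ring_nf
  have hΓ_half : Gamma (((k : ℝ) + 2) / 2) = k / 2 * Gamma (k / 2) := by
    rw [← Gamma_add_one (by positivity)]
    ring_nf
  rw [bubbleIntegral_eq (by lia), hΓ_succ, hΓ_half]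
  push_cast
  rw [show (k : ℝ) + 1 - (k + 2) / 2 = k / 2 by ring]
  field_simp

lemma sobolevConst_pos {d : ℕ} (hd : 3 ≤ d) : 0 < sobolevConst d := by
  have hd₃ : (3 : ℝ) ≤ d := by exact_mod_cast hd
  have : 0 < Gamma (d : ℝ) := Gamma_pos_of_pos (by linarith)
  have : 0 < Gamma ((d : ℝ) / 2) := Gamma_pos_of_pos (by linarith)
  have : (0 : ℝ) < d - 2 := by linarith
  unfold sobolevConst
  positivity

lemma sobolevConst_mul_bubbleIntegral {k : ℕ} (hk : k ≠ 0) :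
    sobolevConst (k + 2) * ((k + 2) * k *
      (bubbleIntegral (k + 2) (k + 1) * k / (2 * (k + 1))) ^ ((2 : ℝ) / (k + 2))) = 1 := by
  have : 0 < Gamma ((k : ℝ) + 2) := Gamma_pos_of_pos (by positivity)
  have : 0 < Gamma (((k : ℝ) + 2) / 2) := Gamma_pos_of_pos (by positivity)
  rw [bubbleIntegral_mul_div_eq hk, mul_rpow (by positivity) (by positivity),
    ← rpow_mul pi_pos.le, show ((k : ℝ) + 2) / 2 * (2 / (k + 2)) = 1 by field_simp, rpow_one,
    ← inv_div (Gamma ((k : ℝ) + 2)), inv_rpow (by positivity)]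
  unfold sobolevConst
  push_cast
  have hne : (Gamma ((k : ℝ) + 2) / Gamma (((k : ℝ) + 2) / 2)) ^ ((2 : ℝ) / (k + 2)) ≠ 0 := by
    positivity
  rw [add_sub_cancel_right]
  field_simp

theorem sobolev_of_contDiff_of_hasCompactSupport {k : ℕ} (hk : k ≠ 0)
    {φ : EuclideanSpace ℝ (Fin (k + 2)) → ℝ} (hφ : ContDiff ℝ 2 φ) (hcs : HasCompactSupport φ)
    (hφ₀ : ∀ x, 0 ≤ φ x) :
    (∫ x, φ x ^ (2 * ((k : ℝ) + 2) / k)) ^ ((k : ℝ) / (k + 2)) ≤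
      sobolevConst (k + 2) * ∫ x, ‖fderiv ℝ φ x‖ ^ 2 := by
  simpa only [← mul_assoc, sobolevConst_mul_bubbleIntegral hk, one_mul] using
    mul_le_mul_of_nonneg_left (bubbleIntegral_mul_rpow_integral_le hk hφ hcs hφ₀)
      (sobolevConst_pos (show 3 ≤ k + 2 by lia)).le

/-! ### Approximation by smooth compactly supported functions -/

section Mollification

open ContinuousLinearMap (lsmul)
open scoped Convolution

variable {E : Type*} [NormedAddCommGroup E] [NormedSpace ℝ E] [FiniteDimensional ℝ E]
  [MeasurableSpace E] [BorelSpace E] {μ : Measure E}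

lemma integrable_fderiv_of_integrable_norm_sq [IsFiniteMeasureOnCompacts μ] {w : E → ℝ}
    (hcs : HasCompactSupport w) (hint : Integrable (fun x ↦ ‖fderiv ℝ w x‖ ^ 2) μ) :
    Integrable (fderiv ℝ w) μ := by
  have hone : Integrable ((tsupport w).indicator fun _ ↦ (1 : ℝ)) μ :=
    (integrable_indicator_iff (isClosed_tsupport w).measurableSet).2
      (integrableOn_const hcs.isCompact.measure_lt_top.ne)
  refine (hint.add hone).mono' (measurable_fderiv ℝ w).aestronglyMeasurable (.of_forall fun x ↦ ?_)
  by_cases hx : x ∈ tsupport w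
  · simp only [Pi.add_apply, Set.indicator_of_mem hx]
    nlinarith [sq_nonneg (‖fderiv ℝ w x‖ - 1)]
  · have hzero : fderiv ℝ w x = 0 := by
      by_contra hne
      exact hx (support_fderiv_subset ℝ hne)
    simp [Set.indicator_of_notMem hx, hzero]

lemma sq_integral_mul_le {α : Type*} [MeasurableSpace α] {ν : Measure α} {η g : α → ℝ}
    (hη₀ : ∀ x, 0 ≤ η x) (hη : Integrable η ν) (hη₁ : ∫ x, η x ∂ν = 1)
    (hg : Integrable (fun x ↦ η x * g x) ν) (hg₂ : Integrable (fun x ↦ η x * g x ^ 2) ν) :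
    (∫ x, η x * g x ∂ν) ^ 2 ≤ ∫ x, η x * g x ^ 2 ∂ν := by
  set c := ∫ x, η x * g x ∂ν with hc
  have hvar : 0 ≤ ∫ x, (η x * g x ^ 2 - 2 * c * (η x * g x) + c ^ 2 * η x) ∂ν := by
    refine integral_nonneg fun x ↦ ?_
    have : 0 ≤ η x * (g x - c) ^ 2 := mul_nonneg (hη₀ x) (sq_nonneg _)
    simp only [Pi.zero_apply]
    linarith
  have hsub : Integrable (fun x ↦ η x * g x ^ 2 - 2 * c * (η x * g x)) ν := hg₂.sub (hg.const_mul _)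
  rw [integral_add hsub (hη.const_mul _), integral_sub hg₂ (hg.const_mul _),
    integral_const_mul, integral_const_mul, hη₁, ← hc] at hvar
  linarith

variable [μ.IsAddHaarMeasure] {η w : E → ℝ}

lemma fderiv_convolution_apply (hη : ContDiff ℝ 1 η) (hηs : HasCompactSupport η)
    (hw : Differentiable ℝ w) (hw' : LocallyIntegrable (fderiv ℝ w) μ) (x v : E) :
    fderiv ℝ (η ⋆[lsmul ℝ ℝ, μ] w) x v = ∫ y, η y * fderiv ℝ w (x - y) v ∂μ := by
  have hwl : LocallyIntegrable w μ := hw.continuous.locallyIntegrable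
  have hη' : Continuous (fderiv ℝ η) := hη.continuous_fderiv one_ne_zero
  have hconv := (hηs.fderiv ℝ).convolutionExists_left ((lsmul ℝ ℝ).precompL E) hη' hwl x
  have hderiv (y) : fderiv ℝ (fun y ↦ w (x - y)) y = -fderiv ℝ w (x - y) := by
    simpa [Function.comp_def] using
      ((hw (x - y)).hasFDerivAt.comp y ((hasFDerivAt_id y).const_sub x)).fderiv
  rw [(hηs.hasFDerivAt_convolution_left (lsmul ℝ ℝ) hη hwl x).fderiv, convolution_def,
    ContinuousLinearMap.integral_apply hconv]
  have hibp := integral_mul_fderiv_eq_neg_fderiv_mul_of_integrable (μ := μ) (f := η)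
    (g := fun y ↦ w (x - y)) (v := v) (hconv.apply_continuousLinearMap v) ?_
    (hηs.convolutionExists_left (lsmul ℝ ℝ) hη.continuous hwl x)
    (fun y _ ↦ hη.differentiable one_ne_zero y) (fun y _ ↦ by fun_prop)
  · simpa [hderiv, integral_neg] using hibp.symm
  · simp only [hderiv, neg_apply, mul_neg]
    exact ((hηs.convolutionExists_left (lsmul ℝ ℝ) hη.continuous hw' x).apply_continuousLinearMap
      v).neg

lemma norm_fderiv_convolution_le (hη : ContDiff ℝ 1 η) (hηs : HasCompactSupport η)
    (hη₀ : ∀ x, 0 ≤ η x) (hw : Differentiable ℝ w) (hw' : LocallyIntegrable (fderiv ℝ w) μ)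
    (x : E) :
    ‖fderiv ℝ (η ⋆[lsmul ℝ ℝ, μ] w) x‖ ≤ ∫ y, η y * ‖fderiv ℝ w (x - y)‖ ∂μ := by
  refine ContinuousLinearMap.opNorm_le_bound _
    (integral_nonneg fun y ↦ mul_nonneg (hη₀ y) (norm_nonneg _)) fun v ↦ ?_
  have hint := hηs.convolutionExists_left (lsmul ℝ ℝ) hη.continuous (fun z ↦ (hw' z).norm) x
  rw [fderiv_convolution_apply hη hηs hw hw', ← integral_mul_const]
  refine norm_integral_le_of_norm_le (hint.mul_const _) (.of_forall fun y ↦ ?_)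
  rw [norm_mul, norm_of_nonneg (hη₀ y), mul_assoc]
  exact mul_le_mul_of_nonneg_left (ContinuousLinearMap.le_opNorm _ _) (hη₀ y)

lemma integral_norm_fderiv_convolution_sq_le (hη : ContDiff ℝ 1 η) (hηs : HasCompactSupport η)
    (hη₀ : ∀ x, 0 ≤ η x) (hη₁ : ∫ x, η x ∂μ = 1) (hw : Differentiable ℝ w)
    (hws : HasCompactSupport w) (hint : Integrable (fun x ↦ ‖fderiv ℝ w x‖ ^ 2) μ) :
    ∫ x, ‖fderiv ℝ (η ⋆[lsmul ℝ ℝ, μ] w) x‖ ^ 2 ∂μ ≤ ∫ x, ‖fderiv ℝ w x‖ ^ 2 ∂μ := by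
  have hw' := (integrable_fderiv_of_integrable_norm_sq hws hint).locallyIntegrable
  have hηi : Integrable η μ := hη.continuous.integrable_of_hasCompactSupport hηs
  have hsq (x) : ‖fderiv ℝ (η ⋆[lsmul ℝ ℝ, μ] w) x‖ ^ 2 ≤
      (η ⋆[lsmul ℝ ℝ, μ] fun x ↦ ‖fderiv ℝ w x‖ ^ 2) x :=
    (pow_le_pow_left₀ (norm_nonneg _) (norm_fderiv_convolution_le hη hηs hη₀ hw hw' x) 2).trans
      (sq_integral_mul_le hη₀ hηi hη₁
        (hηs.convolutionExists_left (lsmul ℝ ℝ) hη.continuous (fun z ↦ (hw' z).norm) x)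
        (hηs.convolutionExists_left (lsmul ℝ ℝ) hη.continuous hint.locallyIntegrable x))
  calc ∫ x, ‖fderiv ℝ (η ⋆[lsmul ℝ ℝ, μ] w) x‖ ^ 2 ∂μ
      ≤ ∫ x, (η ⋆[lsmul ℝ ℝ, μ] fun x ↦ ‖fderiv ℝ w x‖ ^ 2) x ∂μ :=
        integral_mono_of_nonneg (.of_forall fun x ↦ sq_nonneg _)
          (hηi.integrable_convolution (lsmul ℝ ℝ) hint) (.of_forall hsq)
    _ = ∫ x, ‖fderiv ℝ w x‖ ^ 2 ∂μ := by
        rw [integral_convolution (lsmul ℝ ℝ) hηi hint, hη₁, ContinuousLinearMap.lsmul_apply,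
          one_smul]

variable (μ) in
lemma exists_contDiff_dist_le [HasContDiffBump E] (hw : Differentiable ℝ w)
    (hws : HasCompactSupport w) (hw₀ : ∀ x, 0 ≤ w x)
    (hint : Integrable (fun x ↦ ‖fderiv ℝ w x‖ ^ 2) μ) {δ : ℝ} (hδ : 0 < δ) :
    ∃ φ : E → ℝ, ContDiff ℝ ∞ φ ∧ HasCompactSupport φ ∧ (∀ x, 0 ≤ φ x) ∧
      (∀ x, dist (φ x) (w x) ≤ δ) ∧ ∫ x, ‖fderiv ℝ φ x‖ ^ 2 ∂μ ≤ ∫ x, ‖fderiv ℝ w x‖ ^ 2 ∂μ := by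
  obtain ⟨r, hr, hunif⟩ := Metric.uniformContinuous_iff.1
    (hws.uniformContinuous_of_continuous hw.continuous) δ hδ
  let b : ContDiffBump (0 : E) := ⟨r / 2, r, half_pos hr, half_lt_self hr⟩
  have hb : ContDiff ℝ ∞ (b.normed μ) := b.contDiff_normed
  refine ⟨b.normed μ ⋆[lsmul ℝ ℝ, μ] w,
    b.hasCompactSupport_normed.contDiff_convolution_left _ hb hw.continuous.locallyIntegrable,
    b.hasCompactSupport_normed.convolution _ hws,
    fun x ↦ integral_nonneg fun y ↦ mul_nonneg (b.nonneg_normed y) (hw₀ _),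
    fun x ↦ b.dist_normed_convolution_le hw.continuous.aestronglyMeasurable
      fun y hy ↦ (hunif hy).le,
    integral_norm_fderiv_convolution_sq_le (hb.of_le (by simp)) b.hasCompactSupport_normed
      b.nonneg_normed b.integral_normed hw hws hint⟩

end Mollification

section Cutoff

variable {E : Type*} [NormedAddCommGroup E] [NormedSpace ℝ E]

lemma norm_inv_smul_of_pos {R : ℝ} (hR : 0 < R) (x : E) : ‖R⁻¹ • x‖ = R⁻¹ * ‖x‖ := by
  rw [norm_smul, norm_inv, norm_of_nonneg hR.le]

variable [HasContDiffBump E]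

/-- A smooth cutoff at scale `R`, equal to `1` for `‖x‖ ≤ R` and to `0` for `2 * R ≤ ‖x‖`. -/
def cutoff (R : ℝ) (x : E) : ℝ :=
  (⟨1, 2, one_pos, one_lt_two⟩ : ContDiffBump (0 : E)) (R⁻¹ • x)

/-- The closed annulus `R ≤ ‖x‖ ≤ 2 * R`, which carries the gradient of `cutoff R`. -/
def annulus (E : Type*) [NormedAddCommGroup E] (R : ℝ) : Set E :=
  {x | R ≤ ‖x‖} ∩ Metric.closedBall 0 (2 * R)

lemma cutoff_nonneg (R : ℝ) (x : E) : 0 ≤ cutoff R x := ContDiffBump.nonneg _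

lemma cutoff_le_one (R : ℝ) (x : E) : cutoff R x ≤ 1 := ContDiffBump.le_one _

lemma cutoff_eq_one {R : ℝ} (hR : 0 < R) {x : E} (hx : ‖x‖ ≤ R) : cutoff R x = 1 := by
  refine ContDiffBump.one_of_mem_closedBall _ ?_
  rwa [mem_closedBall_zero_iff, norm_inv_smul_of_pos hR, inv_mul_le_iff₀ hR, mul_one]

lemma cutoff_eq_zero {R : ℝ} (hR : 0 < R) {x : E} (hx : 2 * R ≤ ‖x‖) : cutoff R x = 0 := by
  refine ContDiffBump.zero_of_le_dist _ ?_
  rwa [dist_zero_right, norm_inv_smul_of_pos hR, le_inv_mul_iff₀ hR, mul_comm]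

lemma contDiff_cutoff (R : ℝ) : ContDiff ℝ ∞ (cutoff R : E → ℝ) :=
  (ContDiffBump.contDiff _).comp (contDiff_const_smul R⁻¹)

lemma hasCompactSupport_cutoff [FiniteDimensional ℝ E] {R : ℝ} (hR : 0 < R) :
    HasCompactSupport (cutoff R : E → ℝ) :=
  (ContDiffBump.hasCompactSupport _).comp_smul (inv_ne_zero hR.ne')

lemma fderiv_cutoff_eq_zero {R : ℝ} (hR : 0 < R) {x : E} (hx : x ∉ annulus E R) :
    fderiv ℝ (cutoff R) x = 0 := by
  rw [annulus, Set.mem_inter_iff, not_and_or, Set.mem_ofPred_eq, not_le, mem_closedBall_zero_iff,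
    not_le] at hx
  rcases hx with hx | hx
  · have heq : cutoff R =ᶠ[𝓝 x] fun _ ↦ 1 := by
      filter_upwards [(isOpen_lt continuous_norm continuous_const).mem_nhds hx] with y hy
      exact cutoff_eq_one hR (le_of_lt hy)
    rw [heq.fderiv_eq, fderiv_fun_const, Pi.zero_apply]
  · have heq : cutoff R =ᶠ[𝓝 x] fun _ ↦ 0 := by
      filter_upwards [(isOpen_lt continuous_const continuous_norm).mem_nhds hx] with y hy
      exact cutoff_eq_zero hR (le_of_lt hy)
    rw [heq.fderiv_eq, fderiv_fun_const, Pi.zero_apply]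

variable (E) in
lemma exists_norm_fderiv_cutoff_le [FiniteDimensional ℝ E] :
    ∃ C, ∀ R > 0, ∀ x : E, ‖fderiv ℝ (cutoff R) x‖ ≤ C * R⁻¹ := by
  let b : ContDiffBump (0 : E) := ⟨1, 2, one_pos, one_lt_two⟩
  have hb : ContDiff ℝ 1 b := b.contDiff
  obtain ⟨C, hC⟩ := (hb.continuous_fderiv one_ne_zero).bounded_above_of_compact_support
    (b.hasCompactSupport.fderiv ℝ)
  refine ⟨C, fun R hR x ↦ ?_⟩
  have hderiv : fderiv ℝ (cutoff R) x = R⁻¹ • fderiv ℝ b (R⁻¹ • x) := fderiv_comp_smul R⁻¹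
  rw [hderiv, norm_smul, norm_inv, norm_of_nonneg hR.le, mul_comm]
  exact mul_le_mul_of_nonneg_right (hC _) (by positivity)

lemma norm_fderiv_cutoff_mul_sq_le {u : E → ℝ} {x : E} (hu : DifferentiableAt ℝ u x)
    {R C ε : ℝ} (hR : 0 < R) (hC : ‖fderiv ℝ (cutoff R) x‖ ≤ C * R⁻¹) (hε : 0 < ε) :
    ‖fderiv ℝ (fun x ↦ cutoff R x * u x) x‖ ^ 2 ≤ (1 + ε) * ‖fderiv ℝ u x‖ ^ 2 +
      (1 + ε⁻¹) * (C * R⁻¹) ^ 2 * (annulus E R).indicator (fun x ↦ u x ^ 2) x := by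
  set a := ‖fderiv ℝ u x‖
  set b := |u x| * ‖fderiv ℝ (cutoff R) x‖
  have hχ : DifferentiableAt ℝ (cutoff R) x :=
    (contDiff_cutoff R).differentiable (by simp) x
  have hab : ‖fderiv ℝ (fun x ↦ cutoff R x * u x) x‖ ≤ a + b := by
    rw [fderiv_fun_mul hχ hu]
    refine (norm_add_le _ _).trans ?_
    rw [norm_smul, norm_smul, norm_of_nonneg (cutoff_nonneg R x), norm_eq_abs]
    gcongr
    exact mul_le_of_le_one_left (norm_nonneg _) (cutoff_le_one R x)
  have hyoung : (a + b) ^ 2 ≤ (1 + ε) * a ^ 2 + (1 + ε⁻¹) * b ^ 2 := by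
    have : 0 ≤ ε⁻¹ * (ε * a - b) ^ 2 := by positivity
    have : ε⁻¹ * (ε * a - b) ^ 2 = ε * a ^ 2 - 2 * a * b + ε⁻¹ * b ^ 2 := by
      field_simp
      ring
    linarith
  have hb : b ^ 2 ≤ (C * R⁻¹) ^ 2 * (annulus E R).indicator (fun x ↦ u x ^ 2) x := by
    by_cases hx : x ∈ annulus E R
    · rw [Set.indicator_of_mem hx, mul_pow, sq_abs, mul_comm]
      gcongr
    · simp [b, fderiv_cutoff_eq_zero hR hx, Set.indicator_of_notMem hx]
  calc _ ≤ (a + b) ^ 2 := pow_le_pow_left₀ (norm_nonneg _) hab 2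
    _ ≤ (1 + ε) * a ^ 2 + (1 + ε⁻¹) * b ^ 2 := hyoung
    _ ≤ _ := by
      rw [mul_assoc (1 + ε⁻¹)]
      gcongr

end Cutoff

section Truncation

variable {E : Type*} [NormedAddCommGroup E] [MeasurableSpace E] [BorelSpace E] {μ : Measure E}

lemma measurableSet_annulus (R : ℝ) : MeasurableSet (annulus E R) :=
  (measurableSet_le measurable_const measurable_norm).inter measurableSet_closedBall

lemma tendsto_setIntegral_le_norm_atTop {g : E → ℝ} (hg : Integrable g μ) :
    Tendsto (fun R : ℝ ↦ ∫ x in {x | R ≤ ‖x‖}, g x ∂μ) atTop (𝓝 0) := by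
  have hempty : ⋂ R : ℝ, {x : E | R ≤ ‖x‖} = ∅ :=
    Set.eq_empty_of_forall_notMem fun x hx ↦
      (lt_add_one ‖x‖).not_ge (Set.mem_iInter.1 hx (‖x‖ + 1))
  have h := tendsto_setIntegral_of_antitone (μ := μ) (f := g) (s := fun R : ℝ ↦ {x : E | R ≤ ‖x‖})
    (fun R ↦ measurableSet_le measurable_const measurable_norm)
    (fun R R' hR x hx ↦ hR.trans hx) ⟨0, hg.integrableOn⟩
  simpa only [hempty, setIntegral_empty] using h

variable {k : ℕ} {u : E → ℝ}

lemma sq_rpow_sobolev_exponent {a : ℝ} (ha : 0 ≤ a) :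
    (a ^ 2) ^ (((k : ℝ) + 2) / k) = a ^ (2 * ((k : ℝ) + 2) / k) := by
  rw [← rpow_natCast, ← rpow_mul ha]
  congr 1
  push_cast
  ring

lemma memLp_sq_of_integrable_rpow (hk : k ≠ 0) (hu : Continuous u) (hu₀ : ∀ x, 0 ≤ u x)
    (hint : Integrable (fun x ↦ u x ^ (2 * ((k : ℝ) + 2) / k)) μ) :
    MemLp (fun x ↦ u x ^ 2) (ENNReal.ofReal (((k : ℝ) + 2) / k)) μ := by
  have hpos : 0 < ((k : ℝ) + 2) / k := by positivity
  rw [← integrable_norm_rpow_iff (by fun_prop) (by simpa using hpos) ENNReal.ofReal_ne_top,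
    ENNReal.toReal_ofReal hpos.le]
  simpa only [norm_of_nonneg (sq_nonneg (u _)), sq_rpow_sobolev_exponent (hu₀ _)] using hint

variable [NormedSpace ℝ E] [FiniteDimensional ℝ E] [μ.IsAddHaarMeasure]

lemma inv_sq_mul_measureReal_annulus_rpow_le (hE : finrank ℝ E = k + 2) {R : ℝ} (hR : 0 < R) :
    R⁻¹ ^ 2 * μ.real (annulus E R) ^ ((2 : ℝ) / (k + 2)) ≤
      4 * μ.real (Metric.ball 0 1) ^ ((2 : ℝ) / (k + 2)) := by
  have hvol : μ.real (annulus E R) ≤ (2 * R) ^ (k + 2) * μ.real (Metric.ball 0 1) := by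
    rw [← hE, ← Measure.addHaar_real_closedBall μ 0 (by positivity)]
    exact measureReal_mono Set.inter_subset_right measure_closedBall_lt_top.ne
  have hroot : ((2 * R) ^ (k + 2)) ^ ((2 : ℝ) / (k + 2)) = (2 * R) ^ 2 := by
    rw [← rpow_natCast, ← rpow_mul (by positivity), ← rpow_natCast (2 * R) 2]
    congr 1
    push_cast
    field_simp
  calc R⁻¹ ^ 2 * μ.real (annulus E R) ^ ((2 : ℝ) / (k + 2))
      ≤ R⁻¹ ^ 2 * ((2 * R) ^ (k + 2) * μ.real (Metric.ball 0 1)) ^ ((2 : ℝ) / (k + 2)) := by gcongr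
    _ = 4 * μ.real (Metric.ball 0 1) ^ ((2 : ℝ) / (k + 2)) := by
        rw [mul_rpow (by positivity) measureReal_nonneg, hroot]
        field_simp
        ring

lemma inv_sq_mul_setIntegral_annulus_sq_le (hk : k ≠ 0) (hE : finrank ℝ E = k + 2)
    (hu : Continuous u) (hu₀ : ∀ x, 0 ≤ u x)
    (hint : Integrable (fun x ↦ u x ^ (2 * ((k : ℝ) + 2) / k)) μ) {R : ℝ} (hR : 0 < R) :
    R⁻¹ ^ 2 * ∫ x in annulus E R, u x ^ 2 ∂μ ≤
      4 * μ.real (Metric.ball 0 1) ^ ((2 : ℝ) / (k + 2)) *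
        (∫ x in {x | R ≤ ‖x‖}, u x ^ (2 * ((k : ℝ) + 2) / k) ∂μ) ^ ((k : ℝ) / (k + 2)) := by
  set T := ∫ x in {x | R ≤ ‖x‖}, u x ^ (2 * ((k : ℝ) + 2) / k) ∂μ
  have hpq : (((k : ℝ) + 2) / k).HolderConjugate (((k : ℝ) + 2) / 2) := by
    rw [holderConjugate_iff]
    constructor
    · rw [lt_div_iff₀ (by positivity)]
      linarith
    · field_simp
  have : IsFiniteMeasure (μ.restrict (annulus E R)) :=
    ⟨by simpa [annulus] using
      (measure_mono Set.inter_subset_right).trans_lt measure_closedBall_lt_top⟩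
  have hholder := integral_mul_le_Lp_mul_Lq_of_nonneg (μ := μ.restrict (annulus E R)) hpq
    (.of_forall fun x ↦ sq_nonneg (u x)) (.of_forall fun _ ↦ zero_le_one)
    (memLp_sq_of_integrable_rpow hk hu hu₀ hint.integrableOn) (memLp_const 1)
  simp only [mul_one, one_rpow, sq_rpow_sobolev_exponent (hu₀ _), integral_const, smul_eq_mul,
    one_div_div, measureReal_restrict_apply_univ] at hholder
  have htail : ∫ x in annulus E R, u x ^ (2 * ((k : ℝ) + 2) / k) ∂μ ≤ T :=
    setIntegral_mono_set hint.integrableOn (.of_forall fun x ↦ rpow_nonneg (hu₀ x) _)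
      Set.inter_subset_left.eventuallyLE
  have hnonneg : 0 ≤ ∫ x in annulus E R, u x ^ (2 * ((k : ℝ) + 2) / k) ∂μ :=
    integral_nonneg fun x ↦ rpow_nonneg (hu₀ x) _
  calc R⁻¹ ^ 2 * ∫ x in annulus E R, u x ^ 2 ∂μ
      ≤ R⁻¹ ^ 2 * (T ^ ((k : ℝ) / (k + 2)) * μ.real (annulus E R) ^ ((2 : ℝ) / (k + 2))) := by
        refine mul_le_mul_of_nonneg_left (hholder.trans ?_) (by positivity)
        gcongr
    _ = R⁻¹ ^ 2 * μ.real (annulus E R) ^ ((2 : ℝ) / (k + 2)) * T ^ ((k : ℝ) / (k + 2)) := by ring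
    _ ≤ _ := mul_le_mul_of_nonneg_right (inv_sq_mul_measureReal_annulus_rpow_le hE hR)
        (rpow_nonneg (hnonneg.trans htail) _)

lemma integral_norm_fderiv_cutoff_mul_sq_le [HasContDiffBump E] (hu : Differentiable ℝ u)
    (hint : Integrable (fun x ↦ ‖fderiv ℝ u x‖ ^ 2) μ) {R C ε : ℝ} (hR : 0 < R)
    (hC : ∀ x : E, ‖fderiv ℝ (cutoff R) x‖ ≤ C * R⁻¹) (hε : 0 < ε) :
    Integrable (fun x ↦ ‖fderiv ℝ (fun x ↦ cutoff R x * u x) x‖ ^ 2) μ ∧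
      ∫ x, ‖fderiv ℝ (fun x ↦ cutoff R x * u x) x‖ ^ 2 ∂μ ≤ (1 + ε) * ∫ x, ‖fderiv ℝ u x‖ ^ 2 ∂μ +
        (1 + ε⁻¹) * C ^ 2 * (R⁻¹ ^ 2 * ∫ x in annulus E R, u x ^ 2 ∂μ) := by
  have hsq : IntegrableOn (fun x ↦ u x ^ 2) (annulus E R) μ :=
    ((hu.continuous.pow 2).continuousOn.integrableOn_compact
      (isCompact_closedBall (0 : E) (2 * R))).mono_set Set.inter_subset_right
  have hannulus := ((integrable_indicator_iff (measurableSet_annulus R)).2 hsq).const_mul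
    ((1 + ε⁻¹) * (C * R⁻¹) ^ 2)
  have hbound := (hint.const_mul (1 + ε)).add hannulus
  have hle (x) := norm_fderiv_cutoff_mul_sq_le (hu x) hR (hC x) hε
  have hcut : Integrable (fun x ↦ ‖fderiv ℝ (fun x ↦ cutoff R x * u x) x‖ ^ 2) μ :=
    hbound.mono' ((measurable_fderiv ℝ _).norm.pow_const 2).aestronglyMeasurable
      (.of_forall fun x ↦ by simpa only [norm_pow, norm_norm, Pi.add_apply] using hle x)
  refine ⟨hcut, (integral_mono hcut hbound hle).trans_eq ?_⟩
  rw [integral_add' (hint.const_mul (1 + ε)) hannulus, integral_const_mul, integral_const_mul,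
    integral_indicator (measurableSet_annulus R)]
  ring

lemma eventually_integral_norm_fderiv_cutoff_mul_sq_le [HasContDiffBump E] (hk : k ≠ 0)
    (hE : finrank ℝ E = k + 2) (hu : Differentiable ℝ u) (hu₀ : ∀ x, 0 ≤ u x)
    (hint : Integrable (fun x ↦ ‖fderiv ℝ u x‖ ^ 2) μ)
    (hint' : Integrable (fun x ↦ u x ^ (2 * ((k : ℝ) + 2) / k)) μ) {δ : ℝ} (hδ : 0 < δ) :
    ∀ᶠ R in atTop, Integrable (fun x ↦ ‖fderiv ℝ (fun x ↦ cutoff R x * u x) x‖ ^ 2) μ ∧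
      ∫ x, ‖fderiv ℝ (fun x ↦ cutoff R x * u x) x‖ ^ 2 ∂μ ≤
        ∫ x, ‖fderiv ℝ u x‖ ^ 2 ∂μ + δ := by
  obtain ⟨C, hC⟩ := exists_norm_fderiv_cutoff_le E
  set G := ∫ x, ‖fderiv ℝ u x‖ ^ 2 ∂μ
  have hG : 0 ≤ G := integral_nonneg fun x ↦ sq_nonneg _
  set ε := δ / (2 * (G + 1))
  have hε : 0 < ε := by positivity
  have hεG : ε * G ≤ δ / 2 := by
    rw [show δ / 2 = ε * (G + 1) by simp only [ε]; field_simp]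
    gcongr
    linarith
  have htendsto : Tendsto (fun R : ℝ ↦ (1 + ε⁻¹) * C ^ 2 *
      (4 * μ.real (Metric.ball 0 1) ^ ((2 : ℝ) / (k + 2)) *
        (∫ x in {x | R ≤ ‖x‖}, u x ^ (2 * ((k : ℝ) + 2) / k) ∂μ) ^ ((k : ℝ) / (k + 2))))
      atTop (𝓝 0) := by
    have := (tendsto_setIntegral_le_norm_atTop hint').rpow_const (p := (k : ℝ) / (k + 2))
      (Or.inr (by positivity))
    rw [zero_rpow (by positivity)] at this
    simpa using (this.const_mul _).const_mul _
  filter_upwards [eventually_gt_atTop 0, htendsto.eventually_lt_const (half_pos hδ)] with R hR htail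
  obtain ⟨hcut, hle⟩ := integral_norm_fderiv_cutoff_mul_sq_le hu hint hR (hC R hR) hε
  have hann := mul_le_mul_of_nonneg_left
    (inv_sq_mul_setIntegral_annulus_sq_le hk hE hu.continuous hu₀ hint' hR)
    (show 0 ≤ (1 + ε⁻¹) * C ^ 2 by positivity)
  exact ⟨hcut, by linarith⟩

theorem exists_contDiff_tendsto [HasContDiffBump E] (hk : k ≠ 0) (hE : finrank ℝ E = k + 2)
    (hu : Differentiable ℝ u) (hu₀ : ∀ x, 0 ≤ u x)
    (hint : Integrable (fun x ↦ ‖fderiv ℝ u x‖ ^ 2) μ)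
    (hint' : Integrable (fun x ↦ u x ^ (2 * ((k : ℝ) + 2) / k)) μ) :
    ∃ φ : ℕ → E → ℝ, (∀ j, ContDiff ℝ ∞ (φ j) ∧ HasCompactSupport (φ j) ∧ ∀ x, 0 ≤ φ j x) ∧
      (∀ x, Tendsto (φ · x) atTop (𝓝 (u x))) ∧
      ∀ j : ℕ, ∫ x, ‖fderiv ℝ (φ j) x‖ ^ 2 ∂μ ≤ ∫ x, ‖fderiv ℝ u x‖ ^ 2 ∂μ + 1 / (j + 1) := by
  have happrox (j : ℕ) : ∃ φ : E → ℝ, ContDiff ℝ ∞ φ ∧ HasCompactSupport φ ∧ (∀ x, 0 ≤ φ x) ∧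
      (∀ x, ‖x‖ ≤ j → dist (φ x) (u x) ≤ 1 / (j + 1)) ∧
      ∫ x, ‖fderiv ℝ φ x‖ ^ 2 ∂μ ≤ ∫ x, ‖fderiv ℝ u x‖ ^ 2 ∂μ + 1 / (j + 1) := by
    have hδ : 0 < 1 / ((j : ℝ) + 1) := by positivity
    obtain ⟨R, ⟨hcut, hle⟩, hR, hjR⟩ := ((eventually_integral_norm_fderiv_cutoff_mul_sq_le hk hE hu
      hu₀ hint hint' hδ).and ((eventually_gt_atTop 0).and (eventually_ge_atTop (j : ℝ)))).exists
    obtain ⟨φ, hφ, hφs, hφ₀, hdist, hφle⟩ := exists_contDiff_dist_le μ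
      (((contDiff_cutoff R).differentiable (by simp)).mul hu)
      (hasCompactSupport_cutoff hR).mul_right
      (fun x ↦ mul_nonneg (cutoff_nonneg R x) (hu₀ x)) hcut hδ
    refine ⟨φ, hφ, hφs, hφ₀, fun x hx ↦ ?_, hφle.trans hle⟩
    simpa only [Pi.mul_apply, cutoff_eq_one hR (hx.trans hjR), one_mul] using hdist x
  choose φ hφ hφs hφ₀ hdist hφle using happrox
  refine ⟨φ, fun j ↦ ⟨hφ j, hφs j, hφ₀ j⟩, fun x ↦ tendsto_iff_dist_tendsto_zero.2 ?_, hφle⟩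
  refine squeeze_zero' (.of_forall fun j ↦ dist_nonneg) ?_ tendsto_one_div_add_atTop_nhds_zero_nat
  filter_upwards [eventually_ge_atTop ⌈‖x‖⌉₊] with j hj
  exact hdist j x (Nat.ceil_le.1 hj)

end Truncation

section Limit

variable {α : Type*} [MeasurableSpace α] {μ : Measure α}

lemma lintegral_ofReal_rpow_le_of_tendsto {p : ℝ} (hp : 0 ≤ p) {φ : ℕ → α → ℝ} {u : α → ℝ}
    (hφ : ∀ j, Measurable (φ j)) (hlim : ∀ x, Tendsto (φ · x) atTop (𝓝 (u x)))
    {B : ℝ≥0∞} {b : ℕ → ℝ≥0∞} (hb : Tendsto b atTop (𝓝 B))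
    (hle : ∀ j, ∫⁻ x, ENNReal.ofReal (φ j x ^ p) ∂μ ≤ b j) :
    ∫⁻ x, ENNReal.ofReal (u x ^ p) ∂μ ≤ B := by
  have hliminf (x) : liminf (fun j ↦ ENNReal.ofReal (φ j x ^ p)) atTop = ENNReal.ofReal (u x ^ p) :=
    (ENNReal.tendsto_ofReal ((hlim x).rpow_const (Or.inr hp))).liminf_eq
  calc ∫⁻ x, ENNReal.ofReal (u x ^ p) ∂μ
      = ∫⁻ x, liminf (fun j ↦ ENNReal.ofReal (φ j x ^ p)) atTop ∂μ := by simp only [hliminf]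
    _ ≤ liminf (fun j ↦ ∫⁻ x, ENNReal.ofReal (φ j x ^ p) ∂μ) atTop :=
        lintegral_liminf_le fun j ↦ ((hφ j).pow_const p).ennreal_ofReal
    _ ≤ liminf b atTop := liminf_le_liminf (.of_forall hle)
    _ = B := hb.liminf_eq

end Limit

theorem lintegral_ofReal_rpow_le_of_forall_contDiff {E : Type*} [NormedAddCommGroup E]
    [NormedSpace ℝ E] [FiniteDimensional ℝ E] [HasContDiffBump E] [MeasurableSpace E] [BorelSpace E]
    {μ ν : Measure E} [μ.IsAddHaarMeasure] {k : ℕ} (hk : k ≠ 0) (hE : finrank ℝ E = k + 2)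
    {p A c : ℝ} (hp : 0 ≤ p) (hA : 0 ≤ A) (hc : 0 ≤ c)
    (hsmooth : ∀ φ : E → ℝ, ContDiff ℝ ∞ φ → HasCompactSupport φ → (∀ x, 0 ≤ φ x) →
      ∫⁻ x, ENNReal.ofReal (φ x ^ p) ∂ν ≤ ENNReal.ofReal (A * (∫ x, ‖fderiv ℝ φ x‖ ^ 2 ∂μ) ^ c))
    {u : E → ℝ} (hu : Differentiable ℝ u) (hu₀ : ∀ x, 0 ≤ u x)
    (hint : Integrable (fun x ↦ ‖fderiv ℝ u x‖ ^ 2) μ)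
    (hint' : Integrable (fun x ↦ u x ^ (2 * ((k : ℝ) + 2) / k)) μ) :
    ∫⁻ x, ENNReal.ofReal (u x ^ p) ∂ν ≤ ENNReal.ofReal (A * (∫ x, ‖fderiv ℝ u x‖ ^ 2 ∂μ) ^ c) := by
  obtain ⟨φ, hφ, hlim, hle⟩ := exists_contDiff_tendsto hk hE hu hu₀ hint hint'
  have hbound : Tendsto (fun j : ℕ ↦ ENNReal.ofReal
      (A * (∫ x, ‖fderiv ℝ u x‖ ^ 2 ∂μ + 1 / ((j : ℝ) + 1)) ^ c)) atTop
      (𝓝 (ENNReal.ofReal (A * (∫ x, ‖fderiv ℝ u x‖ ^ 2 ∂μ) ^ c))) := by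
    refine ENNReal.tendsto_ofReal (Tendsto.const_mul _ (Tendsto.rpow_const ?_ (Or.inr hc)))
    simpa using tendsto_one_div_add_atTop_nhds_zero_nat.const_add (∫ x, ‖fderiv ℝ u x‖ ^ 2 ∂μ)
  refine lintegral_ofReal_rpow_le_of_tendsto hp (fun j ↦ (hφ j).1.continuous.measurable) hlim hbound
    fun j ↦ (hsmooth _ (hφ j).1 (hφ j).2.1 (hφ j).2.2).trans (ENNReal.ofReal_le_ofReal ?_)
  gcongr
  exact hle j

/-! ### The Fourier transform of a gradient and of a Gaussian average -/

section Fourier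

open FourierTransform SchwartzMap LineDeriv

variable {V : Type*} [NormedAddCommGroup V] [InnerProductSpace ℝ V]

lemma sum_sq_apply_orthonormalBasis [FiniteDimensional ℝ V] {ι : Type*} [Fintype ι]
    (e : OrthonormalBasis ι ℝ V) (L : V →L[ℝ] ℝ) : ∑ i, L (e i) ^ 2 = ‖L‖ ^ 2 := by
  obtain ⟨a, rfl⟩ := (InnerProductSpace.toDual ℝ V).surjective L
  simpa using e.sum_sq_norm_inner_left a

/-- The Fourier transform of `ξ ↦ exp (-b * ‖ξ‖ ^ 2)`: the heat kernel at time `b / (4 * π ^ 2)`. -/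
def gaussianKernel (b : ℝ) (z : V) : ℝ :=
  (π / b) ^ ((finrank ℝ V : ℝ) / 2) * exp (-π ^ 2 * ‖z‖ ^ 2 / b)

lemma gaussianKernel_nonneg {b : ℝ} (hb : 0 < b) (z : V) : 0 ≤ gaussianKernel b z := by
  unfold gaussianKernel
  positivity

@[fun_prop]
lemma measurable_gaussianKernel [MeasurableSpace V] [OpensMeasurableSpace V] :
    Measurable fun q : ℝ × V ↦ gaussianKernel q.1 q.2 := by
  unfold gaussianKernel
  fun_prop

variable [FiniteDimensional ℝ V] [MeasurableSpace V] [BorelSpace V] {f g : V → ℂ}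

lemma continuous_fourier (hf : Integrable f) : Continuous (𝓕 f) :=
  VectorFourier.fourierIntegral_continuous continuous_fourierChar continuous_inner hf

lemma integral_fourier_mul_eq (hf : Integrable f) (hg : Integrable g) :
    ∫ ξ, 𝓕 f ξ * g ξ = ∫ x, f x * 𝓕 g x := by
  simpa using! VectorFourier.integral_fourierIntegral_smul_eq_flip (L := innerₗ V)
    continuous_fourierChar continuous_inner hf hg

lemma integral_inner_fourier_eq (hf : Integrable f) (hg : Integrable g) :
    ∫ ξ, inner ℂ (𝓕 f ξ) (g ξ) = ∫ x, inner ℂ (f x) (𝓕⁻ g x) := by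
  simpa [Real.fourier_eq, Real.fourierInv_eq, VectorFourier.fourierIntegral, real_inner_comm] using!
    VectorFourier.integral_sesq_fourierIntegral_eq_neg_flip (innerSL ℂ) (L := innerₗ V)
      continuous_fourierChar continuous_inner hf hg

section Plancherel

variable {ι : Type*} [Fintype ι]

lemma sum_norm_sq_fourierInv_lineDeriv (e : OrthonormalBasis ι ℝ V) (F : 𝓢(V, ℂ)) (ξ : V) :
    ∑ i, ‖𝓕⁻ (∂_{e i} F) ξ‖ ^ 2 = (2 * π * ‖ξ‖) ^ 2 * ‖𝓕⁻ F ξ‖ ^ 2 := by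
  have hcoord (i : ι) :
      ‖𝓕⁻ (∂_{e i} F) ξ‖ ^ 2 = (2 * π) ^ 2 * ‖𝓕⁻ F ξ‖ ^ 2 * ‖inner ℝ ξ (e i)‖ ^ 2 := by
    have htemperate : (inner ℝ · (e i)).HasTemperateGrowth := by fun_prop
    rw [fourierInv_lineDerivOp_eq]
    simp [smulLeftCLM_apply_apply htemperate, mul_pow, abs_of_pos pi_pos]
    ring
  rw [Finset.sum_congr rfl fun i _ ↦ hcoord i, ← Finset.mul_sum, e.sum_sq_norm_inner_left]
  ring

lemma lintegral_sq_mul_norm_sq_fourierInv (e : OrthonormalBasis ι ℝ V) (F : 𝓢(V, ℂ)) :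
    ∫⁻ ξ, ENNReal.ofReal ((2 * π * ‖ξ‖) ^ 2 * ‖𝓕⁻ F ξ‖ ^ 2) =
      ENNReal.ofReal (∑ i, ∫ x, ‖(∂_{e i} F) x‖ ^ 2) := by
  have hint (i : ι) : Integrable fun ξ ↦ ‖𝓕⁻ (∂_{e i} F) ξ‖ ^ 2 :=
    ((𝓕⁻ (∂_{e i} F)).memLp 2 volume).integrable_norm_pow two_ne_zero
  simp_rw [← sum_norm_sq_fourierInv_lineDeriv e F]
  rw [← ofReal_integral_eq_lintegral_ofReal (integrable_finsetSum _ fun i _ ↦ hint i)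
    (.of_forall fun ξ ↦ by positivity), integral_finsetSum _ fun i _ ↦ hint i]
  congr! 2 with i
  rw [← integral_norm_sq_fourier, fourier_fourierInv_eq]

end Plancherel

lemma exists_schwartzMap_fourier_eq {φ : V → ℝ} (hφ : ContDiff ℝ ∞ φ) (hcs : HasCompactSupport φ) :
    ∃ F : 𝓢(V, ℂ), (∀ x, 𝓕 (F : V → ℂ) x = φ x) ∧
      ∫⁻ ξ, ENNReal.ofReal ((2 * π * ‖ξ‖) ^ 2 * ‖F ξ‖ ^ 2) =
        ENNReal.ofReal (∫ x, ‖fderiv ℝ φ x‖ ^ 2) := by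
  set e := stdOrthonormalBasis ℝ V
  have hcs' : HasCompactSupport fun x ↦ (φ x : ℂ) := hcs.comp_left Complex.ofReal_zero
  set Φ : 𝓢(V, ℂ) := hcs'.toSchwartzMap (Complex.ofRealCLM.contDiff.comp hφ)
  have hΦ (x : V) : Φ x = φ x := rfl
  have hderiv (x v : V) : ‖(∂_{v} Φ) x‖ ^ 2 = fderiv ℝ φ x v ^ 2 := by
    have h : HasFDerivAt Φ (Complex.ofRealCLM.comp (fderiv ℝ φ x)) x :=
      Complex.ofRealCLM.hasFDerivAt.comp x (hφ.differentiable (by simp) x).hasFDerivAt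
    simp [lineDerivOp_apply_eq_fderiv, h.fderiv]
  have hint (v : V) : Integrable fun x ↦ fderiv ℝ φ x v ^ 2 := by
    have := hφ.continuous_fderiv (by simp)
    exact (by fun_prop : Continuous _).integrable_of_hasCompactSupport
      ((hcs.fderiv (𝕜 := ℝ)).comp_left (g := fun L : V →L[ℝ] ℝ ↦ L v ^ 2) (by simp))
  refine ⟨𝓕⁻ Φ, fun x ↦ by rw [← fourier_coe, fourier_fourierInv_eq, hΦ], ?_⟩
  simp_rw [lintegral_sq_mul_norm_sq_fourierInv e, hderiv, ← sum_sq_apply_orthonormalBasis e,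
    integral_finsetSum _ fun i _ ↦ hint (e i)]

lemma fourier_gaussian_mul_character {b : ℝ} (hb : 0 < b) (x y : V) :
    𝓕 (fun ξ : V ↦ Complex.exp (-b * ‖ξ‖ ^ 2 + 2 * π * Complex.I * (inner ℝ x ξ : ℝ))) y =
      (gaussianKernel b (x - y) : ℝ) := by
  rw [fourier_gaussian_innerProductSpace' (by simpa using hb), gaussianKernel, Complex.ofReal_mul,
    Complex.ofReal_cpow (by positivity)]
  push_cast
  rfl

lemma fourierInv_fourier_mul_gaussian (hf : Integrable f) {b : ℝ} (hb : 0 < b) (x : V) :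
    𝓕⁻ (fun ξ ↦ 𝓕 f ξ * Complex.exp (-b * ‖ξ‖ ^ 2)) x =
      ∫ y, f y * (gaussianKernel b (x - y) : ℝ) := by
  simp_rw [← fourier_gaussian_mul_character hb]
  rw [← integral_fourier_mul_eq hf
    (GaussianFourier.integrable_cexp_neg_mul_sq_norm_add (by simpa using hb) _ _),
    Real.fourierInv_eq']
  congr! 2 with ξ
  rw [smul_eq_mul, Complex.exp_add, real_inner_comm]
  push_cast
  ring_nf

lemma integrable_fourier_mul_gaussian (hf : Integrable f) {b : ℝ} (hb : 0 < b) :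
    Integrable fun ξ ↦ 𝓕 f ξ * Complex.exp (-b * ‖ξ‖ ^ 2) := by
  have hgauss : Integrable fun ξ : V ↦ Complex.exp (-b * ‖ξ‖ ^ 2) := by
    simpa using GaussianFourier.integrable_cexp_neg_mul_sq_norm_add (V := V) (b := b)
      (by simpa using hb) 0 0
  exact hgauss.bdd_mul (continuous_fourier hf).aestronglyMeasurable
    (.of_forall fun ξ ↦ VectorFourier.norm_fourierIntegral_le_integral_norm ..)

lemma integral_norm_sq_fourier_mul_gaussian (hf : Integrable f) {b : ℝ} (hb : 0 < b) :
    ∫ ξ, ((‖𝓕 f ξ‖ ^ 2 * exp (-b * ‖ξ‖ ^ 2) : ℝ) : ℂ) =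
      ∫ x, inner ℂ (f x) (∫ y, f y * (gaussianKernel b (x - y) : ℝ)) := by
  simp_rw [← fourierInv_fourier_mul_gaussian hf hb]
  rw [← integral_inner_fourier_eq hf (integrable_fourier_mul_gaussian hf hb)]
  congr! 2 with ξ
  rw [RCLike.inner_apply, mul_right_comm, Complex.mul_conj, Complex.normSq_eq_norm_sq]
  push_cast
  rfl

lemma lintegral_norm_sq_fourier_mul_gaussian_le (hf : Integrable f) {b : ℝ} (hb : 0 < b) :
    ∫⁻ ξ, ENNReal.ofReal (‖𝓕 f ξ‖ ^ 2 * exp (-b * ‖ξ‖ ^ 2)) ≤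
      ∫⁻ x, ‖f x‖ₑ * ∫⁻ y, ENNReal.ofReal (gaussianKernel b (x - y)) * ‖f y‖ₑ := by
  have hint : Integrable fun ξ ↦ ‖𝓕 f ξ‖ ^ 2 * exp (-b * ‖ξ‖ ^ 2) := by
    have hbound : ∀ ξ, ‖‖𝓕 f ξ‖‖ ≤ ∫ x, ‖f x‖ := fun ξ ↦ by
      simpa using! VectorFourier.norm_fourierIntegral_le_integral_norm ..
    have := ((integrable_fourier_mul_gaussian hf hb).norm.bdd_mul
      (continuous_fourier hf).norm.aestronglyMeasurable (.of_forall hbound))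
    simpa [Complex.norm_exp, sq, mul_assoc, ← Complex.ofReal_pow] using this
  rw [← ofReal_integral_eq_lintegral_ofReal hint (.of_forall fun ξ ↦ by positivity)]
  calc ENNReal.ofReal (∫ ξ, ‖𝓕 f ξ‖ ^ 2 * exp (-b * ‖ξ‖ ^ 2))
      ≤ ‖∫ ξ, ‖𝓕 f ξ‖ ^ 2 * exp (-b * ‖ξ‖ ^ 2)‖ₑ := by
        rw [← ofReal_norm]
        exact ENNReal.ofReal_le_ofReal (le_abs_self _)
    _ = ‖∫ x, inner ℂ (f x) (∫ y, f y * (gaussianKernel b (x - y) : ℝ))‖ₑ := by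
        rw [← integral_norm_sq_fourier_mul_gaussian hf hb, integral_complex_ofReal,
          ← ofReal_norm, ← ofReal_norm, Complex.norm_real]
    _ ≤ ∫⁻ x, ‖inner ℂ (f x) (∫ y, f y * (gaussianKernel b (x - y) : ℝ))‖ₑ :=
        enorm_integral_le_lintegral_enorm _
    _ ≤ _ := lintegral_mono fun x ↦ by
        rw [RCLike.inner_apply, enorm_mul, RCLike.enorm_conj, mul_comm]
        gcongr
        refine (enorm_integral_le_lintegral_enorm _).trans_eq (lintegral_congr fun y ↦ ?_)
        rw [enorm_mul, mul_comm, ← ofReal_norm (gaussianKernel b _ : ℂ),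
          Complex.norm_of_nonneg (gaussianKernel_nonneg hb _)]

end Fourier

/-! ### The Green kernel as a superposition of Gaussians -/

lemma setLIntegral_Ioi_eq_inv (f : ℝ → ℝ≥0∞) :
    ∫⁻ t in Set.Ioi (0 : ℝ), f t = ∫⁻ s in Set.Ioi (0 : ℝ), ENNReal.ofReal (s ^ 2)⁻¹ * f s⁻¹ := by
  have himage : (fun s : ℝ ↦ s⁻¹) '' Set.Ioi (0 : ℝ) = Set.Ioi 0 := by
    ext x
    simp
  have h := lintegral_image_eq_lintegral_abs_deriv_mul measurableSet_Ioi
    (fun x hx ↦ (hasDerivAt_inv (ne_of_gt hx)).hasDerivWithinAt) inv_injective.injOn f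
  rw [himage] at h
  rw [h]
  refine setLIntegral_congr_fun measurableSet_Ioi fun s _ ↦ ?_
  rw [abs_neg, abs_of_nonneg (by positivity)]

section Green

open FourierTransform SchwartzMap

variable {k : ℕ}

lemma greenKernel_nonneg (z : EuclideanSpace ℝ (Fin (k + 2))) : 0 ≤ greenKernel (k + 2) z := by
  have : 0 < Gamma (((k + 2 : ℕ) : ℝ) / 2) := Gamma_pos_of_pos (by positivity)
  have : 0 ≤ ((k + 2 : ℕ) : ℝ) - 2 := by simp
  unfold greenKernel sphereArea
  positivity

lemma greenKernel_sub_comm {n : ℕ} (x y : EuclideanSpace ℝ (Fin n)) :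
    greenKernel n (x - y) = greenKernel n (y - x) := by
  rw [greenKernel, norm_sub_rev, greenKernel]

@[fun_prop]
lemma measurable_greenKernel {n : ℕ} : Measurable (greenKernel n) := by
  unfold greenKernel
  fun_prop

lemma four_mul_pi_sq_mul_greenKernel (hk : k ≠ 0) {z : EuclideanSpace ℝ (Fin (k + 2))}
    (hz : z ≠ 0) :
    4 * π ^ 2 * greenKernel (k + 2) z =
      π ^ (((k : ℝ) + 2) / 2) * ((1 / (π * ‖z‖) ^ 2) ^ ((k : ℝ) / 2) * Gamma ((k : ℝ) / 2)) := by
  have hz₀ : 0 < ‖z‖ := norm_pos_iff.2 hz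
  have : 0 < Gamma ((k : ℝ) / 2) := Gamma_pos_of_pos (by positivity)
  have hGamma : Gamma (((k : ℝ) + 2) / 2) = k / 2 * Gamma ((k : ℝ) / 2) := by
    rw [show ((k : ℝ) + 2) / 2 = k / 2 + 1 by ring, Gamma_add_one (by positivity)]
  have hpi : π ^ (((k : ℝ) + 2) / 2) * π ^ (((k : ℝ) + 2) / 2) = π ^ 2 * π ^ (k : ℝ) := by
    rw [← rpow_natCast, ← rpow_add pi_pos, ← rpow_add pi_pos]
    congr 1
    push_cast
    ring
  have hpow : (1 / (π * ‖z‖) ^ 2) ^ ((k : ℝ) / 2) = (π ^ (k : ℝ) * ‖z‖ ^ (k : ℝ))⁻¹ := by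
    rw [one_div, inv_rpow (by positivity), ← rpow_natCast, ← rpow_mul (by positivity),
      ← mul_rpow pi_pos.le hz₀.le, Nat.cast_ofNat, mul_div_cancel₀ _ two_ne_zero]
  rw [greenKernel, sphereArea, Nat.cast_add, Nat.cast_ofNat, hGamma, hpow,
    add_sub_cancel_right, show (2 : ℝ) - (k + 2) = -k by ring, rpow_neg hz₀.le]
  field_simp
  linear_combination -4 * hpi

lemma inv_sq_mul_gaussianKernel_inv (z : EuclideanSpace ℝ (Fin (k + 2))) {s : ℝ} (hs : 0 < s) :
    (s ^ 2)⁻¹ * gaussianKernel s⁻¹ z =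
      π ^ (((k : ℝ) + 2) / 2) * (s ^ ((k : ℝ) / 2 - 1) * exp (-((π * ‖z‖) ^ 2 * s))) := by
  have hpow : s ^ (((k : ℝ) + 2) / 2) = s ^ ((k : ℝ) / 2 - 1) * s ^ 2 := by
    rw [← rpow_natCast, ← rpow_add hs]
    congr 1
    push_cast
    ring
  rw [gaussianKernel, finrank_euclideanSpace_fin, div_inv_eq_mul, div_inv_eq_mul, Nat.cast_add,
    Nat.cast_ofNat, mul_rpow pi_pos.le hs.le, hpow]
  field_simp

lemma setLIntegral_gaussianKernel (hk : k ≠ 0) {z : EuclideanSpace ℝ (Fin (k + 2))} (hz : z ≠ 0) :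
    ∫⁻ b in Set.Ioi (0 : ℝ), ENNReal.ofReal (gaussianKernel b z) =
      ENNReal.ofReal (4 * π ^ 2 * greenKernel (k + 2) z) := by
  have : 0 < ‖z‖ := norm_pos_iff.2 hz
  have hsubst : ∀ s ∈ Set.Ioi (0 : ℝ),
      ENNReal.ofReal (s ^ 2)⁻¹ * ENNReal.ofReal (gaussianKernel s⁻¹ z) =
        ENNReal.ofReal (π ^ (((k : ℝ) + 2) / 2)) *
          ENNReal.ofReal (s ^ ((k : ℝ) / 2 - 1) * exp (-((π * ‖z‖) ^ 2 * s))) := fun s hs ↦ by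
    rw [← ENNReal.ofReal_mul (by positivity), ← ENNReal.ofReal_mul (by positivity),
      inv_sq_mul_gaussianKernel_inv z hs]
  rw [setLIntegral_Ioi_eq_inv, setLIntegral_congr_fun measurableSet_Ioi hsubst,
    lintegral_const_mul' _ _ ENNReal.ofReal_ne_top,
    lintegral_rpow_mul_exp_neg_mul_Ioi (by positivity) (by positivity),
    ← ENNReal.ofReal_mul (by positivity), four_mul_pi_sq_mul_greenKernel hk hz]

lemma ofReal_mul_lintegral_greenKernel (hk : k ≠ 0)
    {f : EuclideanSpace ℝ (Fin (k + 2)) → ℝ≥0∞} (hf : Measurable f)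
    (x : EuclideanSpace ℝ (Fin (k + 2))) :
    ENNReal.ofReal (4 * π ^ 2) * ∫⁻ y, ENNReal.ofReal (greenKernel (k + 2) (x - y)) * f y =
      ∫⁻ b in Set.Ioi (0 : ℝ), ∫⁻ y, ENNReal.ofReal (gaussianKernel b (x - y)) * f y := by
  rw [lintegral_lintegral_swap, ← lintegral_const_mul' _ _ ENNReal.ofReal_ne_top]
  · refine lintegral_congr_ae ?_
    filter_upwards [Measure.ae_ne volume x] with y hy
    rw [lintegral_mul_const _ (by fun_prop), setLIntegral_gaussianKernel hk (sub_ne_zero.2 hy.symm),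
      ENNReal.ofReal_mul (p := 4 * π ^ 2) (by positivity), mul_assoc]
  · fun_prop

/-- The Dirichlet energy `∬ f(x) G(x - y) f(y) dx dy` of the potential generated by a nonnegative
density `f`. It is extended-valued so that Tonelli's theorem applies before finiteness is known. -/
def greenEnergy (n : ℕ) (f : EuclideanSpace ℝ (Fin n) → ℝ≥0∞) : ℝ≥0∞ :=
  ∫⁻ x, f x * ∫⁻ y, ENNReal.ofReal (greenKernel n (x - y)) * f y

lemma greenEnergy_mono {n : ℕ} {f g : EuclideanSpace ℝ (Fin n) → ℝ≥0∞} (h : ∀ x, f x ≤ g x) :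
    greenEnergy n f ≤ greenEnergy n g :=
  lintegral_mono fun x ↦ mul_le_mul' (h x) (lintegral_mono fun y ↦ mul_le_mul' le_rfl (h y))

lemma ofReal_mul_greenEnergy (hk : k ≠ 0) {f : EuclideanSpace ℝ (Fin (k + 2)) → ℝ≥0∞}
    (hf : Measurable f) :
    ENNReal.ofReal (4 * π ^ 2) * greenEnergy (k + 2) f =
      ∫⁻ b in Set.Ioi (0 : ℝ),
        ∫⁻ x, f x * ∫⁻ y, ENNReal.ofReal (gaussianKernel b (x - y)) * f y := by
  have : Measurable fun q : ℝ × EuclideanSpace ℝ (Fin (k + 2)) ↦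
      ∫⁻ y, ENNReal.ofReal (gaussianKernel q.1 (q.2 - y)) * f y :=
    Measurable.lintegral_prod_right (by fun_prop)
  rw [lintegral_lintegral_swap (by fun_prop), greenEnergy,
    ← lintegral_const_mul' _ _ ENNReal.ofReal_ne_top]
  refine lintegral_congr fun x ↦ ?_
  rw [mul_left_comm, ofReal_mul_lintegral_greenKernel hk hf, lintegral_const_mul _ (by fun_prop)]

/-! ### Duality between the Dirichlet integral and the Green energy -/

lemma lintegral_enorm_mul_le_weighted {α : Type*} [MeasurableSpace α] {μ : Measure α}
    {F G : α → ℂ} {r : α → ℝ} (hF : Measurable F) (hG : Measurable G) (hr : Measurable r)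
    (hr₀ : ∀ᵐ a ∂μ, 0 < r a) :
    ∫⁻ a, ‖F a * G a‖ₑ ∂μ ≤
      (∫⁻ a, ENNReal.ofReal (r a ^ 2 * ‖F a‖ ^ 2) ∂μ) ^ (1 / 2 : ℝ) *
        (∫⁻ a, ENNReal.ofReal (‖G a‖ ^ 2 * (r a)⁻¹ ^ 2) ∂μ) ^ (1 / 2 : ℝ) := by
  have hsq (s : ℝ) (z : ℂ) : ENNReal.ofReal (s ^ 2 * ‖z‖ ^ 2) = ‖s * z‖ₑ ^ (2 : ℝ) := by
    rw [← mul_pow, ← sq_abs, abs_mul, abs_norm, ← Real.norm_eq_abs, ← Complex.norm_real,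
      ← norm_mul, ENNReal.ofReal_pow (norm_nonneg _), ofReal_norm, ENNReal.rpow_ofNat]
  calc ∫⁻ a, ‖F a * G a‖ₑ ∂μ = ∫⁻ a, ‖r a * F a‖ₑ * ‖((r a)⁻¹ : ℝ) * G a‖ₑ ∂μ := by
        refine lintegral_congr_ae ?_
        filter_upwards [hr₀] with a ha
        have : (r a : ℂ) ≠ 0 := by exact_mod_cast ha.ne'
        rw [← enorm_mul]
        congr 1
        push_cast
        field_simp
    _ ≤ (∫⁻ a, ‖r a * F a‖ₑ ^ (2 : ℝ) ∂μ) ^ (1 / 2 : ℝ) *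
          (∫⁻ a, ‖((r a)⁻¹ : ℝ) * G a‖ₑ ^ (2 : ℝ) ∂μ) ^ (1 / 2 : ℝ) :=
        ENNReal.lintegral_mul_le_Lp_mul_Lq μ HolderConjugate.two_two (by fun_prop) (by fun_prop)
    _ = _ := by simp only [← hsq, mul_comm (_⁻¹ ^ 2)]

lemma setLIntegral_exp_neg_mul {r : ℝ} (hr : 0 < r) :
    ∫⁻ b in Set.Ioi (0 : ℝ), ENNReal.ofReal (exp (-b * r)) = ENNReal.ofReal r⁻¹ := by
  simpa [mul_comm r] using lintegral_rpow_mul_exp_neg_mul_Ioi one_pos hr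

lemma lintegral_norm_sq_fourier_div_le_greenEnergy (hk : k ≠ 0)
    {w : EuclideanSpace ℝ (Fin (k + 2)) → ℂ} (hm : Measurable w) (hw : Integrable w) :
    ∫⁻ ξ, ENNReal.ofReal (‖𝓕 w ξ‖ ^ 2 * (2 * π * ‖ξ‖)⁻¹ ^ 2) ≤
      greenEnergy (k + 2) fun x ↦ ‖w x‖ₑ := by
  have : Measurable (𝓕 w) := (continuous_fourier hw).measurable
  have hfour : ENNReal.ofReal (4 * π ^ 2) ≠ 0 := by simp
  rw [← ENNReal.mul_le_mul_iff_right hfour ENNReal.ofReal_ne_top,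
    ofReal_mul_greenEnergy hk hm.enorm, ← lintegral_const_mul' _ _ ENNReal.ofReal_ne_top]
  calc ∫⁻ ξ, ENNReal.ofReal (4 * π ^ 2) *
          ENNReal.ofReal (‖𝓕 w ξ‖ ^ 2 * (2 * π * ‖ξ‖)⁻¹ ^ 2) =
        ∫⁻ ξ, ∫⁻ b in Set.Ioi (0 : ℝ), ENNReal.ofReal (‖𝓕 w ξ‖ ^ 2 * exp (-b * ‖ξ‖ ^ 2)) := by
        refine lintegral_congr_ae ?_
        filter_upwards [Measure.ae_ne volume 0] with ξ hξ
        have : 0 < ‖ξ‖ := norm_pos_iff.2 hξ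
        simp_rw [ENNReal.ofReal_mul (sq_nonneg ‖𝓕 w ξ‖)]
        rw [lintegral_const_mul' _ _ ENNReal.ofReal_ne_top,
          setLIntegral_exp_neg_mul (by positivity), mul_left_comm,
          ← ENNReal.ofReal_mul (by positivity)]
        congr 2
        field_simp
        norm_num
    _ = ∫⁻ b in Set.Ioi (0 : ℝ), ∫⁻ ξ, ENNReal.ofReal (‖𝓕 w ξ‖ ^ 2 * exp (-b * ‖ξ‖ ^ 2)) :=
        lintegral_lintegral_swap (by fun_prop)
    _ ≤ _ := setLIntegral_mono' measurableSet_Ioi fun b hb ↦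
        lintegral_norm_sq_fourier_mul_gaussian_le hw hb

variable {φ : EuclideanSpace ℝ (Fin (k + 2)) → ℝ}

lemma enorm_integral_mul_le (hk : k ≠ 0) {w : EuclideanSpace ℝ (Fin (k + 2)) → ℝ}
    (hm : Measurable w) (hw : Integrable w) (hφ : ContDiff ℝ ∞ φ) (hcs : HasCompactSupport φ) :
    ‖∫ x, φ x * w x‖ₑ ≤ ENNReal.ofReal (∫ x, ‖fderiv ℝ φ x‖ ^ 2) ^ (1 / 2 : ℝ) *
      greenEnergy (k + 2) (fun x ↦ ‖w x‖ₑ) ^ (1 / 2 : ℝ) := by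
  obtain ⟨F, hF, hPlancherel⟩ := exists_schwartzMap_fourier_eq hφ hcs
  have hwC : Integrable fun x ↦ (w x : ℂ) := hw.ofReal
  have hpair : ((∫ x, φ x * w x : ℝ) : ℂ) = ∫ ξ, F ξ * 𝓕 (fun x ↦ (w x : ℂ)) ξ := by
    rw [← integral_fourier_mul_eq F.integrable hwC, ← integral_complex_ofReal]
    simp only [hF, Complex.ofReal_mul]
  have henergy := lintegral_norm_sq_fourier_div_le_greenEnergy hk (by fun_prop) hwC
  have henorm (x) : ‖(w x : ℂ)‖ₑ = ‖w x‖ₑ := by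
    rw [← ofReal_norm, ← ofReal_norm, Complex.norm_real]
  have hpos : ∀ᵐ ξ : EuclideanSpace ℝ (Fin (k + 2)), 0 < 2 * π * ‖ξ‖ := by
    filter_upwards [Measure.ae_ne volume 0] with ξ hξ
    have : 0 < ‖ξ‖ := norm_pos_iff.2 hξ
    positivity
  calc ‖∫ x, φ x * w x‖ₑ = ‖∫ ξ, F ξ * 𝓕 (fun x ↦ (w x : ℂ)) ξ‖ₑ := by
        rw [← hpair, ← ofReal_norm, ← ofReal_norm, Complex.norm_real]
    _ ≤ ∫⁻ ξ, ‖F ξ * 𝓕 (fun x ↦ (w x : ℂ)) ξ‖ₑ := enorm_integral_le_lintegral_enorm _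
    _ ≤ _ := lintegral_enorm_mul_le_weighted F.continuous.measurable
        (continuous_fourier hwC).measurable (by fun_prop) hpos
    _ ≤ _ := by
        rw [hPlancherel]
        gcongr
        simpa only [henorm] using henergy

lemma lintegral_ofReal_mul_le (hk : k ≠ 0) {v : EuclideanSpace ℝ (Fin (k + 2)) → ℝ}
    (hv : Continuous v) (hv₀ : ∀ x, 0 ≤ v x) (hφ : ContDiff ℝ ∞ φ) (hcs : HasCompactSupport φ)
    (hφ₀ : ∀ x, 0 ≤ φ x) :
    ∫⁻ x, ENNReal.ofReal (φ x * v x) ≤ ENNReal.ofReal (∫ x, ‖fderiv ℝ φ x‖ ^ 2) ^ (1 / 2 : ℝ) *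
      greenEnergy (k + 2) (fun x ↦ ENNReal.ofReal (v x)) ^ (1 / 2 : ℝ) := by
  set w := (tsupport φ).indicator v with hw_def
  have hmeas : MeasurableSet (tsupport φ) := (isClosed_tsupport φ).measurableSet
  have hw : Integrable w :=
    (integrable_indicator_iff hmeas).2 (hv.continuousOn.integrableOn_compact hcs)
  have hmul : ∀ x, φ x * v x = φ x * w x := fun x ↦ by
    by_cases hx : x ∈ tsupport φ
    · rw [hw_def, Set.indicator_of_mem hx]
    · rw [image_eq_zero_of_notMem_tsupport hx, zero_mul, zero_mul]
  have hint : Integrable fun x ↦ φ x * v x :=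
    (hφ.continuous.mul hv).integrable_of_hasCompactSupport hcs.mul_right
  calc ∫⁻ x, ENNReal.ofReal (φ x * v x) = ‖∫ x, φ x * w x‖ₑ := by
        simp only [← hmul]
        rw [← ofReal_integral_eq_lintegral_ofReal hint
          (.of_forall fun x ↦ mul_nonneg (hφ₀ x) (hv₀ x)), Real.enorm_of_nonneg
          (integral_nonneg fun x ↦ mul_nonneg (hφ₀ x) (hv₀ x))]
    _ ≤ _ := enorm_integral_mul_le hk (hv.measurable.indicator hmeas) hw hφ hcs
    _ ≤ _ := by
        gcongr
        refine greenEnergy_mono fun x ↦ ?_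
        rw [← Real.enorm_of_nonneg (hv₀ x)]
        exact enorm_indicator_le_enorm_self v x

end Green

/-! ### Finiteness of the Green energy -/

section Gaussian

variable {V : Type*} [NormedAddCommGroup V] [InnerProductSpace ℝ V] [FiniteDimensional ℝ V]
  [MeasurableSpace V] [BorelSpace V] {b : ℝ}

lemma lintegral_gaussianKernel_rpow (hb : 0 < b) {s : ℝ} (hs : 0 < s) :
    ∫⁻ z : V, ENNReal.ofReal (gaussianKernel b z) ^ s =
      ENNReal.ofReal ((π / b) ^ ((finrank ℝ V : ℝ) / 2 * s) *
        (b / (π * s)) ^ ((finrank ℝ V : ℝ) / 2)) := by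
  have hpow (z : V) : ENNReal.ofReal (gaussianKernel b z) ^ s =
      ENNReal.ofReal ((π / b) ^ ((finrank ℝ V : ℝ) / 2 * s)) *
        ENNReal.ofReal (exp (-(π ^ 2 * s / b) * ‖z‖ ^ 2)) := by
    rw [ENNReal.ofReal_rpow_of_nonneg (gaussianKernel_nonneg hb z) hs.le,
      ← ENNReal.ofReal_mul (by positivity), gaussianKernel,
      mul_rpow (by positivity) (by positivity), ← rpow_mul (by positivity), ← exp_mul]
    congr 3
    ring
  simp_rw [hpow]
  rw [lintegral_const_mul' _ _ ENNReal.ofReal_ne_top, lintegral_exp_neg_mul_norm_sq (by positivity),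
    ← ENNReal.ofReal_mul (by positivity)]
  congr 3
  field_simp

lemma lintegral_gaussianKernel (hb : 0 < b) :
    ∫⁻ z : V, ENNReal.ofReal (gaussianKernel b z) = 1 := by
  have h := lintegral_gaussianKernel_rpow (V := V) hb one_pos
  simp only [ENNReal.rpow_one, mul_one] at h
  rw [h, ← mul_rpow (by positivity) (by positivity), div_mul_div_cancel₀ hb.ne',
    div_self pi_ne_zero, one_rpow, ENNReal.ofReal_one]

lemma lintegral_gaussianKernel_mul_le (hb : 0 < b) {g : V → ℝ≥0∞} {c : ℝ≥0∞}
    (hg : ∀ y, g y ≤ c) (x : V) :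
    ∫⁻ y, ENNReal.ofReal (gaussianKernel b (x - y)) * g y ≤ c :=
  calc ∫⁻ y, ENNReal.ofReal (gaussianKernel b (x - y)) * g y ≤
        ∫⁻ y, ENNReal.ofReal (gaussianKernel b (x - y)) * c := by gcongr with y; exact hg y
    _ = c := by
        rw [lintegral_mul_const _ (by fun_prop),
          lintegral_sub_left_eq_self (fun z ↦ ENNReal.ofReal (gaussianKernel b z)),
          lintegral_gaussianKernel hb, one_mul]

end Gaussian

lemma setLIntegral_Ioi_le {F : ℝ → ℝ≥0∞} {t A a R : ℝ} (ht : 0 ≤ t) (hA : 0 ≤ A) (ha : 0 < a)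
    (hR : 0 < R) (hF : ∀ b, 0 < b → F b ≤ ENNReal.ofReal t)
    (hF' : ∀ b, 0 < b → F b ≤ ENNReal.ofReal (A * b ^ (-a - 1))) :
    ∫⁻ b in Set.Ioi 0, F b ≤ ENNReal.ofReal (t * R + A / a * R ^ (-a)) := by
  have hlt : -a - 1 < -1 := by linarith
  have hhead : ∫⁻ b in Set.Ioc 0 R, F b ≤ ENNReal.ofReal (t * R) :=
    calc ∫⁻ b in Set.Ioc 0 R, F b ≤ ∫⁻ _ in Set.Ioc 0 R, ENNReal.ofReal t :=
          setLIntegral_mono' measurableSet_Ioc fun b hb ↦ hF b hb.1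
      _ = ENNReal.ofReal (t * R) := by
          rw [setLIntegral_const, Real.volume_Ioc, sub_zero, ← ENNReal.ofReal_mul ht]
  have htail : ∫⁻ b in Set.Ioi R, F b ≤ ENNReal.ofReal (A / a * R ^ (-a)) :=
    calc ∫⁻ b in Set.Ioi R, F b ≤ ∫⁻ b in Set.Ioi R, ENNReal.ofReal (A * b ^ (-a - 1)) :=
          setLIntegral_mono' measurableSet_Ioi fun b hb ↦ hF' b (hR.trans hb)
      _ = ENNReal.ofReal (∫ b in Set.Ioi R, A * b ^ (-a - 1)) := by
          refine (ofReal_integral_eq_lintegral_ofReal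
            ((integrableOn_Ioi_rpow_of_lt hlt hR).const_mul A) ?_).symm
          filter_upwards [ae_restrict_mem measurableSet_Ioi] with b hb
          have : 0 < b := hR.trans hb
          positivity
      _ = ENNReal.ofReal (A / a * R ^ (-a)) := by
          rw [integral_const_mul, integral_Ioi_rpow_of_lt hlt hR, sub_add_cancel]
          congr 1
          field_simp
  rw [← Set.Ioc_union_Ioi_eq_Ioi hR.le, ENNReal.ofReal_add (by positivity) (by positivity)]
  exact (lintegral_union_le _ _ _).trans (add_le_add hhead htail)

section GreenEnergy

variable {k : ℕ}

lemma holderConjugate_sobolev (hk : k ≠ 0) :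
    (2 * ((k : ℝ) + 2) / k).HolderConjugate (2 * ((k : ℝ) + 2) / (k + 4)) := by
  have : (0 : ℝ) < k := by positivity
  rw [holderConjugate_iff, lt_div_iff₀ this]
  refine ⟨by linarith, ?_⟩
  field_simp
  ring

lemma exists_lintegral_gaussianKernel_mul_le (hk : k ≠ 0) :
    ∃ M : ℝ, 0 ≤ M ∧ ∀ b, 0 < b → ∀ g : EuclideanSpace ℝ (Fin (k + 2)) → ℝ≥0∞, Measurable g →
      ∀ x, ∫⁻ y, ENNReal.ofReal (gaussianKernel b (x - y)) * g y ≤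
        ENNReal.ofReal (M * b ^ (-((k : ℝ) / 4) - 1)) *
          (∫⁻ y, g y ^ (2 * ((k : ℝ) + 2) / (k + 4))) ^ (1 / (2 * ((k : ℝ) + 2) / (k + 4))) := by
  have hconj := holderConjugate_sobolev hk
  set s : ℝ := 2 * ((k : ℝ) + 2) / k with hs
  have : 0 < s := by positivity
  refine ⟨π ^ (((k : ℝ) + 2) / 2) * (1 / (π * s)) ^ ((k : ℝ) / 4), by positivity,
    fun b hb g hg x ↦ ?_⟩
  have hnorm : ∫⁻ y : EuclideanSpace ℝ (Fin (k + 2)),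
      ENNReal.ofReal (gaussianKernel b (x - y)) ^ s =
      ENNReal.ofReal ((π / b) ^ (((k : ℝ) + 2) / 2 * s) * (b / (π * s)) ^ (((k : ℝ) + 2) / 2)) := by
    rw [lintegral_sub_left_eq_self (fun z ↦ ENNReal.ofReal (gaussianKernel b z) ^ s),
      lintegral_gaussianKernel_rpow hb (by positivity), finrank_euclideanSpace_fin, Nat.cast_add,
      Nat.cast_ofNat]
  refine (ENNReal.lintegral_mul_le_Lp_mul_Lq volume hconj (by fun_prop) (by fun_prop)).trans_eq ?_
  rw [hnorm, ENNReal.ofReal_rpow_of_nonneg (by positivity) (by positivity)]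
  congr 2
  rw [mul_rpow (by positivity) (by positivity), ← rpow_mul (by positivity),
    ← rpow_mul (by positivity), show ((k : ℝ) + 2) / 2 * s * (1 / s) = (k + 2) / 2 by field_simp,
    show ((k : ℝ) + 2) / 2 * (1 / s) = k / 4 by rw [hs]; field_simp; norm_num,
    show b / (π * s) = 1 / (π * s) * b by ring, mul_rpow (by positivity) hb.le,
    div_rpow pi_pos.le hb.le, show -((k : ℝ) / 4) - 1 = k / 4 - (k + 2) / 2 by ring, rpow_sub hb]
  ring

/-- Hedberg's inequality: split the superposition of Gaussians at a width `R` and use the sup bound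
below `R` and the `L^p` bound above it. -/
lemma exists_lintegral_greenKernel_mul_le (hk : k ≠ 0) {N : ℝ} (hN : 0 ≤ N) :
    ∃ D : ℝ, ∀ g : EuclideanSpace ℝ (Fin (k + 2)) → ℝ≥0∞, Measurable g →
      (∫⁻ y, g y ^ (2 * ((k : ℝ) + 2) / (k + 4))) ^ (1 / (2 * ((k : ℝ) + 2) / (k + 4))) ≤
        ENNReal.ofReal N →
      ∀ t, 0 < t → (∀ y, g y ≤ ENNReal.ofReal t) → ∀ x,
        ∫⁻ y, ENNReal.ofReal (greenKernel (k + 2) (x - y)) * g y ≤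
          ENNReal.ofReal (D * t ^ ((k : ℝ) / (k + 4))) := by
  obtain ⟨M, hM, hgauss⟩ := exists_lintegral_gaussianKernel_mul_le hk
  refine ⟨1 + M * N / (k / 4), fun g hg hgN t ht hgt x ↦ ?_⟩
  have hhead : t * t ^ (-4 / ((k : ℝ) + 4)) = t ^ ((k : ℝ) / (k + 4)) := by
    nth_rewrite 1 [← rpow_one t]
    rw [← rpow_add ht]
    congr 1
    field_simp
    ring
  have htail : (t ^ (-4 / ((k : ℝ) + 4))) ^ (-((k : ℝ) / 4)) = t ^ ((k : ℝ) / (k + 4)) := by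
    rw [← rpow_mul ht.le]
    congr 1
    field_simp
  have hbound (b : ℝ) (hb : 0 < b) : ∫⁻ y, ENNReal.ofReal (gaussianKernel b (x - y)) * g y ≤
      ENNReal.ofReal (M * N * b ^ (-((k : ℝ) / 4) - 1)) := by
    rw [mul_right_comm, ENNReal.ofReal_mul (by positivity)]
    exact (hgauss b hb g hg x).trans (mul_le_mul' le_rfl hgN)
  have hone : 1 ≤ ENNReal.ofReal (4 * π ^ 2) := by
    rw [ENNReal.one_le_ofReal]
    nlinarith [pi_gt_three]
  calc ∫⁻ y, ENNReal.ofReal (greenKernel (k + 2) (x - y)) * g y ≤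
        ENNReal.ofReal (4 * π ^ 2) * ∫⁻ y, ENNReal.ofReal (greenKernel (k + 2) (x - y)) * g y :=
        le_mul_of_one_le_left' hone
    _ = _ := ofReal_mul_lintegral_greenKernel hk hg x
    _ ≤ _ := setLIntegral_Ioi_le (R := t ^ (-4 / ((k : ℝ) + 4))) ht.le (by positivity)
        (by positivity) (by positivity) (fun b hb ↦ lintegral_gaussianKernel_mul_le hb hgt x) hbound
    _ = _ := by rw [hhead, htail, add_mul, one_mul]

lemma lintegral_lintegral_le_two_mul_of_symm {α : Type*} [MeasurableSpace α] {μ : Measure α}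
    [SFinite μ] {K : α → α → ℝ≥0∞} (hK : Measurable (Function.uncurry K))
    (hsymm : ∀ x y, K x y = K y x) {v : α → ℝ} (hv : Measurable v) :
    ∫⁻ x, ∫⁻ y, K x y ∂μ ∂μ ≤
      2 * ∫⁻ x, ∫⁻ y, {y | v y ≤ v x}.indicator (K x) y ∂μ ∂μ := by
  set L : α → α → ℝ≥0∞ := fun x ↦ {y | v y ≤ v x}.indicator (K x) with hL_def
  have hL : Measurable (Function.uncurry L) :=
    hK.indicator (measurableSet_le (hv.comp measurable_snd) (hv.comp measurable_fst))
  have hle (x y : α) : K x y ≤ L x y + L y x := by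
    rcases le_total (v y) (v x) with h | h
    · exact le_add_right (by simp [hL_def, h])
    · exact le_add_left (by simp [hL_def, h, hsymm x y])
  calc ∫⁻ x, ∫⁻ y, K x y ∂μ ∂μ ≤ ∫⁻ x, ∫⁻ y, (L x y + L y x) ∂μ ∂μ := by
        gcongr with x y
        exact hle x y
    _ = (∫⁻ x, ∫⁻ y, L x y ∂μ ∂μ) + ∫⁻ x, ∫⁻ y, L y x ∂μ ∂μ := by
        rw [← lintegral_add_left hL.lintegral_prod_right]
        exact lintegral_congr fun x ↦ lintegral_add_left hL.of_uncurry_left _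
    _ = 2 * ∫⁻ x, ∫⁻ y, L x y ∂μ ∂μ := by
        rw [← lintegral_lintegral_swap hL.aemeasurable, two_mul]

variable {v : EuclideanSpace ℝ (Fin (k + 2)) → ℝ}

lemma exists_lintegral_indicator_greenKernel_le (hk : k ≠ 0) (hv : Measurable v)
    (hv₀ : ∀ x, 0 ≤ v x) (hint : Integrable fun x ↦ v x ^ (2 * ((k : ℝ) + 2) / (k + 4))) :
    ∃ D : ℝ, ∀ x, ∫⁻ y, {y | v y ≤ v x}.indicator (fun y ↦ ENNReal.ofReal (v x) *
      (ENNReal.ofReal (greenKernel (k + 2) (x - y)) * ENNReal.ofReal (v y))) y ≤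
        ENNReal.ofReal (D * v x ^ (2 * ((k : ℝ) + 2) / (k + 4))) := by
  set p : ℝ := 2 * ((k : ℝ) + 2) / (k + 4) with hp
  have hfin : (∫⁻ y, ENNReal.ofReal (v y) ^ p) ^ (1 / p) ≠ ⊤ := by
    have hlt := hint.lintegral_lt_top
    simp_rw [← ENNReal.ofReal_rpow_of_nonneg (hv₀ _) (show 0 ≤ p by positivity)] at hlt
    exact ENNReal.rpow_ne_top_of_nonneg (by positivity) hlt.ne
  obtain ⟨D, hpot⟩ := exists_lintegral_greenKernel_mul_le hk
    (N := ((∫⁻ y, ENNReal.ofReal (v y) ^ p) ^ (1 / p)).toReal) ENNReal.toReal_nonneg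
  refine ⟨D, fun x ↦ ?_⟩
  rcases (hv₀ x).eq_or_lt with hx | hx
  · simp [← hx]
  set g := {y | v y ≤ v x}.indicator fun y ↦ ENNReal.ofReal (v y)
  have hg : Measurable g := hv.ennreal_ofReal.indicator (measurableSet_le hv measurable_const)
  have hg_le (y) : g y ≤ ENNReal.ofReal (v x) :=
    Set.indicator_le' (g := fun _ ↦ ENNReal.ofReal (v x))
      (fun _ hy ↦ ENNReal.ofReal_le_ofReal hy) (fun _ _ ↦ zero_le) y
  have hg_norm : (∫⁻ y, g y ^ p) ^ (1 / p) ≤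
      ENNReal.ofReal ((∫⁻ y, ENNReal.ofReal (v y) ^ p) ^ (1 / p)).toReal := by
    rw [ENNReal.ofReal_toReal hfin]
    gcongr with y
    exact Set.indicator_le_self _ _ y
  calc _ = ENNReal.ofReal (v x) * ∫⁻ y, ENNReal.ofReal (greenKernel (k + 2) (x - y)) * g y := by
        rw [← lintegral_const_mul' _ _ ENNReal.ofReal_ne_top]
        refine lintegral_congr fun y ↦ ?_
        rw [Set.indicator_const_mul, Set.indicator_mul_right]
    _ ≤ ENNReal.ofReal (v x) * ENNReal.ofReal (D * v x ^ ((k : ℝ) / (k + 4))) :=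
        mul_le_mul' le_rfl (hpot g hg hg_norm (v x) hx hg_le x)
    _ = ENNReal.ofReal (D * v x ^ p) := by
        rw [← ENNReal.ofReal_mul (hv₀ x), show p = 1 + k / (k + 4) by rw [hp]; field_simp; ring,
          rpow_add hx, rpow_one, mul_left_comm]

lemma greenEnergy_lt_top (hk : k ≠ 0) (hv : Measurable v) (hv₀ : ∀ x, 0 ≤ v x)
    (hint : Integrable fun x ↦ v x ^ (2 * ((k : ℝ) + 2) / (k + 4))) :
    greenEnergy (k + 2) (fun x ↦ ENNReal.ofReal (v x)) < ⊤ := by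
  obtain ⟨D, hD⟩ := exists_lintegral_indicator_greenKernel_le hk hv hv₀ hint
  calc greenEnergy (k + 2) (fun x ↦ ENNReal.ofReal (v x)) =
        ∫⁻ x, ∫⁻ y, ENNReal.ofReal (v x) *
          (ENNReal.ofReal (greenKernel (k + 2) (x - y)) * ENNReal.ofReal (v y)) :=
        lintegral_congr fun x ↦ (lintegral_const_mul' _ _ ENNReal.ofReal_ne_top).symm
    _ ≤ _ := lintegral_lintegral_le_two_mul_of_symm (by fun_prop)
        (fun x y ↦ by rw [greenKernel_sub_comm]; ring) hv
    _ ≤ 2 * ∫⁻ x, ENNReal.ofReal (D * v x ^ (2 * ((k : ℝ) + 2) / (k + 4))) := by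
        gcongr with x
        exact hD x
    _ < ⊤ := ENNReal.mul_lt_top ENNReal.ofNat_lt_top (hint.const_mul D).lintegral_lt_top

lemma greenEnergy_ofReal_eq (hk : k ≠ 0) (hv : Measurable v) (hv₀ : ∀ x, 0 ≤ v x)
    (hint : Integrable fun x ↦ v x ^ (2 * ((k : ℝ) + 2) / (k + 4))) :
    greenEnergy (k + 2) (fun x ↦ ENNReal.ofReal (v x)) =
      ENNReal.ofReal (∫ x, v x * invLap (k + 2) v x) := by
  have hfin := greenEnergy_lt_top hk hv hv₀ hint
  set f : EuclideanSpace ℝ (Fin (k + 2)) → ℝ≥0∞ := fun x ↦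
    ENNReal.ofReal (v x) * ∫⁻ y, ENNReal.ofReal (greenKernel (k + 2) (x - y)) * ENNReal.ofReal (v y)
    with hf_def
  have hf : Measurable f := hv.ennreal_ofReal.mul (Measurable.lintegral_prod_right (by fun_prop))
  have htoReal (x) : v x * invLap (k + 2) v x = (f x).toReal := by
    rw [hf_def, ENNReal.toReal_mul, ENNReal.toReal_ofReal (hv₀ x), invLap,
      integral_eq_lintegral_of_nonneg_ae
        (.of_forall fun y ↦ mul_nonneg (greenKernel_nonneg _) (hv₀ y)) (by fun_prop)]
    simp_rw [ENNReal.ofReal_mul (greenKernel_nonneg _)]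
  simp_rw [htoReal]
  rw [integral_toReal hf.aemeasurable (ae_lt_top hf hfin.ne)]
  exact (ENNReal.ofReal_toReal hfin.ne).symm

end GreenEnergy

/-! ### Sharp Sobolev inequality and duality on `D^{1,2}` -/

lemma integral_mul_invLap_nonneg {d : ℕ} (hd : 2 ≤ d) {v : EuclideanSpace ℝ (Fin d) → ℝ}
    (hv₀ : ∀ x, 0 ≤ v x) : 0 ≤ ∫ x, v x * invLap d v x := by
  obtain ⟨k, rfl⟩ := Nat.exists_eq_add_of_le' hd
  exact integral_nonneg fun x ↦ mul_nonneg (hv₀ x)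
    (integral_nonneg fun y ↦ mul_nonneg (greenKernel_nonneg _) (hv₀ y))

section CriticalExponent

variable {k : ℕ} {u : EuclideanSpace ℝ (Fin (k + 2)) → ℝ}

lemma integral_norm_fderiv_sq_nonneg (φ : EuclideanSpace ℝ (Fin (k + 2)) → ℝ) :
    0 ≤ ∫ x, ‖fderiv ℝ φ x‖ ^ 2 :=
  integral_nonneg fun x ↦ by positivity

lemma sobolev_of_differentiable (hk : k ≠ 0) (hu : Differentiable ℝ u) (hu₀ : ∀ x, 0 ≤ u x)
    (hint : Integrable fun x ↦ ‖fderiv ℝ u x‖ ^ 2)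
    (hint' : Integrable fun x ↦ u x ^ (2 * ((k : ℝ) + 2) / k)) :
    (∫ x, u x ^ (2 * ((k : ℝ) + 2) / k)) ^ ((k : ℝ) / (k + 2)) ≤
      sobolevConst (k + 2) * ∫ x, ‖fderiv ℝ u x‖ ^ 2 := by
  have hS := sobolevConst_pos (show 3 ≤ k + 2 by lia)
  have hrpow (φ : EuclideanSpace ℝ (Fin (k + 2)) → ℝ) (hφ₀ : ∀ x, 0 ≤ φ x)
      (hφ : Integrable fun x ↦ φ x ^ (2 * ((k : ℝ) + 2) / k)) :
      (∫ x, φ x ^ (2 * ((k : ℝ) + 2) / k)) ^ ((k : ℝ) / (k + 2)) ≤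
          sobolevConst (k + 2) * ∫ x, ‖fderiv ℝ φ x‖ ^ 2 ↔
        ∫⁻ x, ENNReal.ofReal (φ x ^ (2 * ((k : ℝ) + 2) / k)) ≤
          ENNReal.ofReal (sobolevConst (k + 2) ^ (((k : ℝ) + 2) / k) *
            (∫ x, ‖fderiv ℝ φ x‖ ^ 2) ^ (((k : ℝ) + 2) / k)) := by
    have hT := integral_norm_fderiv_sq_nonneg φ
    rw [← ofReal_integral_eq_lintegral_ofReal hφ (.of_forall fun x ↦ rpow_nonneg (hφ₀ x) _),
      ENNReal.ofReal_le_ofReal_iff (by positivity), ← mul_rpow hS.le hT, ← inv_div ((k : ℝ) + 2) k,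
      rpow_inv_le_iff_of_pos (integral_nonneg fun x ↦ rpow_nonneg (hφ₀ x) _) (by positivity)
        (by positivity)]
  refine (hrpow u hu₀ hint').2 (lintegral_ofReal_rpow_le_of_forall_contDiff hk
    finrank_euclideanSpace_fin (by positivity) (by positivity) (by positivity)
    (fun φ hφ hcs hφ₀ ↦ (hrpow φ hφ₀ ?_).1 ?_) hu hu₀ hint hint')
  · refine Continuous.integrable_of_hasCompactSupport
      (hφ.continuous.rpow_const fun x ↦ .inr (by positivity)) ?_
    exact hcs.comp_left (g := fun r : ℝ ↦ r ^ (2 * ((k : ℝ) + 2) / k)) (zero_rpow (by positivity))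
  · exact sobolev_of_contDiff_of_hasCompactSupport hk (hφ.of_le (by norm_cast)) hcs hφ₀

lemma sq_integral_mul_le_mul_invLap (hk : k ≠ 0) (hu : Differentiable ℝ u) (hu₀ : ∀ x, 0 ≤ u x)
    (hint : Integrable fun x ↦ ‖fderiv ℝ u x‖ ^ 2)
    (hint' : Integrable fun x ↦ u x ^ (2 * ((k : ℝ) + 2) / k))
    {v : EuclideanSpace ℝ (Fin (k + 2)) → ℝ} (hv : Continuous v) (hv₀ : ∀ x, 0 ≤ v x)
    (hvint : Integrable fun x ↦ v x ^ (2 * ((k : ℝ) + 2) / (k + 4)))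
    (huv : Integrable fun x ↦ u x * v x) :
    (∫ x, u x * v x) ^ 2 ≤ (∫ x, ‖fderiv ℝ u x‖ ^ 2) * ∫ x, v x * invLap (k + 2) v x := by
  have hI := integral_mul_invLap_nonneg (show 2 ≤ k + 2 by lia) hv₀
  have hT := integral_norm_fderiv_sq_nonneg u
  have hdensity (g : EuclideanSpace ℝ (Fin (k + 2)) → ℝ) (hg : Continuous g) (hg₀ : ∀ x, 0 ≤ g x) :
      ∫⁻ x, ENNReal.ofReal (g x ^ (1 : ℝ)) ∂(volume.withDensity fun x ↦ ENNReal.ofReal (v x)) =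
        ∫⁻ x, ENNReal.ofReal (g x * v x) := by
    simp_rw [rpow_one]
    rw [lintegral_withDensity_eq_lintegral_mul _ hv.measurable.ennreal_ofReal
      hg.measurable.ennreal_ofReal]
    refine lintegral_congr fun x ↦ ?_
    rw [Pi.mul_apply, ENNReal.ofReal_mul (hg₀ x), mul_comm]
  have h : ∫⁻ x, ENNReal.ofReal (u x * v x) ≤ ENNReal.ofReal
      ((∫ x, v x * invLap (k + 2) v x) ^ (1 / 2 : ℝ) *
        (∫ x, ‖fderiv ℝ u x‖ ^ 2) ^ (1 / 2 : ℝ)) := by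
    rw [← hdensity u hu.continuous hu₀]
    refine lintegral_ofReal_rpow_le_of_forall_contDiff hk finrank_euclideanSpace_fin zero_le_one
      (by positivity) (by positivity) (fun φ hφ hcs hφ₀ ↦ ?_) hu hu₀ hint hint'
    rw [hdensity φ hφ.continuous hφ₀, mul_comm, ENNReal.ofReal_mul
      (rpow_nonneg (integral_norm_fderiv_sq_nonneg φ) _), ← ENNReal.ofReal_rpow_of_nonneg
      (integral_norm_fderiv_sq_nonneg φ) one_half_pos.le, ← ENNReal.ofReal_rpow_of_nonneg hI
      one_half_pos.le, ← greenEnergy_ofReal_eq hk hv.measurable hv₀ hvint]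
    exact lintegral_ofReal_mul_le hk hv hv₀ hφ hcs hφ₀
  rw [← ofReal_integral_eq_lintegral_ofReal huv
    (.of_forall fun x ↦ mul_nonneg (hu₀ x) (hv₀ x)), ENNReal.ofReal_le_ofReal_iff (by positivity),
    ← sqrt_eq_rpow, ← sqrt_eq_rpow] at h
  calc (∫ x, u x * v x) ^ 2 ≤ _ :=
        pow_le_pow_left₀ (integral_nonneg fun x ↦ mul_nonneg (hu₀ x) (hv₀ x)) h 2
    _ = _ := by rw [mul_pow, sq_sqrt hI, sq_sqrt hT, mul_comm]

end CriticalExponent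

section MemD12

variable {d : ℕ} {u : EuclideanSpace ℝ (Fin d) → ℝ}

lemma norm_gradient_eq_norm_fderiv (u : EuclideanSpace ℝ (Fin d) → ℝ) (x) :
    ‖gradient u x‖ = ‖fderiv ℝ u x‖ :=
  LinearIsometryEquiv.norm_map _ _

lemma lpNorm'_rpow_eq (hu₀ : ∀ x, 0 ≤ u x) (p s : ℝ) :
    lpNorm' p u ^ s = (∫ x, u x ^ p) ^ (s / p) := by
  simp_rw [lpNorm', abs_of_nonneg (hu₀ _)]
  rw [← rpow_mul (integral_nonneg fun x ↦ rpow_nonneg (hu₀ x) p), one_div_mul_eq_div]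

lemma rpow_rpow_conjugate (hd : 3 ≤ d) {r : ℝ} (hr : 0 ≤ r) :
    (r ^ (((d : ℝ) + 2) / ((d : ℝ) - 2))) ^ (2 * (d : ℝ) / ((d : ℝ) + 2)) =
      r ^ (2 * (d : ℝ) / ((d : ℝ) - 2)) := by
  have : (0 : ℝ) < d - 2 := by
    have : (3 : ℝ) ≤ d := by exact_mod_cast hd
    linarith
  rw [← rpow_mul hr]
  congr 1
  field_simp

lemma Jfun_rpow_eq (hd : 3 ≤ d) (hu₀ : ∀ x, 0 ≤ u x) :
    Jfun d (fun x ↦ u x ^ (((d : ℝ) + 2) / ((d : ℝ) - 2))) =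
      ∫ x, u x ^ (2 * (d : ℝ) / ((d : ℝ) - 2)) := by
  simp_rw [Jfun, rpow_rpow_conjugate hd (hu₀ _)]

lemma lpNorm'_rpow_eq_Jfun_rpow (hd : 3 ≤ d) (hu₀ : ∀ x, 0 ≤ u x) (s : ℝ) :
    lpNorm' (2 * (d : ℝ) / ((d : ℝ) - 2)) u ^ s =
      Jfun d (fun x ↦ u x ^ (((d : ℝ) + 2) / ((d : ℝ) - 2))) ^
        (s / (2 * (d : ℝ) / ((d : ℝ) - 2))) := by
  rw [lpNorm'_rpow_eq hu₀, Jfun_rpow_eq hd hu₀]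

lemma lpNorm'_sq_eq_Jfun_rpow (hd : d ≠ 0) (hu₀ : ∀ x, 0 ≤ u x) :
    lpNorm' (2 * (d : ℝ) / ((d : ℝ) + 2)) u ^ (2 : ℝ) = Jfun d u ^ (1 + 2 / (d : ℝ)) := by
  rw [lpNorm'_rpow_eq hu₀, Jfun]
  congr 1
  field_simp

lemma lpNorm'_sq_le_of_memD12 (hd : 3 ≤ d) (hu₀ : ∀ x, 0 ≤ u x) (hu : MemD12 d u) :
    lpNorm' (2 * (d : ℝ) / ((d : ℝ) - 2)) u ^ (2 : ℝ) ≤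
      sobolevConst d * ∫ x, ‖gradient u x‖ ^ 2 := by
  obtain ⟨hdiff, hgrad, hint⟩ := hu
  obtain ⟨k, rfl⟩ := Nat.exists_eq_add_of_le' (show 2 ≤ d by lia)
  rw [lpNorm'_rpow_eq hu₀]
  simp only [norm_gradient_eq_norm_fderiv, abs_of_nonneg (hu₀ _), Nat.cast_add, Nat.cast_ofNat,
    add_sub_cancel_right] at hgrad hint ⊢
  convert sobolev_of_differentiable (show k ≠ 0 by lia) hdiff hu₀ hgrad hint using 2
  field_simp

lemma Jfun_sq_le_of_memD12 (hd : 3 ≤ d) (hu₀ : ∀ x, 0 ≤ u x) (hu : MemD12 d u) :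
    Jfun d (fun x ↦ u x ^ (((d : ℝ) + 2) / ((d : ℝ) - 2))) ^ 2 ≤
      (∫ x, ‖gradient u x‖ ^ 2) * ∫ x, u x ^ (((d : ℝ) + 2) / ((d : ℝ) - 2)) *
        invLap d (fun y ↦ u y ^ (((d : ℝ) + 2) / ((d : ℝ) - 2))) x := by
  obtain ⟨hdiff, hgrad, hint⟩ := hu
  have hrpow (x) := rpow_rpow_conjugate hd (hu₀ x)
  rw [Jfun_rpow_eq hd hu₀]
  obtain ⟨k, rfl⟩ := Nat.exists_eq_add_of_le' (show 2 ≤ d by lia)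
  have hk : k ≠ 0 := by lia
  simp only [norm_gradient_eq_norm_fderiv, abs_of_nonneg (hu₀ _), Nat.cast_add, Nat.cast_ofNat,
    add_sub_cancel_right, show (k : ℝ) + 2 + 2 = k + 4 by ring] at hgrad hint hrpow ⊢
  have hmul (x) : u x ^ (2 * ((k : ℝ) + 2) / k) = u x * u x ^ (((k : ℝ) + 4) / k) := by
    rw [← rpow_one_add' (hu₀ x) (by positivity)]
    congr 1
    field_simp
    ring
  have h := sq_integral_mul_le_mul_invLap hk hdiff hu₀ hgrad hint
    (v := fun x ↦ u x ^ (((k : ℝ) + 4) / k))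
    (hdiff.continuous.rpow_const fun x ↦ .inr (by positivity)) (fun x ↦ rpow_nonneg (hu₀ x) _)
    (by simpa only [hrpow] using hint) (by simpa only [hmul] using hint)
  simpa only [hmul] using h

end MemD12

/-! ### From the two linear bounds to the nonlinear one -/

lemma le_sqrt_sub {C h x : ℝ} (hC : 0 ≤ C) (hx : 0 ≤ x) (h_le : h ≤ C * x)
    (h_mul_le : h * (1 + x) ≤ x) : h ≤ √(C ^ 2 + 2 * C * x) - C := by
  rw [le_sub_iff_add_le]
  rcases le_total h 0 with hh | hh
  · have : C ≤ √(C ^ 2 + 2 * C * x) := le_sqrt_of_sq_le (by nlinarith [mul_nonneg hC hx])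
    linarith
  · have hsq : h ^ 2 ≤ C * (x - h) := by
      calc h ^ 2 ≤ h * (C * x) := by rw [sq]; gcongr
        _ = C * (h * x) := by ring
        _ ≤ C * (x - h) := by gcongr; linarith
    exact le_sqrt_of_sq_le (by linarith [sq_nonneg h, add_sq h C])

lemma sub_add_mul_sqrt_nonneg {C N T I S m : ℝ} (hC : 0 ≤ C) (hN : 0 ≤ N) (hI : 0 ≤ I)
    (hS : 0 < S) (hm : 0 ≤ m) (hSobolev : N ^ (1 - m) ≤ S * T) (hdual : N ^ 2 ≤ T * I)
    (himproved : S * N ^ (1 + m) - I ≤ C * S * N ^ (2 * m) * (S * T - N ^ (1 - m))) :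
    0 ≤ I - S * N ^ (1 + m) +
      S * N ^ (1 + m) * (√(C ^ 2 + 2 * C * (N ^ (m - 1) * (S * T - N ^ (1 - m)))) - C) := by
  rcases hN.eq_or_lt with rfl | hN
  · simpa [zero_rpow (show 1 + m ≠ 0 by linarith)]
  set a := N ^ (1 - m) with ha
  have ha₀ : 0 < a := rpow_pos_of_pos hN _
  have hB : 0 < S * N ^ (1 + m) := by positivity
  have ha_inv : N ^ (m - 1) = a⁻¹ := by rw [ha, ← rpow_neg hN.le, neg_sub]
  have ha_mul : N ^ (1 + m) = a * N ^ (2 * m) := by rw [ha, ← rpow_add hN]; ring_nf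
  have hsq : N ^ 2 = a * N ^ (1 + m) := by
    rw [ha, ← rpow_add hN, ← rpow_natCast]; norm_num
  rw [ha_inv]
  set x := a⁻¹ * (S * T - a)
  have hx₀ : 0 ≤ x := mul_nonneg (inv_nonneg.2 ha₀.le) (sub_nonneg.2 hSobolev)
  have hax : a * x = S * T - a := mul_inv_cancel_left₀ ha₀.ne' _
  have hlin : 1 - I / (S * N ^ (1 + m)) ≤ C * x := by
    rw [one_sub_div hB.ne', div_le_iff₀ hB]
    exact himproved.trans_eq (by rw [← hax, ha_mul]; ring)
  have hlin' : (1 - I / (S * N ^ (1 + m))) * (1 + x) ≤ x := by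
    have : S * N ^ (1 + m) ≤ I * (1 + x) := by
      refine le_of_mul_le_mul_left ?_ ha₀
      calc a * (S * N ^ (1 + m)) = S * N ^ 2 := by rw [hsq]; ring
        _ ≤ S * (T * I) := by gcongr
        _ = a * (I * (1 + x)) := by linear_combination -I * hax
    rw [one_sub_div hB.ne', div_mul_eq_mul_div, div_le_iff₀ hB]
    linarith
  have h := mul_le_mul_of_nonneg_left (le_sqrt_sub hC hx₀ hlin hlin') hB.le
  rw [mul_one_sub, mul_div_cancel₀ _ hB.ne'] at h
  linarith

end ImprovedSobolev

open ImprovedSobolev in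
theorem improved_sobolev_phi_general {d : ℕ} (hd : 3 ≤ d) {C : ℝ} (hC : 0 ≤ C)
    {u : EuclideanSpace ℝ (Fin d) → ℝ} (hu₀ : ∀ x, 0 ≤ u x) (hu : MemD12 d u)
    (hineq :
      sobolevConst d *
          lpNorm' (2 * (d : ℝ) / ((d : ℝ) + 2))
            (fun x ↦ u x ^ (((d : ℝ) + 2) / ((d : ℝ) - 2))) ^ (2 : ℝ) -
        (∫ x, u x ^ (((d : ℝ) + 2) / ((d : ℝ) - 2)) *
          invLap d (fun y ↦ u y ^ (((d : ℝ) + 2) / ((d : ℝ) - 2))) x) ≤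
      C * sobolevConst d *
        lpNorm' (2 * (d : ℝ) / ((d : ℝ) - 2)) u ^ ((8 : ℝ) / ((d : ℝ) - 2)) *
        (sobolevConst d * (∫ x, ‖gradient u x‖ ^ 2) -
          lpNorm' (2 * (d : ℝ) / ((d : ℝ) - 2)) u ^ (2 : ℝ))) :
    0 ≤ Hfun d (fun x ↦ u x ^ (((d : ℝ) + 2) / ((d : ℝ) - 2))) +
      sobolevConst d *
        Jfun d (fun x ↦ u x ^ (((d : ℝ) + 2) / ((d : ℝ) - 2))) ^ (1 + 2 / (d : ℝ)) *
        (√(C ^ 2 + 2 * C *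
          (Jfun d (fun x ↦ u x ^ (((d : ℝ) + 2) / ((d : ℝ) - 2))) ^ (2 / (d : ℝ) - 1) *
            (sobolevConst d * (∫ x, ‖gradient u x‖ ^ 2) -
              lpNorm' (2 * (d : ℝ) / ((d : ℝ) - 2)) u ^ (2 : ℝ)))) - C) := by
  have hd₂ : (0 : ℝ) < d - 2 := by linarith [show (3 : ℝ) ≤ d by exact_mod_cast hd]
  have hv₀ (x) : 0 ≤ u x ^ (((d : ℝ) + 2) / ((d : ℝ) - 2)) := rpow_nonneg (hu₀ x) _
  have hSobolev := lpNorm'_sq_le_of_memD12 hd hu₀ hu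
  have hnorm : (2 : ℝ) / (2 * d / (d - 2)) = 1 - 2 / d := by field_simp
  have hnorm' : (8 : ℝ) / (d - 2) / (2 * d / (d - 2)) = 2 * (2 / d) := by field_simp; norm_num
  simp only [lpNorm'_sq_eq_Jfun_rpow (show d ≠ 0 by lia) hv₀, lpNorm'_rpow_eq_Jfun_rpow hd hu₀,
    hnorm, hnorm', Hfun] at hineq hSobolev ⊢
  exact sub_add_mul_sqrt_nonneg hC (integral_nonneg fun x ↦ rpow_nonneg (hv₀ x) _)
    (integral_mul_invLap_nonneg (show 2 ≤ d by lia) hv₀) (sobolevConst_pos hd) (by positivity)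
    hSobolev (Jfun_sq_le_of_memD12 hd hu₀ hu) hineq

/-- the further improvement of the improved Sobolev inequality, with the
concave nonlinearity `φ(x) = √(𝒞² + 2𝒞x) − 𝒞`. -/
theorem improved_sobolev_phi (d : ℕ) (hd : 3 ≤ d) (C : ℝ) (hC0 : 0 < C) (hC1 : C ≤ 1)
    (hineq : ∀ u : EuclideanSpace ℝ (Fin d) → ℝ, (∀ x, 0 ≤ u x) → MemD12 d u →
      sobolevConst d *
          lpNorm' (2 * (d : ℝ) / ((d : ℝ) + 2))
            (fun x => u x ^ (((d : ℝ) + 2) / ((d : ℝ) - 2))) ^ (2 : ℝ) -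
        (∫ x, u x ^ (((d : ℝ) + 2) / ((d : ℝ) - 2)) *
          invLap d (fun y => u y ^ (((d : ℝ) + 2) / ((d : ℝ) - 2))) x) ≤
      C * sobolevConst d *
        lpNorm' (2 * (d : ℝ) / ((d : ℝ) - 2)) u ^ ((8 : ℝ) / ((d : ℝ) - 2)) *
        (sobolevConst d * (∫ x, ‖gradient u x‖ ^ 2) -
          lpNorm' (2 * (d : ℝ) / ((d : ℝ) - 2)) u ^ (2 : ℝ)))
    (u : EuclideanSpace ℝ (Fin d) → ℝ) (hu0 : ∀ x, 0 ≤ u x) (hu : MemD12 d u) :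
    0 ≤ Hfun d (fun x => u x ^ (((d : ℝ) + 2) / ((d : ℝ) - 2))) +
      sobolevConst d *
        Jfun d (fun x => u x ^ (((d : ℝ) + 2) / ((d : ℝ) - 2))) ^ (1 + 2 / (d : ℝ)) *
        (Real.sqrt (C ^ 2 + 2 * C *
          (Jfun d (fun x => u x ^ (((d : ℝ) + 2) / ((d : ℝ) - 2))) ^ (2 / (d : ℝ) - 1) *
            (sobolevConst d * (∫ x, ‖gradient u x‖ ^ 2) -
              lpNorm' (2 * (d : ℝ) / ((d : ℝ) - 2)) u ^ (2 : ℝ)))) - C) :=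
  improved_sobolev_phi_general hd hC0.le hu0 hu (hineq u hu0 hu)
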